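/- (Main theorem, case B, homeomorphic form.) Let d ∈ [0,1). There exists a constant c = c(d) > 0 with the following property. Let f = h + conj(g) be a sense-preserving harmonic mapping on 𝔻 with h' nonvanishing, whose dilatation ω = g'/h' satisfies |ω(z)| ≤ d for all z ∈ 𝔻, and whose Schwarzian satisfies sup_{z∈𝔻} (1−|z|²)² |S_f(z)| ≤ c. Define F on the Riemann sphere ℂ ∪ {∞} by F(z) = f(z) for |z| < 1, F(z) = E_f(1/conj(z)) for |z| > 1 with the case-(B) extension (taking τ = P_f), F(∞) = E_f(0), setting F(z) = ∞ at points where the denominator conj(ζ) − (1/2)(1−|ζ|²) P_f(ζ) vanishes (ζ = 1/conj(z)), and on |z| = 1 by the continuous boundary extension of f. Then F is a well-defined homeomorphism of ℂ ∪ {∞} onto itself extending f, and there exists k < 1 such that |∂_z̄ F(z)| ≤ k |∂_z F(z)| at every z with |z| > 1 where F(z) ≠ ∞ (so F is quasiconformal). -/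

import Mathlib

/-!
Why a small harmonic Schwarzian gives a quasiconformal Ahlfors–Weill extension when `|ω| ≤ d < 1`.

*The dilatation is nearly constant.* The harmonic pre-Schwarzian `P = P_f` satisfies
`∂_z P = S_f + P²/2` and `∂_z̄ P = -|ω'|²/(1-|ω|²)²`, so a maximum principle bounds `(1-|z|²)|P|`
(`marty`). Times `(1-|ω|²)²`, the quantity `S_f` is a polynomial in `conj ω` with holomorphic
coefficients, and if it is small so are its antiholomorphic derivatives. Quantitatively, on
hyperbolic disks this makes `(1-|z|²)|ω'|` small (`Hyp.dil_small`).

*Linear combinations.* For `|ε| ≤ 2/(1+d)` the holomorphic map `q = h + ε g` is then locally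
injective with small Schwarzian norm (`Hyp.exists_nice`). Since `1 + ε ω` is the dilatation factor,
`h + Φ + ε (g + ω Φ) = q + (1-|ζ|²) q' / (conj ζ - (1-|ζ|²) P_f / 2)` is an Ahlfors–Weill extension
of `q`, with `P_q` replaced by the nearby function `τ = P_f`, the same for every `ε`.

*Injectivity for each `ε`.* Composing `q` with a Möbius map that makes `0` map to `0` and the
reflected point `∞` map to `∞`, the Riccati equation of the normalised pre-Schwarzian keeps the
normalised map and its extension close to the identity, so nothing else takes the value of the
centre or of `∞`. All quantities are invariant under disk automorphisms, hence any point can be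
moved to the centre (`Nice.inj_in`, `Nice.inj_mixed`, `Nice.inj_out`).

*Analytic part.* With `ε = 0` the normalised extension is continuous on the plane, injective and
relatively close to the identity, hence a homeomorphism (`Nice.exists_homeo`); undoing the Möbius
map gives a homeomorphism of the sphere equal to `h` inside and `h + Φ` outside
(`Hyp.exists_sphere`).

*Nonanalytic part.* Write the values of `F` as `H + conj K`, with `(H, K) = (h, g)` inside and
`(h + Φ, g + ω Φ)` outside. If `|K - K'| > (1+d)/2 |H - H'|` for two values, then
`H + ε K = H' + ε K'` for some `|ε| < 2/(1+d)`, contradicting injectivity. So `K` is a contraction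
of `H` (`Hyp.pairs_lip`), and `F` is the analytic homeomorphism followed by the homeomorphism
`x ↦ x + conj (K x)` of the plane, fixing `∞`. This also extends `F` across the unit circle.

*Dilatation.* The derivative `∂_z (h + Φ)` is controlled by `S_f` and `ω'`, while `∂_z̄ (h + Φ)`
dominates, so the exterior map has dilatation close to `|ω|` (`exists_dilatation`).
-/

open Metric

/-- Wirtinger derivative `∂_z F = (1/2)(∂_x F - i ∂_y F)`. -/
noncomputable def wZ (F : ℂ → ℂ) (z : ℂ) : ℂ :=
  (fderiv ℝ F z 1 - Complex.I * fderiv ℝ F z Complex.I) / 2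

/-- Wirtinger derivative `∂_z̄ F = (1/2)(∂_x F + i ∂_y F)`. -/
noncomputable def wZb (F : ℂ → ℂ) (z : ℂ) : ℂ :=
  (fderiv ℝ F z 1 + Complex.I * fderiv ℝ F z Complex.I) / 2

/-- Pre-Schwarzian derivative `Ph = h''/h'` of a holomorphic function. -/
noncomputable def preSch (h : ℂ → ℂ) (z : ℂ) : ℂ :=
  deriv (deriv h) z / deriv h z

/-- Schwarzian derivative `Sh = (Ph)' - (1/2)(Ph)^2` of a holomorphic function. -/
noncomputable def schw (h : ℂ → ℂ) (z : ℂ) : ℂ :=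
  deriv (preSch h) z - (1 / 2) * (preSch h z) ^ 2

/-- Dilatation `ω = g'/h'` of the harmonic mapping `f = h + conj g`. -/
noncomputable def dil (h g : ℂ → ℂ) (z : ℂ) : ℂ :=
  deriv g z / deriv h z

/-- Harmonic pre-Schwarzian `P_f = Ph - conj(ω) ω' / (1 - |ω|²)`. -/
noncomputable def preSchH (h g : ℂ → ℂ) (z : ℂ) : ℂ :=
  preSch h z -
    (starRingEnd ℂ) (dil h g z) * deriv (dil h g) z / ((1 - ‖dil h g z‖ ^ 2 : ℝ) : ℂ)

/-- Harmonic Schwarzian `S_f = ∂_z P_f - (1/2) P_f²`. -/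
noncomputable def schwH (h g : ℂ → ℂ) (z : ℂ) : ℂ :=
  wZ (preSchH h g) z - (1 / 2) * (preSchH h g z) ^ 2

/-- Denominator `conj ζ - (1/2)(1-|ζ|²) Ph(ζ)` (case A). -/
noncomputable def denA (h : ℂ → ℂ) (ζ : ℂ) : ℂ :=
  (starRingEnd ℂ) ζ - (1 / 2) * ((1 - ‖ζ‖ ^ 2 : ℝ) : ℂ) * preSch h ζ

/-- Denominator `conj ζ - (1/2)(1-|ζ|²) P_f(ζ)` (case B). -/
noncomputable def denB (h g : ℂ → ℂ) (ζ : ℂ) : ℂ :=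
  (starRingEnd ℂ) ζ - (1 / 2) * ((1 - ‖ζ‖ ^ 2 : ℝ) : ℂ) * preSchH h g ζ

/-- `Φ` for case A: `(1-|ζ|²) h'(ζ) / (conj ζ - (1/2)(1-|ζ|²) Ph(ζ))`. -/
noncomputable def phiA (h : ℂ → ℂ) (ζ : ℂ) : ℂ :=
  ((1 - ‖ζ‖ ^ 2 : ℝ) : ℂ) * deriv h ζ / denA h ζ

/-- `Φ` for case B: `(1-|ζ|²) h'(ζ) / (conj ζ - (1/2)(1-|ζ|²) P_f(ζ))`. -/
noncomputable def phiB (h g : ℂ → ℂ) (ζ : ℂ) : ℂ :=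
  ((1 - ‖ζ‖ ^ 2 : ℝ) : ℂ) * deriv h ζ / denB h g ζ

/-- Case A extension value `E_f(ζ) = f(ζ) + Φ(ζ) + conj(ω(ζ)) conj(Φ(ζ))`, `τ = Ph`. -/
noncomputable def extA (h g : ℂ → ℂ) (ζ : ℂ) : ℂ :=
  (h ζ + (starRingEnd ℂ) (g ζ)) + phiA h ζ +
    (starRingEnd ℂ) (dil h g ζ) * (starRingEnd ℂ) (phiA h ζ)

/-- Case B extension value `E_f(ζ) = f(ζ) + Φ(ζ) + conj(ω(ζ)) conj(Φ(ζ))`, `τ = P_f`. -/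
noncomputable def extB (h g : ℂ → ℂ) (ζ : ℂ) : ℂ :=
  (h ζ + (starRingEnd ℂ) (g ζ)) + phiB h g ζ +
    (starRingEnd ℂ) (dil h g ζ) * (starRingEnd ℂ) (phiB h g ζ)

/-! ### Wirtinger calculus -/

/-- `HasW F A B z`: the map `F` is real differentiable at `z` with Wirtinger derivatives
`∂_z F = A` and `∂_z̄ F = B`, i.e. its differential is `v ↦ A v + B conj v`. -/
def HasW (F : ℂ → ℂ) (A B : ℂ) (z : ℂ) : Prop :=
  HasFDerivAt F (A • (ContinuousLinearMap.id ℝ ℂ) + B • (Complex.conjCLE : ℂ →L[ℝ] ℂ)) z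

namespace HasW

variable {F G : ℂ → ℂ} {A B C D z : ℂ}

lemma wZ_eq (h : HasW F A B z) : wZ F z = A := by
  rw [wZ, HasFDerivAt.fderiv h]
  simp
  linear_combination (-(A / 2) + B / 2) * Complex.I_sq

lemma wZb_eq (h : HasW F A B z) : wZb F z = B := by
  rw [wZb, HasFDerivAt.fderiv h]
  simp
  linear_combination ((A / 2) - B / 2) * Complex.I_sq

lemma cast {A' B' : ℂ} (h : HasW F A B z) (hA : A = A') (hB : B = B') : HasW F A' B' z := by
  subst hA hB; exact h

lemma congr_of_eventuallyEq (h : HasW F A B z) (hG : G =ᶠ[nhds z] F) : HasW G A B z :=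
  HasFDerivAt.congr_of_eventuallyEq h hG

lemma continuousAt (h : HasW F A B z) : ContinuousAt F z := HasFDerivAt.continuousAt h

lemma of_hasDerivAt (h : HasDerivAt F A z) : HasW F A 0 z := by
  have := h.hasFDerivAt.restrictScalars ℝ
  exact this.congr_fderiv (by ext; simp [mul_comm])

lemma conj (h : HasW F A B z) :
    HasW (fun w => (starRingEnd ℂ) (F w)) ((starRingEnd ℂ) B) ((starRingEnd ℂ) A) z := by
  have := (Complex.conjCLE : ℂ →L[ℝ] ℂ).hasFDerivAt.comp z h
  exact this.congr_fderiv (by ext; simp [add_comm])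

lemma const (c : ℂ) : HasW (fun _ => c) 0 0 z := of_hasDerivAt (hasDerivAt_const z c)

lemma id : HasW (fun w => w) 1 0 z := of_hasDerivAt (hasDerivAt_id z)

lemma conj_id : HasW (fun w => (starRingEnd ℂ) w) 0 1 z := by
  simpa using (HasW.id (z := z)).conj

lemma add (h : HasW F A B z) (k : HasW G C D z) :
    HasW (fun w => F w + G w) (A + C) (B + D) z := by
  have := HasFDerivAt.add h k
  exact this.congr_fderiv (by ext; simp; ring)

lemma neg (h : HasW F A B z) : HasW (fun w => - F w) (-A) (-B) z := by
  have := HasFDerivAt.neg h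
  exact this.congr_fderiv (by ext; simp; ring)

lemma sub (h : HasW F A B z) (k : HasW G C D z) :
    HasW (fun w => F w - G w) (A - C) (B - D) z := by
  have := h.add k.neg
  simpa [sub_eq_add_neg] using this

lemma mul (h : HasW F A B z) (k : HasW G C D z) :
    HasW (fun w => F w * G w) (A * G z + F z * C) (B * G z + F z * D) z := by
  have := HasFDerivAt.mul h k
  exact this.congr_fderiv (by ext; simp; ring)

lemma inv (h : HasW F A B z) (h0 : F z ≠ 0) :
    HasW (fun w => (F w)⁻¹) (-A / F z ^ 2) (-B / F z ^ 2) z := by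
  have h1 : HasFDerivAt (fun w : ℂ => w⁻¹) _ (F z) :=
    (hasDerivAt_inv h0).hasFDerivAt.restrictScalars ℝ
  have := h1.comp z h
  exact this.congr_fderiv (by ext; simp; ring)

lemma div (h : HasW F A B z) (k : HasW G C D z) (h0 : G z ≠ 0) :
    HasW (fun w => F w / G w) ((A * G z - F z * C) / G z ^ 2) ((B * G z - F z * D) / G z ^ 2) z := by
  have := h.mul (k.inv h0)
  simp only [div_eq_mul_inv]
  refine this.cast ?_ ?_ <;> field_simp <;> ring

/-- Chain rule for precomposition with an antiholomorphic map. -/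
lemma comp_anti {r : ℂ → ℂ} {b : ℂ} (h : HasW F A B (r z)) (hr : HasW r 0 b z) :
    HasW (fun w => F (r w)) (B * (starRingEnd ℂ) b) (A * b) z := by
  have := HasFDerivAt.comp z h hr
  exact this.congr_fderiv (by ext; simp; ring)

end HasW

lemma normSq_cast (z : ℂ) : ((1 - ‖z‖ ^ 2 : ℝ) : ℂ) = 1 - z * (starRingEnd ℂ) z := by
  rw [Complex.mul_conj, Complex.normSq_eq_norm_sq]; push_cast; ring

lemma HasW.one_sub_normSq {F : ℂ → ℂ} {A B z : ℂ} (h : HasW F A B z) :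
    HasW (fun w => ((1 - ‖F w‖ ^ 2 : ℝ) : ℂ))
      (-(A * (starRingEnd ℂ) (F z) + F z * (starRingEnd ℂ) B))
      (-(B * (starRingEnd ℂ) (F z) + F z * (starRingEnd ℂ) A)) z := by
  simp only [normSq_cast]
  exact ((HasW.const 1).sub (h.mul h.conj)).cast (by ring) (by ring)

/-! ### A priori bound for the pre-Schwarzian -/

/-- At a local maximum of `‖V‖` the `∂_z`-derivative of `V conj V` vanishes. -/
lemma HasW.crit {V : ℂ → ℂ} {A B z : ℂ} (h : HasW V A B z)
    (hmax : IsLocalMax (fun w => ‖V w‖) z) :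
    A * (starRingEnd ℂ) (V z) + V z * (starRingEnd ℂ) B = 0 := by
  have h1 := h.mul h.conj
  have h2 : HasFDerivAt (fun w => (V w * (starRingEnd ℂ) (V w)).re) _ z :=
    Complex.reCLM.hasFDerivAt.comp z h1
  have h3 : IsLocalMax (fun w => (V w * (starRingEnd ℂ) (V w)).re) z := by
    filter_upwards [hmax] with w hw
    simp only [Complex.mul_conj, Complex.ofReal_re, Complex.normSq_eq_norm_sq]
    gcongr
  have h4 := h3.hasFDerivAt_eq_zero h2
  have e1 := congrArg (fun L : ℂ →L[ℝ] ℝ => L 1) h4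
  have e2 := congrArg (fun L : ℂ →L[ℝ] ℝ => L Complex.I) h4
  apply Complex.ext
  · simp at e1 e2 ⊢; linarith
  · simp at e1 e2 ⊢; linarith

/-- If `∂_z P = S + P²/2` and `∂_z̄ P = -Λ`, with `(1-|z|²)²|S| ≤ c` and
`(1-|z|²)² Λ ≤ L`, then `(1-|z|²)|P|` is bounded. The maximum principle is applied to
`(r²-|z|²) P - 2 conj z` on the disk of radius `r < 1`. -/
lemma marty {P S : ℂ → ℂ} {Λ : ℂ → ℝ} {c L : ℝ}
    (hP : ∀ z ∈ ball (0 : ℂ) 1, HasW P (S z + P z ^ 2 / 2) (-(Λ z : ℂ)) z)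
    (hΛ0 : ∀ z ∈ ball (0 : ℂ) 1, 0 ≤ Λ z)
    (hS : ∀ z ∈ ball (0 : ℂ) 1, (1 - ‖z‖ ^ 2) ^ 2 * ‖S z‖ ≤ c)
    (hΛ : ∀ z ∈ ball (0 : ℂ) 1, (1 - ‖z‖ ^ 2) ^ 2 * Λ z ≤ L)
    {a : ℂ} (ha : a ∈ ball (0 : ℂ) 1) :
    (1 - ‖a‖ ^ 2) * ‖P a‖ ≤ 2 + √(2 * (2 + L + c)) := by
  have hc0 : 0 ≤ c := (mul_nonneg (sq_nonneg _) (norm_nonneg _)).trans (hS a ha)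
  have hL0 : 0 ≤ L := (mul_nonneg (sq_nonneg _) (hΛ0 a ha)).trans (hΛ a ha)
  set M := 2 * (2 + L + c) with hM
  have ha1 : ‖a‖ < 1 := by simpa using ha
  have key : ∀ r : ℝ, ‖a‖ < r → r < 1 → (r ^ 2 - ‖a‖ ^ 2) * ‖P a‖ ≤ 2 + √M := by
    intro r har hr1
    have hr0 : 0 < r := (norm_nonneg a).trans_lt har
    set V : ℂ → ℂ := fun z => ((r : ℂ) ^ 2 - z * (starRingEnd ℂ) z) * P z
      - 2 * (starRingEnd ℂ) z with hV
    have hVW : ∀ z ∈ ball (0 : ℂ) 1, HasW V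
        (-(starRingEnd ℂ) z * P z + ((r : ℂ) ^ 2 - z * (starRingEnd ℂ) z) * (S z + P z ^ 2 / 2))
        (-z * P z - ((r : ℂ) ^ 2 - z * (starRingEnd ℂ) z) * Λ z - 2) z := by
      intro z hz
      exact ((((HasW.const ((r : ℂ) ^ 2)).sub (HasW.id.mul HasW.conj_id)).mul (hP z hz)).sub
        ((HasW.const 2).mul HasW.conj_id)).cast (by ring) (by ring)
    have hcast : ∀ z : ℂ, ((r : ℂ) ^ 2 - z * (starRingEnd ℂ) z) = ((r ^ 2 - ‖z‖ ^ 2 : ℝ) : ℂ) := by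
      intro z
      rw [Complex.mul_conj, Complex.normSq_eq_norm_sq]; push_cast; ring
    have hcont : ContinuousOn (fun z => ‖V z‖) (closedBall 0 r) := by
      intro z hz
      exact (hVW z (by simp at hz ⊢; linarith)).continuousAt.norm.continuousWithinAt
    obtain ⟨b, hb, hbmax⟩ := (isCompact_closedBall (0 : ℂ) r).exists_isMaxOn
      ⟨0, by simp [hr0.le]⟩ hcont
    have hb' : ‖b‖ ≤ r := by simpa using hb
    have hVb : ‖V b‖ ≤ √M := by
      rcases hb'.lt_or_eq with hlt | heq
      · have hloc : IsLocalMax (fun w => ‖V w‖) b := by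
          filter_upwards [isOpen_ball.mem_nhds (show b ∈ ball (0 : ℂ) r by simpa using hlt)]
            with w hw
          exact hbmax (ball_subset_closedBall hw)
        have hb1 : b ∈ ball (0 : ℂ) 1 := by simp; linarith
        have hcr := (hVW b hb1).crit hloc
        by_cases hV0 : V b = 0
        · rw [hV0]; simp
        have hσ : 0 < r ^ 2 - ‖b‖ ^ 2 := by nlinarith [norm_nonneg b]
        have hσ1 : r ^ 2 - ‖b‖ ^ 2 ≤ 1 - ‖b‖ ^ 2 := by nlinarith
        set σ := r ^ 2 - ‖b‖ ^ 2 with hσd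
        have hbb : b * (starRingEnd ℂ) b = (r : ℂ) ^ 2 - σ := by
          rw [hσd, ← hcast b]; ring
        have hVbe : V b = σ * P b - 2 * (starRingEnd ℂ) b := by
          simp only [hV]; rw [hcast b]
        rw [hcast b, ← hσd] at hcr
        simp only [map_sub, map_mul, map_neg, Complex.conj_ofReal, map_ofNat] at hcr
        have e1 : (σ : ℂ) * P b = V b + 2 * (starRingEnd ℂ) b := by rw [hVbe]; ring
        have e2 : (σ : ℂ) * (starRingEnd ℂ) (P b) = (starRingEnd ℂ) (V b) + 2 * b := by
          rw [hVbe]; simp [map_ofNat]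
        have e3 : V b ^ 2 * (starRingEnd ℂ) (V b) / 2
            = V b * (2 * (r : ℂ) ^ 2 + σ ^ 2 * Λ b) - σ ^ 2 * S b * (starRingEnd ℂ) (V b) := by
          have : (σ : ℂ) * ((-(starRingEnd ℂ) b * P b + σ * (S b + P b ^ 2 / 2))
            * (starRingEnd ℂ) (V b) + V b *
            (-(starRingEnd ℂ) b * (starRingEnd ℂ) (P b) - σ * Λ b - 2)) = 0 := by
            rw [hcr]; simp
          linear_combination this + (starRingEnd ℂ) (V b) * ((starRingEnd ℂ) b
            - (σ * P b + V b + 2 * (starRingEnd ℂ) b) / 2) * e1 + V b * (starRingEnd ℂ) b * e2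
            + 2 * V b * hbb
        have e4 : ‖V b‖ ^ 2 * ‖V b‖ / 2 ≤ ‖V b‖ * (2 + L + c) := by
          have n1 : ‖V b ^ 2 * (starRingEnd ℂ) (V b) / 2‖ = ‖V b‖ ^ 2 * ‖V b‖ / 2 := by simp
          rw [← n1, e3]
          have n2 : ‖(2 * (r : ℂ) ^ 2 + σ ^ 2 * Λ b)‖ ≤ 2 + L := by
            have : (2 * (r : ℂ) ^ 2 + σ ^ 2 * Λ b) = ((2 * r ^ 2 + σ ^ 2 * Λ b : ℝ) : ℂ) := by
              push_cast; ring
            rw [this, Complex.norm_real, Real.norm_of_nonneg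
              (by have := hΛ0 b hb1; positivity)]
            have h1 : σ ^ 2 * Λ b ≤ (1 - ‖b‖ ^ 2) ^ 2 * Λ b := by
              have := hΛ0 b hb1; gcongr
            have := hΛ b hb1
            nlinarith
          have n3 : ‖(σ : ℂ) ^ 2 * S b‖ ≤ c := by
            rw [norm_mul, norm_pow, Complex.norm_real, Real.norm_of_nonneg hσ.le]
            refine le_trans ?_ (hS b hb1)
            gcongr
          calc _ ≤ ‖V b * (2 * (r : ℂ) ^ 2 + σ ^ 2 * Λ b)‖
                + ‖(σ : ℂ) ^ 2 * S b * (starRingEnd ℂ) (V b)‖ := norm_sub_le _ _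
            _ = ‖V b‖ * ‖(2 * (r : ℂ) ^ 2 + σ ^ 2 * Λ b)‖ + ‖(σ : ℂ) ^ 2 * S b‖ * ‖V b‖ := by
                rw [norm_mul, norm_mul _ ((starRingEnd ℂ) (V b)), RCLike.norm_conj]
            _ ≤ ‖V b‖ * (2 + L) + c * ‖V b‖ := by gcongr
            _ = _ := by ring
        have hpos : 0 < ‖V b‖ := norm_pos_iff.2 hV0
        apply Real.le_sqrt_of_sq_le
        rw [hM]
        nlinarith
      · have : V b = -2 * (starRingEnd ℂ) b := by
          simp only [hV]; rw [hcast b, heq]; simp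
        rw [this]
        simp only [norm_mul, norm_neg, RCLike.norm_conj, heq]
        apply Real.le_sqrt_of_sq_le
        simp [hM]; nlinarith
    have hVa : ‖V a‖ ≤ √M := (hbmax (by simpa using har.le : a ∈ closedBall (0 : ℂ) r)).trans hVb
    have h5 : ((r ^ 2 - ‖a‖ ^ 2 : ℝ) : ℂ) * P a = V a + 2 * (starRingEnd ℂ) a := by
      simp only [hV]; rw [hcast a]; ring
    have h6 : (r ^ 2 - ‖a‖ ^ 2) * ‖P a‖ = ‖V a + 2 * (starRingEnd ℂ) a‖ := by
      rw [← h5, norm_mul, Complex.norm_real, Real.norm_of_nonneg]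
      nlinarith [norm_nonneg a]
    rw [h6]
    refine (norm_add_le _ _).trans ?_
    have : ‖2 * (starRingEnd ℂ) a‖ ≤ 2 := by simp; exact ha1.le
    linarith
  have hlim : Filter.Tendsto (fun r : ℝ => (r ^ 2 - ‖a‖ ^ 2) * ‖P a‖) (nhdsWithin 1 (Set.Iio 1))
      (nhds ((1 ^ 2 - ‖a‖ ^ 2) * ‖P a‖)) := by
    apply tendsto_nhdsWithin_of_tendsto_nhds
    exact Continuous.tendsto (by fun_prop) _
  rw [one_pow] at hlim
  refine le_of_tendsto hlim ?_
  filter_upwards [Ioo_mem_nhdsLT ha1] with r hr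
  exact key r hr.1 hr.2

/-- Cauchy estimate for a bounded holomorphic function on the unit disk, in hyperbolic form. -/
lemma cauchy_unit {f : ℂ → ℂ} {d : ℝ} (hf : DifferentiableOn ℂ f (ball 0 1))
    (hb : ∀ z ∈ ball (0 : ℂ) 1, ‖f z‖ ≤ d) {z : ℂ} (hz : z ∈ ball (0 : ℂ) 1) :
    (1 - ‖z‖ ^ 2) * ‖deriv f z‖ ≤ 2 * d := by
  have hz1 : ‖z‖ < 1 := by simpa using hz
  have hd : 0 ≤ d := (norm_nonneg _).trans (hb z hz)
  have key : ∀ r : ℝ, 0 < r → r < 1 - ‖z‖ → r * ‖deriv f z‖ ≤ d := by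
    intro r hr0 hr
    have hsub : closedBall z r ⊆ ball (0 : ℂ) 1 := by
      intro w hw
      have := norm_le_norm_add_norm_sub' w z
      simp [dist_eq_norm] at hw ⊢; linarith
    have := Complex.norm_deriv_le_of_forall_mem_sphere_norm_le hr0
      (hf.diffContOnCl_ball hsub) (C := d)
      (fun w hw => hb w (hsub (sphere_subset_closedBall hw)))
    rw [le_div_iff₀ hr0] at this
    linarith
  have hlim : Filter.Tendsto (fun r : ℝ => r * ‖deriv f z‖)
      (nhdsWithin (1 - ‖z‖) (Set.Iio (1 - ‖z‖))) (nhds ((1 - ‖z‖) * ‖deriv f z‖)) := by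
    apply tendsto_nhdsWithin_of_tendsto_nhds
    exact Continuous.tendsto (by fun_prop) _
  have h1 : (1 - ‖z‖) * ‖deriv f z‖ ≤ d := by
    refine le_of_tendsto hlim ?_
    filter_upwards [Ioo_mem_nhdsLT (show (0 : ℝ) < 1 - ‖z‖ by linarith)] with r hr
    exact key r hr.1 hr.2
  have h2 : (1 - ‖z‖ ^ 2) * ‖deriv f z‖ = (1 + ‖z‖) * ((1 - ‖z‖) * ‖deriv f z‖) := by ring
  rw [h2]
  have : 0 ≤ (1 - ‖z‖) * ‖deriv f z‖ := by
    have : 0 ≤ 1 - ‖z‖ := by linarith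
    positivity
  nlinarith

section Basic

variable {h g : ℂ → ℂ}

lemma deriv_diff {h : ℂ → ℂ} {r : ℝ} {z : ℂ} (hh : DifferentiableOn ℂ h (ball z r)) :
    DifferentiableOn ℂ (deriv h) (ball z r) := hh.deriv isOpen_ball

lemma dil_diff (hh : DifferentiableOn ℂ h (ball 0 1)) (hg : DifferentiableOn ℂ g (ball 0 1))
    (h0 : ∀ z ∈ ball (0 : ℂ) 1, deriv h z ≠ 0) : DifferentiableOn ℂ (dil h g) (ball 0 1) :=
  (deriv_diff hg).div (deriv_diff hh) h0

lemma preSch_diff (hh : DifferentiableOn ℂ h (ball 0 1))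
    (h0 : ∀ z ∈ ball (0 : ℂ) 1, deriv h z ≠ 0) : DifferentiableOn ℂ (preSch h) (ball 0 1) :=
  (deriv_diff (deriv_diff hh)).div (deriv_diff hh) h0

lemma diff_hasDerivAt {f : ℂ → ℂ} {r : ℝ} {z z₀ : ℂ} (hf : DifferentiableOn ℂ f (ball z₀ r))
    (hz : z ∈ ball z₀ r) : HasDerivAt f (deriv f z) z :=
  (hf.differentiableAt (isOpen_ball.mem_nhds hz)).hasDerivAt

lemma preSchH_hasW_aux (hh : DifferentiableOn ℂ h (ball 0 1))
    (hg : DifferentiableOn ℂ g (ball 0 1))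
    (h0 : ∀ z ∈ ball (0 : ℂ) 1, deriv h z ≠ 0) {z : ℂ} (hz : z ∈ ball (0 : ℂ) 1)
    (hw : ‖dil h g z‖ < 1) :
    HasW (preSchH h g)
      (deriv (preSch h) z - (starRingEnd ℂ) (dil h g z) * deriv (deriv (dil h g)) z
          / ((1 - ‖dil h g z‖ ^ 2 : ℝ) : ℂ)
        - (starRingEnd ℂ) (dil h g z) ^ 2 * deriv (dil h g) z ^ 2
          / ((1 - ‖dil h g z‖ ^ 2 : ℝ) : ℂ) ^ 2)
      (-((‖deriv (dil h g) z‖ ^ 2 / (1 - ‖dil h g z‖ ^ 2) ^ 2 : ℝ) : ℂ)) z := by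
  have hd := dil_diff hh hg h0
  have hp := preSch_diff hh h0
  have hW := HasW.of_hasDerivAt (diff_hasDerivAt hd hz)
  have hW' := HasW.of_hasDerivAt (diff_hasDerivAt (deriv_diff hd) hz)
  have hne : ((1 - ‖dil h g z‖ ^ 2 : ℝ) : ℂ) ≠ 0 := by
    have : 0 < 1 - ‖dil h g z‖ ^ 2 := by nlinarith [norm_nonneg (dil h g z)]
    exact_mod_cast this.ne'
  have key := (HasW.of_hasDerivAt (diff_hasDerivAt hp hz)).sub
    ((hW.conj.mul hW').div hW.one_sub_normSq hne)
  refine key.cast ?_ ?_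
  · field_simp
    simp
    ring
  · have e : ((‖deriv (dil h g) z‖ ^ 2 / (1 - ‖dil h g z‖ ^ 2) ^ 2 : ℝ) : ℂ)
      = deriv (dil h g) z * (starRingEnd ℂ) (deriv (dil h g) z)
        / ((1 - ‖dil h g z‖ ^ 2 : ℝ) : ℂ) ^ 2 := by
      rw [Complex.mul_conj, Complex.normSq_eq_norm_sq]; push_cast; ring
    rw [e]
    have e2 := normSq_cast (dil h g z)
    field_simp
    rw [e2]
    simp
    ring

lemma preSchH_hasW (hh : DifferentiableOn ℂ h (ball 0 1))
    (hg : DifferentiableOn ℂ g (ball 0 1))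
    (h0 : ∀ z ∈ ball (0 : ℂ) 1, deriv h z ≠ 0) {z : ℂ} (hz : z ∈ ball (0 : ℂ) 1)
    (hw : ‖dil h g z‖ < 1) :
    HasW (preSchH h g) (schwH h g z + preSchH h g z ^ 2 / 2)
      (-((‖deriv (dil h g) z‖ ^ 2 / (1 - ‖dil h g z‖ ^ 2) ^ 2 : ℝ) : ℂ)) z := by
  have := preSchH_hasW_aux hh hg h0 hz hw
  refine this.cast ?_ rfl
  rw [schwH, this.wZ_eq]; ring

/-- The harmonic Schwarzian in terms of the holomorphic data `h`, `ω`. -/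
lemma schwH_eq (hh : DifferentiableOn ℂ h (ball 0 1))
    (hg : DifferentiableOn ℂ g (ball 0 1))
    (h0 : ∀ z ∈ ball (0 : ℂ) 1, deriv h z ≠ 0) {z : ℂ} (hz : z ∈ ball (0 : ℂ) 1)
    (hw : ‖dil h g z‖ < 1) :
    ((1 - ‖dil h g z‖ ^ 2 : ℝ) : ℂ) ^ 2 * schwH h g z =
      ((1 - ‖dil h g z‖ ^ 2 : ℝ) : ℂ) ^ 2 * schw h z
      + (starRingEnd ℂ) (dil h g z) * ((1 - ‖dil h g z‖ ^ 2 : ℝ) : ℂ)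
        * (deriv (dil h g) z * preSch h z - deriv (deriv (dil h g)) z)
      - 3 / 2 * (starRingEnd ℂ) (dil h g z) ^ 2 * deriv (dil h g) z ^ 2 := by
  have hne : ((1 - ‖dil h g z‖ ^ 2 : ℝ) : ℂ) ≠ 0 := by
    have : 0 < 1 - ‖dil h g z‖ ^ 2 := by nlinarith [norm_nonneg (dil h g z)]
    exact_mod_cast this.ne'
  rw [schwH, (preSchH_hasW_aux hh hg h0 hz hw).wZ_eq, schw, preSchH]
  field_simp
  ring

end Basic

/-- The hypotheses on `f = h + conj g`, with dilatation bound `d` and Schwarzian bound `c`. -/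
structure Hyp (h g : ℂ → ℂ) (d c : ℝ) : Prop where
  hd : DifferentiableOn ℂ h (ball 0 1)
  gd : DifferentiableOn ℂ g (ball 0 1)
  h0 : ∀ z ∈ ball (0 : ℂ) 1, deriv h z ≠ 0
  dil_le : ∀ z ∈ ball (0 : ℂ) 1, ‖dil h g z‖ ≤ d
  schw_le : ∀ z ∈ ball (0 : ℂ) 1, (1 - ‖z‖ ^ 2) ^ 2 * ‖schwH h g z‖ ≤ c

namespace Hyp

variable {h g : ℂ → ℂ} {d c : ℝ} {z : ℂ}

lemma d_nonneg (H : Hyp h g d c) : 0 ≤ d := (norm_nonneg _).trans (H.dil_le 0 (by simp))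

lemma wd (H : Hyp h g d c) : DifferentiableOn ℂ (dil h g) (ball 0 1) := dil_diff H.hd H.gd H.h0

lemma pd (H : Hyp h g d c) : DifferentiableOn ℂ (preSch h) (ball 0 1) := preSch_diff H.hd H.h0

/-- `(1-|z|²)|P_f| ≤ C₁(d)` and `(1-|z|²)|P_h| ≤ C₂(d)`, uniformly for `c ≤ 1`. -/
lemma exists_bound (d : ℝ) (hd : d < 1) : ∃ C : ℝ, 1 ≤ C ∧ ∀ (h g : ℂ → ℂ) (c : ℝ), c ≤ 1 →
    Hyp h g d c → ∀ z ∈ ball (0 : ℂ) 1, (1 - ‖z‖ ^ 2) * ‖preSchH h g z‖ ≤ C ∧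
      (1 - ‖z‖ ^ 2) * ‖preSch h z‖ ≤ C := by
  set L := (2 / (1 - d ^ 2)) ^ 2 with hL
  refine ⟨2 + √(2 * (2 + L + 1)) + |2 / (1 - d ^ 2)|, ?_, ?_⟩
  · have := Real.sqrt_nonneg (2 * (2 + L + 1)); have := abs_nonneg (2 / (1 - d ^ 2)); linarith
  intro h g c hc H z hz
  have hd0 := H.d_nonneg
  have h1d : 0 < 1 - d ^ 2 := by nlinarith
  have hlt : ∀ z ∈ ball (0 : ℂ) 1, ‖dil h g z‖ < 1 := fun z hz => (H.dil_le z hz).trans_lt hd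
  have hwl : ∀ z ∈ ball (0 : ℂ) 1, 1 - d ^ 2 ≤ 1 - ‖dil h g z‖ ^ 2 := by
    intro z hz
    have := H.dil_le z hz
    have := norm_nonneg (dil h g z)
    nlinarith
  have hq : ∀ z ∈ ball (0 : ℂ) 1,
      (1 - ‖z‖ ^ 2) * (‖deriv (dil h g) z‖ / (1 - ‖dil h g z‖ ^ 2)) ≤ 2 / (1 - d ^ 2) := by
    intro z hz
    rw [← mul_div_assoc]
    refine div_le_div₀ (by norm_num) ?_ h1d (hwl z hz)
    have := cauchy_unit H.wd H.dil_le hz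
    linarith
  have hs : ∀ z ∈ ball (0 : ℂ) 1, 0 ≤ 1 - ‖z‖ ^ 2 := by
    intro z hz
    have : ‖z‖ < 1 := by simpa using hz
    nlinarith [norm_nonneg z]
  have hM := marty (c := 1) (L := L) (fun z hz => preSchH_hasW H.hd H.gd H.h0 hz (hlt z hz))
    (fun z hz => by positivity) (fun z hz => (H.schw_le z hz).trans hc)
    (fun z hz => by
      rw [← div_pow, ← mul_pow, hL]
      have : 0 < 1 - ‖dil h g z‖ ^ 2 := h1d.trans_le (hwl z hz)
      have := hs z hz
      gcongr
      exact hq z hz) hz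
  have h2 := abs_of_pos (show 0 < 2 / (1 - d ^ 2) by positivity)
  rw [h2]
  have h2p : 0 < 2 / (1 - d ^ 2) := by positivity
  refine ⟨by linarith, ?_⟩
  have e : preSch h z = preSchH h g z +
    (starRingEnd ℂ) (dil h g z) * deriv (dil h g) z / ((1 - ‖dil h g z‖ ^ 2 : ℝ) : ℂ) := by
    rw [preSchH]; ring
  have n : ‖(starRingEnd ℂ) (dil h g z) * deriv (dil h g) z / ((1 - ‖dil h g z‖ ^ 2 : ℝ) : ℂ)‖
      ≤ ‖deriv (dil h g) z‖ / (1 - ‖dil h g z‖ ^ 2) := by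
    have hp : 0 < 1 - ‖dil h g z‖ ^ 2 := h1d.trans_le (hwl z hz)
    rw [norm_div, norm_mul, RCLike.norm_conj, Complex.norm_real, Real.norm_of_nonneg hp.le]
    gcongr
    have := hlt z hz
    nlinarith [norm_nonneg (deriv (dil h g) z)]
  calc (1 - ‖z‖ ^ 2) * ‖preSch h z‖
      ≤ (1 - ‖z‖ ^ 2) * (‖preSchH h g z‖ + ‖deriv (dil h g) z‖ / (1 - ‖dil h g z‖ ^ 2)) := by
        have := hs z hz
        gcongr
        rw [e]
        exact (norm_add_le _ _).trans (by gcongr)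
    _ ≤ _ := by rw [mul_add]; exact add_le_add hM (hq z hz)

end Hyp

/-! ### Smallness of the dilatation derivative -/

/-- Cauchy estimate between concentric disks. -/
lemma cauchy_disk {f : ℂ → ℂ} {K r R : ℝ} (hrR : r < R) (hf : DifferentiableOn ℂ f (ball 0 R))
    (hb : ∀ z ∈ ball (0 : ℂ) R, ‖f z‖ ≤ K) {z : ℂ} (hz : z ∈ ball (0 : ℂ) r) :
    ‖deriv f z‖ ≤ K / (R - r) := by
  have hz1 : ‖z‖ < r := by simpa using hz
  have hsub : closedBall z (R - r) ⊆ ball (0 : ℂ) R := by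
    intro w hw
    have := norm_le_norm_add_norm_sub' w z
    simp [dist_eq_norm] at hw ⊢; linarith
  exact Complex.norm_deriv_le_of_forall_mem_sphere_norm_le (by linarith)
      (hf.diffContOnCl_ball hsub) (fun w hw => hb w (hsub (sphere_subset_closedBall hw)))

lemma taylor_one {f : ℂ → ℂ} {M r : ℝ} {z : ℂ} (hf : DifferentiableOn ℂ f (ball 0 r))
    (h1 : ∀ x ∈ ball (0 : ℂ) r, ‖deriv f x‖ ≤ M) {w : ℂ} (hz : z ∈ ball (0 : ℂ) r)
    (hw : w ∈ ball (0 : ℂ) r) : ‖f w - f z‖ ≤ M * ‖w - z‖ :=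
  (convex_ball (0 : ℂ) r).norm_image_sub_le_of_norm_deriv_le
    (fun x hx => (diff_hasDerivAt hf hx).differentiableAt) h1 hz hw

lemma taylor_two {f : ℂ → ℂ} {M r : ℝ} {z : ℂ} (hf : DifferentiableOn ℂ f (ball 0 r))
    (h2 : ∀ x ∈ ball (0 : ℂ) r, ‖deriv (deriv f) x‖ ≤ M) {w : ℂ} (hz : z ∈ ball (0 : ℂ) r)
    (hw : w ∈ ball (0 : ℂ) r) :
    ‖f w - f z - deriv f z * (w - z)‖ ≤ M * ‖w - z‖ ^ 2 := by
  have hM : 0 ≤ M := (norm_nonneg _).trans (h2 z hz)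
  have hseg : segment ℝ z w ⊆ ball (0 : ℂ) r := (convex_ball (0 : ℂ) r).segment_subset hz hw
  have hD : ∀ x ∈ segment ℝ z w, HasDerivWithinAt (fun x => f x - deriv f z * x)
      (deriv f x - deriv f z) (segment ℝ z w) x := by
    intro x hx
    exact ((diff_hasDerivAt hf (hseg hx)).sub
      (by simpa using (hasDerivAt_id x).const_mul (deriv f z))).hasDerivWithinAt
  have hb : ∀ x ∈ segment ℝ z w, ‖deriv f x - deriv f z‖ ≤ M * ‖w - z‖ := by
    intro x hx
    refine (taylor_one (deriv_diff hf) h2 hz (hseg hx)).trans ?_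
    gcongr
    have := norm_sub_le_of_mem_segment hx
    exact this
  have := (convex_segment z w).norm_image_sub_le_of_norm_hasDerivWithin_le hD hb
    (left_mem_segment ℝ z w) (right_mem_segment ℝ z w)
  calc _ = ‖f w - deriv f z * w - (f z - deriv f z * z)‖ := by congr 1; ring
    _ ≤ _ := this
    _ = _ := by ring

/-- If `G(ξ) = G₀ + A ξ + B conj ξ + O(|ξ|²)` and `G` is small, then `B` is small: average
`ξ G(ξ)` over the four points `±r, ±ir`. -/
lemma four_point {G : ℂ → ℂ} {G₀ A B : ℂ} {c K r : ℝ} (hr : 0 < r)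
    (hG : ∀ ξ : ℂ, ‖ξ‖ = r → ‖G ξ‖ ≤ c)
    (hE : ∀ ξ : ℂ, ‖ξ‖ = r → ‖G ξ - G₀ - A * ξ - B * (starRingEnd ℂ) ξ‖ ≤ K * r ^ 2) :
    ‖B‖ ≤ c / r + K * r := by
  set E : ℂ → ℂ := fun ξ => G ξ - G₀ - A * ξ - B * (starRingEnd ℂ) ξ with hEd
  have key : 4 * (r : ℂ) ^ 2 * B = r * (G r - E r) - r * (G (-r) - E (-r))
      + r * Complex.I * (G (r * Complex.I) - E (r * Complex.I))
      - r * Complex.I * (G (-(r * Complex.I)) - E (-(r * Complex.I))) := by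
    simp only [hEd, map_neg, map_mul, Complex.conj_ofReal, Complex.conj_I]
    linear_combination (-2 * (A : ℂ) * r ^ 2 + 2 * B * r ^ 2) * Complex.I_sq
  have hn : ∀ ξ : ℂ, ‖ξ‖ = r → ‖G ξ - E ξ‖ ≤ c + K * r ^ 2 := fun ξ h =>
    (norm_sub_le _ _).trans (add_le_add (hG ξ h) (hE ξ h))
  have n0 : ‖(r : ℂ)‖ = r := by simp [abs_of_pos hr]
  have n1 := hn r n0
  have n2 := hn (-r) (by rw [norm_neg, n0])
  have n3 := hn (r * Complex.I) (by simp [abs_of_pos hr])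
  have n4 := hn (-(r * Complex.I)) (by simp [abs_of_pos hr])
  have h4 : ‖4 * (r : ℂ) ^ 2 * B‖ ≤ 4 * (r * (c + K * r ^ 2)) := by
    rw [key]
    refine (norm_sub_le _ _).trans ?_
    refine (add_le_add (norm_add_le _ _) le_rfl).trans ?_
    refine (add_le_add (add_le_add (norm_sub_le _ _) le_rfl) le_rfl).trans ?_
    simp only [norm_mul, n0, Complex.norm_I, mul_one]
    have := mul_le_mul_of_nonneg_left n1 hr.le
    have := mul_le_mul_of_nonneg_left n2 hr.le
    have := mul_le_mul_of_nonneg_left n3 hr.le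
    have := mul_le_mul_of_nonneg_left n4 hr.le
    linarith
  rw [norm_mul, norm_mul, norm_pow, n0] at h4
  simp only [Complex.norm_ofNat] at h4
  have h5 : c / r + K * r = (c + K * r ^ 2) / r := by field_simp
  rw [h5, le_div_iff₀ hr]
  have : r * (‖B‖ * r) ≤ r * (c + K * r ^ 2) := by nlinarith
  exact le_of_mul_le_mul_left this hr

lemma prod_expand {a b a₀ b₀ a₁ b₁ ξ : ℂ} {K M₁ M₂ r : ℝ} (hξ : ‖ξ‖ = r)
    (ha₀ : ‖a₀‖ ≤ K) (hb₀ : ‖b₀‖ ≤ K) (ha : ‖a - a₀‖ ≤ M₁ * ‖ξ‖) (hb : ‖b - b₀‖ ≤ M₁ * ‖ξ‖)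
    (ha' : ‖a - a₀ - a₁ * ξ‖ ≤ M₂ * ‖ξ‖ ^ 2) (hb' : ‖b - b₀ - b₁ * ξ‖ ≤ M₂ * ‖ξ‖ ^ 2) :
    ‖(starRingEnd ℂ) a * b - (starRingEnd ℂ) a₀ * b₀ - (starRingEnd ℂ) a₀ * b₁ * ξ
      - (starRingEnd ℂ) a₁ * b₀ * (starRingEnd ℂ) ξ‖ ≤ (M₁ ^ 2 + 2 * K * M₂) * r ^ 2 := by
  have e : (starRingEnd ℂ) a * b - (starRingEnd ℂ) a₀ * b₀ - (starRingEnd ℂ) a₀ * b₁ * ξ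
      - (starRingEnd ℂ) a₁ * b₀ * (starRingEnd ℂ) ξ = (starRingEnd ℂ) (a - a₀) * (b - b₀)
      + (starRingEnd ℂ) a₀ * (b - b₀ - b₁ * ξ)
      + (starRingEnd ℂ) (a - a₀ - a₁ * ξ) * b₀ := by
    simp only [map_sub, map_mul]; ring
  rw [e]
  have hK : 0 ≤ K := (norm_nonneg _).trans ha₀
  refine (norm_add₃_le).trans ?_
  simp only [norm_mul, RCLike.norm_conj]
  rw [hξ] at *
  have h1 : ‖a - a₀‖ * ‖b - b₀‖ ≤ (M₁ * r) * (M₁ * r) :=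
    mul_le_mul ha hb (norm_nonneg _) ((norm_nonneg _).trans ha)
  have h2 : ‖a₀‖ * ‖b - b₀ - b₁ * ξ‖ ≤ K * (M₂ * r ^ 2) :=
    mul_le_mul ha₀ hb' (norm_nonneg _) hK
  have h3 : ‖a - a₀ - a₁ * ξ‖ * ‖b₀‖ ≤ (M₂ * r ^ 2) * K :=
    mul_le_mul ha' hb₀ (norm_nonneg _) ((norm_nonneg _).trans ha')
  nlinarith

/-- Holomorphic on `|z| < ρ` and bounded there by `K`. -/
def Bdd (f : ℂ → ℂ) (ρ K : ℝ) : Prop :=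
  DifferentiableOn ℂ f (ball 0 ρ) ∧ ∀ z ∈ ball (0 : ℂ) ρ, ‖f z‖ ≤ K

/-- Quantitative `∂̄`-principle: if `b₀ + conj a₁ b₁ + conj a₂ b₂` is small on a disk, with
`aⱼ, bⱼ` holomorphic and bounded, then so is its `∂_z̄`-derivative on the half disk. -/
lemma small_dbar {K ρ : ℝ} (hρ : 0 < ρ) (hK : 0 < K) {η : ℝ} (hη : 0 < η) :
    ∃ c : ℝ, 0 < c ∧ ∀ a₁ a₂ b₀ b₁ b₂ : ℂ → ℂ,
      Bdd a₁ ρ K → Bdd a₂ ρ K → Bdd b₀ ρ K → Bdd b₁ ρ K → Bdd b₂ ρ K →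
      (∀ z ∈ ball (0 : ℂ) ρ,
        ‖b₀ z + (starRingEnd ℂ) (a₁ z) * b₁ z + (starRingEnd ℂ) (a₂ z) * b₂ z‖ ≤ c) →
      ∀ z ∈ ball (0 : ℂ) (ρ / 2),
        ‖(starRingEnd ℂ) (deriv a₁ z) * b₁ z + (starRingEnd ℂ) (deriv a₂ z) * b₂ z‖ ≤ η := by
  set M₁ := 4 * K / ρ with hM₁
  set M₂ := 32 * K / ρ ^ 2 with hM₂
  set E := M₂ + 2 * (M₁ ^ 2 + 2 * K * M₂) with hE
  have hEpos : 0 < E := by positivity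
  set r := min (ρ / 16) (η / (2 * E)) with hr
  have hr0 : 0 < r := by positivity
  refine ⟨r * η / 2, by positivity, ?_⟩
  intro a₁ a₂ b₀ b₁ b₂ ha₁ ha₂ hb₀ hb₁ hb₂ hG z hz
  have hzn : ‖z‖ < ρ / 2 := by simpa using hz
  have hrρ : r ≤ ρ / 16 := min_le_left _ _
  have hrη : E * r ≤ η / 2 := by
    have : r ≤ η / (2 * E) := min_le_right _ _
    rw [le_div_iff₀ (by positivity)] at this
    linarith
  have d1 : ∀ f, Bdd f ρ K → ∀ x ∈ ball (0 : ℂ) (3 * ρ / 4), ‖deriv f x‖ ≤ M₁ := by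
    intro f hf x hx
    have := cauchy_disk (by linarith) hf.1 hf.2 hx
    refine this.trans (le_of_eq ?_)
    rw [hM₁]; field_simp; ring
  have d2 : ∀ f, Bdd f ρ K → ∀ x ∈ ball (0 : ℂ) (5 * ρ / 8), ‖deriv (deriv f) x‖ ≤ M₂ := by
    intro f hf x hx
    have := cauchy_disk (by linarith) ((deriv_diff hf.1).mono (ball_subset_ball (by linarith)))
      (d1 f hf) hx
    refine this.trans (le_of_eq ?_)
    rw [hM₁, hM₂]; field_simp; ring
  have hzz : z ∈ ball (0 : ℂ) (5 * ρ / 8) := by simp; linarith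
  have hin : ∀ ξ : ℂ, ‖ξ‖ = r → z + ξ ∈ ball (0 : ℂ) (5 * ρ / 8) := by
    intro ξ hξ
    have := norm_add_le z ξ
    simp; linarith
  have hzρ : z ∈ ball (0 : ℂ) ρ := by simp; linarith
  have t1 : ∀ f, Bdd f ρ K → ∀ ξ : ℂ, ‖ξ‖ = r → ‖f (z + ξ) - f z‖ ≤ M₁ * ‖ξ‖ := by
    intro f hf ξ hξ
    have := taylor_one (hf.1.mono (ball_subset_ball (by linarith)))
      (fun x hx => d1 f hf x (ball_subset_ball (by linarith) hx)) hzz (hin ξ hξ)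
    simpa using this
  have t2 : ∀ f, Bdd f ρ K → ∀ ξ : ℂ, ‖ξ‖ = r →
      ‖f (z + ξ) - f z - deriv f z * ξ‖ ≤ M₂ * ‖ξ‖ ^ 2 := by
    intro f hf ξ hξ
    have := taylor_two (hf.1.mono (ball_subset_ball (by linarith))) (d2 f hf) hzz (hin ξ hξ)
    simpa using this
  have := four_point (G := fun ξ => b₀ (z + ξ) + (starRingEnd ℂ) (a₁ (z + ξ)) * b₁ (z + ξ)
      + (starRingEnd ℂ) (a₂ (z + ξ)) * b₂ (z + ξ))
    (G₀ := b₀ z + (starRingEnd ℂ) (a₁ z) * b₁ z + (starRingEnd ℂ) (a₂ z) * b₂ z)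
    (A := deriv b₀ z + (starRingEnd ℂ) (a₁ z) * deriv b₁ z
      + (starRingEnd ℂ) (a₂ z) * deriv b₂ z)
    (B := (starRingEnd ℂ) (deriv a₁ z) * b₁ z + (starRingEnd ℂ) (deriv a₂ z) * b₂ z)
    (c := r * η / 2) (K := E) hr0
    (fun ξ hξ => hG _ (ball_subset_ball (by linarith) (hin ξ hξ)))
    (fun ξ hξ => by
      have p1 := prod_expand hξ (ha₁.2 z hzρ) (hb₁.2 z hzρ) (t1 _ ha₁ ξ hξ) (t1 _ hb₁ ξ hξ)
        (t2 _ ha₁ ξ hξ) (t2 _ hb₁ ξ hξ)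
      have p2 := prod_expand hξ (ha₂.2 z hzρ) (hb₂.2 z hzρ) (t1 _ ha₂ ξ hξ) (t1 _ hb₂ ξ hξ)
        (t2 _ ha₂ ξ hξ) (t2 _ hb₂ ξ hξ)
      have p0 := t2 _ hb₀ ξ hξ
      rw [hξ] at p0
      refine le_trans (le_of_eq ?_) ((norm_add₃_le).trans (add_le_add (add_le_add p0 p1) p2)) |>.trans
        (le_of_eq ?_)
      · congr 1; ring
      · rw [hE]; ring)
  refine this.trans ?_
  have : r * η / 2 / r = η / 2 := by field_simp
  linarith

lemma Bdd.mono {f : ℂ → ℂ} {ρ ρ' K K' : ℝ} (h : Bdd f ρ K) (hρ : ρ' ≤ ρ) (hK : K ≤ K') :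
    Bdd f ρ' K' :=
  ⟨h.1.mono (ball_subset_ball hρ), fun z hz => (h.2 z (ball_subset_ball hρ hz)).trans hK⟩

lemma Bdd.deriv {f : ℂ → ℂ} {ρ ρ' K : ℝ} (h : Bdd f ρ K) (hρ : ρ' < ρ) :
    Bdd (deriv f) ρ' (K / (ρ - ρ')) :=
  ⟨(deriv_diff h.1).mono (ball_subset_ball hρ.le), fun _ hz => cauchy_disk hρ h.1 h.2 hz⟩

lemma Bdd.mul {f g : ℂ → ℂ} {ρ K K' : ℝ} (h : Bdd f ρ K) (k : Bdd g ρ K') :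
    Bdd (fun z => f z * g z) ρ (K * K') :=
  ⟨h.1.mul k.1, fun z hz => by
    rw [norm_mul]
    exact mul_le_mul (h.2 z hz) (k.2 z hz) (norm_nonneg _) ((norm_nonneg _).trans (h.2 z hz))⟩

lemma Bdd.add {f g : ℂ → ℂ} {ρ K K' : ℝ} (h : Bdd f ρ K) (k : Bdd g ρ K') :
    Bdd (fun z => f z + g z) ρ (K + K') :=
  ⟨h.1.add k.1, fun z hz => (norm_add_le _ _).trans (add_le_add (h.2 z hz) (k.2 z hz))⟩

lemma Bdd.sub {f g : ℂ → ℂ} {ρ K K' : ℝ} (h : Bdd f ρ K) (k : Bdd g ρ K') :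
    Bdd (fun z => f z - g z) ρ (K + K') :=
  ⟨h.1.sub k.1, fun z hz => (norm_sub_le _ _).trans (add_le_add (h.2 z hz) (k.2 z hz))⟩

lemma Bdd.const (c : ℂ) (ρ : ℝ) : Bdd (fun _ => c) ρ ‖c‖ :=
  ⟨differentiableOn_const c, fun _ _ => le_rfl⟩

/-- Core estimate at the centre of a hyperbolic disk: if the harmonic Schwarzian (multiplied by
`(1-|w|²)²` and written as a polynomial in `conj w` with holomorphic coefficients) is small
near `0`, then so is `w'(0)`. -/
lemma core_small {C : ℝ} (hC : 0 ≤ C) {η : ℝ} (hη : 0 < η) :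
    ∃ c : ℝ, 0 < c ∧ ∀ p w : ℂ → ℂ, Bdd p (1 / 4) C → Bdd w (1 / 4) 1 →
      (∀ z ∈ ball (0 : ℂ) (1 / 4),
        ‖(1 - w z * (starRingEnd ℂ) (w z)) ^ 2 * (deriv p z - p z ^ 2 / 2)
          + (starRingEnd ℂ) (w z) * (1 - w z * (starRingEnd ℂ) (w z))
            * (deriv w z * p z - deriv (deriv w) z)
          - 3 / 2 * (starRingEnd ℂ) (w z) ^ 2 * deriv w z ^ 2‖ ≤ c) →
      ‖deriv w 0‖ ≤ η := by
  set K : ℝ := 10000 * (1 + C) ^ 2 with hK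
  have hKpos : 0 < K := by positivity
  set m := η ^ 5 / 2000 with hm
  have hmpos : 0 < m := by positivity
  obtain ⟨c₂, hc₂, H₂⟩ := small_dbar (K := K) (ρ := 1 / 32) (by norm_num) hKpos hmpos
  obtain ⟨c₁, hc₁, H₁⟩ := small_dbar (K := K) (ρ := 1 / 16) (by norm_num) hKpos
    (show 0 < min c₂ m by positivity)
  refine ⟨min c₁ m, by positivity, ?_⟩
  intro p w hp hw hS
  have hw1 : Bdd (deriv w) (1 / 8) 8 := by
    have := hw.deriv (ρ' := 1 / 8) (by norm_num); norm_num at this; exact this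
  have hw2 : Bdd (deriv (deriv w)) (1 / 16) 128 := by
    have := hw1.deriv (ρ' := 1 / 16) (by norm_num); norm_num at this; exact this
  have hp1 : Bdd (deriv p) (1 / 16) (8 * C) := by
    have := (hp.deriv (ρ' := 1 / 8) (by norm_num)).mono (ρ' := 1 / 16) (by norm_num) le_rfl
    exact this.mono le_rfl (by norm_num; linarith)
  have hw' := hw.mono (ρ' := 1 / 16) (by norm_num) le_rfl
  have hw1' := hw1.mono (ρ' := 1 / 16) (by norm_num) le_rfl
  have hp' := hp.mono (ρ' := 1 / 16) (by norm_num) le_rfl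
  set S : ℂ → ℂ := fun z => deriv p z - 1 / 2 * (p z * p z) with hSd
  set X : ℂ → ℂ := fun z => deriv w z * p z - deriv (deriv w) z with hXd
  set A1 : ℂ → ℂ := fun z => X z - 2 * (w z * S z) with hA1d
  set A2 : ℂ → ℂ := fun z => w z * w z * S z - w z * X z - 3 / 2 * (deriv w z * deriv w z)
    with hA2d
  have bS : Bdd S (1 / 16) (8 * C + 1 / 2 * (C * C)) := by
    have := hp1.sub ((Bdd.const (1 / 2) _).mul (hp'.mul hp'))
    norm_num at this ⊢; exact this
  have bX : Bdd X (1 / 16) (8 * C + 128) := (hw1'.mul hp').sub hw2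
  have bA1 : Bdd A1 (1 / 16) (8 * C + 128 + 2 * (1 * (8 * C + 1 / 2 * (C * C)))) := by
    have := bX.sub ((Bdd.const 2 _).mul (hw'.mul bS))
    simpa using this
  have bA2 : Bdd A2 (1 / 16) (1 * 1 * (8 * C + 1 / 2 * (C * C)) + 1 * (8 * C + 128)
      + 3 / 2 * (8 * 8)) := by
    have := (((hw'.mul hw').mul bS).sub (hw'.mul bX)).sub
      ((Bdd.const (3 / 2) _).mul (hw1'.mul hw1'))
    simpa using this
  have kS := bS.mono le_rfl (show _ ≤ K by rw [hK]; nlinarith)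
  have kA1 := bA1.mono le_rfl (show _ ≤ K by rw [hK]; nlinarith)
  have kA2 := bA2.mono le_rfl (show _ ≤ K by rw [hK]; nlinarith)
  have kw := hw'.mono le_rfl (show _ ≤ K by rw [hK]; nlinarith)
  have kww := (hw'.mul hw').mono le_rfl (show _ ≤ K by rw [hK]; nlinarith)
  have kw1 := hw1'.mono le_rfl (show _ ≤ K by rw [hK]; nlinarith)
  have kww1 : Bdd (fun z => 2 * (w z * deriv w z)) (1 / 16) K := by
    have := (Bdd.const 2 _).mul (hw'.mul hw1')
    exact this.mono le_rfl (by rw [hK]; norm_num; nlinarith)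
  have hexp : ∀ z ∈ ball (0 : ℂ) (1 / 16), ‖S z + (starRingEnd ℂ) (w z) * A1 z
      + (starRingEnd ℂ) (w z * w z) * A2 z‖ ≤ min c₁ m := by
    intro z hz
    refine le_trans (le_of_eq ?_) (hS z (ball_subset_ball (by norm_num) hz))
    congr 1
    simp only [hA1d, hA2d, hXd, hSd, map_mul]
    ring
  have hdww : ∀ z ∈ ball (0 : ℂ) (1 / 16), deriv (fun z => w z * w z) z = 2 * (w z * deriv w z) := by
    intro z hz
    have := diff_hasDerivAt hw'.1 hz
    exact (this.mul this).deriv.trans (by ring)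
  have L1 := H₁ w (fun z => w z * w z) S A1 A2 kw kww kS kA1 kA2
    (fun z hz => (hexp z hz).trans (min_le_left _ _))
  norm_num at L1
  have L2 := H₂ (deriv w) (fun z => 2 * (w z * deriv w z)) (fun _ => 0) A1 A2
    (kw1.mono (by norm_num) le_rfl) (kww1.mono (by norm_num) le_rfl)
    ((Bdd.const 0 _).mono le_rfl (by simpa using hKpos.le)) (kA1.mono (by norm_num) le_rfl)
    (kA2.mono (by norm_num) le_rfl) (fun z hz => by
      have h1 := (L1 z (by simpa using hz)).1
      rw [hdww z (ball_subset_ball (by norm_num) hz)] at h1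
      simpa using h1) 0 (by simp)
  have L1' := (L1 0 (by simp)).2
  have L0 := (hexp 0 (by simp)).trans (min_le_right _ _)
  rw [hdww 0 (by simp)] at L1'
  have hd2 : deriv (fun z => 2 * (w z * deriv w z)) 0
      = 2 * (deriv w 0 * deriv w 0 + w 0 * deriv (deriv w) 0) := by
    have e1 := diff_hasDerivAt hw'.1 (show (0 : ℂ) ∈ ball (0 : ℂ) (1 / 16) by simp)
    have e2 := diff_hasDerivAt hw1'.1 (show (0 : ℂ) ∈ ball (0 : ℂ) (1 / 16) by simp)
    exact ((e1.mul e2).const_mul 2).deriv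
  rw [hd2] at L2
  have nw : ‖w 0‖ ≤ 1 := hw'.2 0 (by simp)
  have nw1 : ‖deriv w 0‖ ≤ 8 := hw1'.2 0 (by simp)
  have nw2 : ‖deriv (deriv w) 0‖ ≤ 128 := hw2.2 0 (by simp)
  set a := w 0
  set a1 := deriv w 0 with ha1
  set a2 := deriv (deriv w) 0
  set G0 := S 0 + (starRingEnd ℂ) a * A1 0 + (starRingEnd ℂ) (a * a) * A2 0 with hG0
  set G1 := (starRingEnd ℂ) a1 * A1 0 + (starRingEnd ℂ) (2 * (a * a1)) * A2 0 with hG1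
  set G2 := (starRingEnd ℂ) a2 * A1 0 + (starRingEnd ℂ) (2 * (a1 * a1 + a * a2)) * A2 0 with hG2
  set b1 := (starRingEnd ℂ) a1 with hb1
  have nb1 : ‖b1‖ ≤ 8 := by rw [hb1, RCLike.norm_conj]; exact nw1
  have hA2v : A2 0 = a * a * S 0 - a * X 0 - 3 / 2 * (a1 * a1) := rfl
  have hA1v : A1 0 = X 0 - 2 * (a * S 0) := rfl
  have E1 : 2 * b1 ^ 3 * A2 0 = b1 * G2 - (starRingEnd ℂ) a2 * G1 := by
    rw [hG1, hG2]; simp only [map_mul, map_add, map_ofNat, ← hb1]; ring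
  have E2 : -(3 / 2) * a1 ^ 2 * b1 ^ 3 = (1 - a * (starRingEnd ℂ) a) ^ 2 * (b1 ^ 3 * A2 0)
      + (a - a ^ 2 * (starRingEnd ℂ) a) * (b1 ^ 2 * G1) + a ^ 2 * b1 ^ 3 * G0 := by
    rw [hG1, hG0, hA1v, hA2v]; simp only [map_mul, map_ofNat, ← hb1]; ring
  have N1 : ‖b1 ^ 3 * A2 0‖ ≤ 68 * m := by
    have : ‖2 * b1 ^ 3 * A2 0‖ ≤ 8 * m + 128 * m := by
      rw [E1]
      refine (norm_sub_le _ _).trans ?_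
      rw [norm_mul, norm_mul]
      have na2 : ‖(starRingEnd ℂ) a2‖ ≤ 128 := by rw [RCLike.norm_conj]; exact nw2
      gcongr
    rw [mul_assoc, norm_mul] at this
    simp only [Complex.norm_ofNat] at this
    linarith
  have Na : ‖1 - a * (starRingEnd ℂ) a‖ ≤ 1 := by
    rw [← normSq_cast, Complex.norm_real, Real.norm_of_nonneg]
    · nlinarith [norm_nonneg a]
    · nlinarith [norm_nonneg a]
  have N2 : ‖-(3 / 2) * a1 ^ 2 * b1 ^ 3‖ ≤ 1 * (68 * m) + 2 * (64 * m) + 512 * m := by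
    rw [E2]
    refine norm_add₃_le.trans ?_
    have i1 : ‖(1 - a * (starRingEnd ℂ) a) ^ 2 * (b1 ^ 3 * A2 0)‖ ≤ 1 * (68 * m) := by
      rw [norm_mul, norm_pow]
      gcongr
      exact pow_le_one₀ (norm_nonneg _) Na
    have i2 : ‖(a - a ^ 2 * (starRingEnd ℂ) a) * (b1 ^ 2 * G1)‖ ≤ 2 * (64 * m) := by
      rw [norm_mul, norm_mul, norm_pow]
      have : ‖a - a ^ 2 * (starRingEnd ℂ) a‖ ≤ 2 := by
        refine (norm_sub_le _ _).trans ?_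
        rw [norm_mul, norm_pow, RCLike.norm_conj]
        have : ‖a‖ ^ 2 ≤ 1 := pow_le_one₀ (norm_nonneg _) nw
        nlinarith [norm_nonneg a, mul_le_one₀ this (norm_nonneg a) nw]
      have h8 : ‖b1‖ ^ 2 ≤ 64 := by nlinarith [norm_nonneg b1]
      gcongr
    have i3 : ‖a ^ 2 * b1 ^ 3 * G0‖ ≤ 512 * m := by
      rw [norm_mul, norm_mul, norm_pow, norm_pow]
      have h1 : ‖a‖ ^ 2 ≤ 1 := pow_le_one₀ (norm_nonneg _) nw
      have h8 : ‖b1‖ ^ 3 ≤ 8 ^ 3 := by gcongr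
      calc _ ≤ 1 * 8 ^ 3 * m := by gcongr
        _ = _ := by norm_num
    linarith
  have N3 : ‖-(3 / 2) * a1 ^ 2 * b1 ^ 3‖ = 3 / 2 * ‖a1‖ ^ 5 := by
    rw [norm_mul, norm_mul, norm_neg, norm_pow, norm_pow, hb1, RCLike.norm_conj]
    norm_num; ring
  rw [N3, hm] at N2
  by_contra hcon
  push Not at hcon
  have := pow_lt_pow_left₀ hcon hη.le (n := 5) (by norm_num)
  have hη5 : 0 < η ^ 5 := by positivity
  linarith

/-! ### Consequences of a small Schwarzian -/

lemma mem_ball_scaled {z ξ : ℂ} (hz : z ∈ ball (0 : ℂ) 1) (hξ : ξ ∈ ball (0 : ℂ) (1 / 4)) :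
    z + ((1 - ‖z‖ ^ 2 : ℝ) : ℂ) * ξ ∈ ball (0 : ℂ) 1 ∧
      (1 - ‖z‖ ^ 2) / 4 ≤ 1 - ‖z + ((1 - ‖z‖ ^ 2 : ℝ) : ℂ) * ξ‖ ^ 2 := by
  have hz1 : ‖z‖ < 1 := by simpa using hz
  have hx1 : ‖ξ‖ < 1 / 4 := by simpa using hξ
  have hs : 0 < 1 - ‖z‖ ^ 2 := by nlinarith [norm_nonneg z]
  have h1 : ‖z + ((1 - ‖z‖ ^ 2 : ℝ) : ℂ) * ξ‖ ≤ ‖z‖ + (1 - ‖z‖ ^ 2) / 4 := by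
    refine (norm_add_le _ _).trans ?_
    rw [norm_mul, Complex.norm_real, Real.norm_of_nonneg hs.le]
    nlinarith
  have h2 : ‖z‖ + (1 - ‖z‖ ^ 2) / 4 < 1 := by nlinarith [norm_nonneg z]
  refine ⟨by simp only [mem_ball_zero_iff]; linarith, ?_⟩
  nlinarith [norm_nonneg z, norm_nonneg (z + ((1 - ‖z‖ ^ 2 : ℝ) : ℂ) * ξ)]

lemma hasDerivAt_comp_affine {f : ℂ → ℂ} {f' z s ξ : ℂ} (hf : HasDerivAt f f' (z + s * ξ)) :
    HasDerivAt (fun ξ => f (z + s * ξ)) (f' * s) ξ := by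
  have h1 : HasDerivAt (fun ξ : ℂ => z + s * ξ) s ξ := by
    simpa using ((hasDerivAt_id ξ).const_mul s).const_add z
  exact hf.comp ξ h1

namespace Hyp

variable {h g : ℂ → ℂ} {d c : ℝ} {z : ℂ}

lemma mono {c' : ℝ} (H : Hyp h g d c) (hc : c ≤ c') : Hyp h g d c' :=
  ⟨H.hd, H.gd, H.h0, H.dil_le, fun z hz => (H.schw_le z hz).trans hc⟩

/-- If the harmonic Schwarzian is small, so is the hyperbolic derivative of the
dilatation. -/
lemma dil_small (d : ℝ) (hd : d < 1) {η : ℝ} (hη : 0 < η) :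
    ∃ c : ℝ, 0 < c ∧ ∀ h g : ℂ → ℂ, Hyp h g d c →
      ∀ z ∈ ball (0 : ℂ) 1, (1 - ‖z‖ ^ 2) * ‖deriv (dil h g) z‖ ≤ η := by
  obtain ⟨C, hC1, hC⟩ := exists_bound d hd
  obtain ⟨c, hc, hcore⟩ := core_small (C := 4 * C) (by linarith) hη
  refine ⟨min 1 (c / 16), by positivity, ?_⟩
  intro h g H z hz
  have hz1 : ‖z‖ < 1 := by simpa using hz
  have hs : 0 < 1 - ‖z‖ ^ 2 := by nlinarith [norm_nonneg z]
  set s : ℝ := 1 - ‖z‖ ^ 2 with hsd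
  have hsn : ‖(s : ℂ)‖ = s := by rw [Complex.norm_real, Real.norm_of_nonneg hs.le]
  have hd1 : ∀ f : ℂ → ℂ, DifferentiableOn ℂ f (ball 0 1) → ∀ ξ ∈ ball (0 : ℂ) (1 / 4),
      HasDerivAt (fun ξ => f (z + s * ξ)) (deriv f (z + s * ξ) * s) ξ := by
    intro f hf ξ hξ
    exact hasDerivAt_comp_affine (diff_hasDerivAt hf (mem_ball_scaled hz hξ).1)
  have hd2 : ∀ f : ℂ → ℂ, DifferentiableOn ℂ f (ball 0 1) →
      DifferentiableOn ℂ (fun ξ => f (z + s * ξ)) (ball 0 (1 / 4)) := by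
    intro f hf ξ hξ
    exact (hd1 f hf ξ hξ).differentiableAt.differentiableWithinAt
  have hlt : ∀ z ∈ ball (0 : ℂ) 1, ‖dil h g z‖ < 1 := fun z hz => (H.dil_le z hz).trans_lt hd
  have key := hcore (fun ξ => s * preSch h (z + s * ξ)) (fun ξ => dil h g (z + s * ξ))
    ⟨(hd2 _ H.pd).const_mul _, fun ξ hξ => by
      have hm := mem_ball_scaled hz hξ
      have := (hC h g _ (min_le_left _ _) H _ hm.1).2
      rw [norm_mul, hsn]
      have h2 := mul_le_mul_of_nonneg_right hm.2 (norm_nonneg (preSch h (z + s * ξ)))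
      linarith⟩
    ⟨hd2 _ H.wd, fun ξ hξ => (hlt _ (mem_ball_scaled hz hξ).1).le⟩
    (fun ξ hξ => by
      have hm := mem_ball_scaled hz hξ
      have e1 : deriv (fun ξ => s * preSch h (z + s * ξ)) ξ
          = s * (deriv (preSch h) (z + s * ξ) * s) := ((hd1 _ H.pd ξ hξ).const_mul _).deriv
      have e2 : ∀ ξ ∈ ball (0 : ℂ) (1 / 4), deriv (fun ξ => dil h g (z + s * ξ)) ξ
          = deriv (dil h g) (z + s * ξ) * s := fun ξ hξ => (hd1 _ H.wd ξ hξ).deriv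
      have e3 : deriv (deriv (fun ξ => dil h g (z + s * ξ))) ξ
          = deriv (deriv (dil h g)) (z + s * ξ) * s * s := by
        have : deriv (fun ξ => dil h g (z + s * ξ)) =ᶠ[nhds ξ]
            fun ξ => deriv (dil h g) (z + s * ξ) * s := by
          filter_upwards [isOpen_ball.mem_nhds hξ] with x hx using e2 x hx
        rw [this.deriv_eq]
        exact ((hd1 _ (deriv_diff H.wd) ξ hξ).mul_const _).deriv
      rw [e1, e2 ξ hξ, e3]
      have hF := schwH_eq H.hd H.gd H.h0 hm.1 (hlt _ hm.1)
      have hle := (H.schw_le _ hm.1).trans (min_le_right _ _)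
      set x := z + s * ξ
      rw [normSq_cast (dil h g x)] at hF
      have : ∀ a b : ℂ, a = s ^ 2 * b → ‖b‖ ≤ ‖schwH h g x‖ → ‖a‖ ≤ c := by
        intro a b hab hb
        rw [hab, norm_mul, norm_pow, hsn]
        have h4 : (s / 4) ^ 2 ≤ (1 - ‖x‖ ^ 2) ^ 2 := by
          have := hm.2
          gcongr
        have h5 := mul_le_mul h4 hb (norm_nonneg _) (sq_nonneg _)
        nlinarith
      refine this _ ((1 - dil h g x * (starRingEnd ℂ) (dil h g x)) ^ 2 * schwH h g x) ?_ ?_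
      · rw [hF, schw]; ring
      · rw [norm_mul, ← normSq_cast, norm_pow, Complex.norm_real]
        have hx1 := hlt x hm.1
        have hx0 := norm_nonneg (dil h g x)
        rw [Real.norm_of_nonneg (by nlinarith)]
        have : (1 - ‖dil h g x‖ ^ 2) ^ 2 ≤ 1 := by
          apply pow_le_one₀ <;> nlinarith
        nlinarith [norm_nonneg (schwH h g x)])
  have e2 : deriv (fun ξ => dil h g (z + s * ξ)) 0 = deriv (dil h g) z * s := by
    have := (hd1 _ H.wd 0 (by simp)).deriv
    simpa using this
  rw [e2, norm_mul, hsn] at key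
  linarith

end Hyp

/-- If `(1-|z|²)|u| ≤ η` with `u` holomorphic on the disk, then `(1-|z|²)²|u'| ≤ 16 η`. -/
lemma deriv_weighted {u : ℂ → ℂ} {η : ℝ} (hu : DifferentiableOn ℂ u (ball 0 1))
    (hb : ∀ z ∈ ball (0 : ℂ) 1, (1 - ‖z‖ ^ 2) * ‖u z‖ ≤ η) {z : ℂ} (hz : z ∈ ball (0 : ℂ) 1) :
    (1 - ‖z‖ ^ 2) ^ 2 * ‖deriv u z‖ ≤ 16 * η := by
  have hz1 : ‖z‖ < 1 := by simpa using hz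
  have hz0 := norm_nonneg z
  set r := (1 - ‖z‖) / 2 with hr
  have hr0 : 0 < r := by rw [hr]; linarith
  have hη : 0 ≤ η := by
    refine le_trans (mul_nonneg ?_ (norm_nonneg _)) (hb z hz)
    nlinarith
  have hin : ∀ x ∈ closedBall z r, ‖x‖ ≤ 1 - r := by
    intro x hx
    have := norm_le_norm_add_norm_sub' x z
    simp [dist_eq_norm] at hx; linarith
  have hsub : closedBall z r ⊆ ball (0 : ℂ) 1 := by
    intro x hx
    have := hin x hx
    simp; linarith
  have := Complex.norm_deriv_le_of_forall_mem_sphere_norm_le hr0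
      (hu.diffContOnCl_ball hsub) (C := η / r) (fun x hx => by
        have hx' := sphere_subset_closedBall hx
        have h1 := hb x (hsub hx')
        have h2 := hin x hx'
        have h3 : r ≤ 1 - ‖x‖ ^ 2 := by nlinarith [norm_nonneg x]
        rw [le_div_iff₀ hr0]
        nlinarith [norm_nonneg (u x)])
  have hle : 1 - ‖z‖ ^ 2 ≤ 4 * r := by rw [hr]; nlinarith
  have hge : 0 ≤ 1 - ‖z‖ ^ 2 := by nlinarith
  calc (1 - ‖z‖ ^ 2) ^ 2 * ‖deriv u z‖ ≤ (4 * r) ^ 2 * (η / r / r) := by gcongr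
    _ = 16 * η := by field_simp; ring

/-- The data used by the injectivity argument: `q` is the holomorphic map `h + ε g`, `w` the
dilatation; `q` is locally injective with Schwarzian norm at most `δ`, and `w` varies slowly in the
hyperbolic metric. The bound `μ` keeps `(1-|w|²)(1+εw)` away from zero. -/
structure Nice (q w : ℂ → ℂ) (ε : ℂ) (μ δ : ℝ) : Prop where
  qd : DifferentiableOn ℂ q (ball 0 1)
  wd : DifferentiableOn ℂ w (ball 0 1)
  q0 : ∀ z ∈ ball (0 : ℂ) 1, deriv q z ≠ 0
  hμ : 0 < μ
  hμ1 : μ ≤ 1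
  hδ : 0 < δ
  hδ1 : δ ≤ 1
  w1 : ∀ z ∈ ball (0 : ℂ) 1, ‖w z‖ < 1
  he : ‖ε‖ ≤ 2
  low : ∀ z ∈ ball (0 : ℂ) 1, μ ≤ (1 - ‖w z‖ ^ 2) * ‖1 + ε * w z‖
  dw : ∀ z ∈ ball (0 : ℂ) 1, (1 - ‖z‖ ^ 2) * ‖deriv w z‖ ≤ δ * μ ^ 2 / 98
  sq : ∀ z ∈ ball (0 : ℂ) 1, (1 - ‖z‖ ^ 2) ^ 2 * ‖schw q z‖ ≤ δ

/-- The difference `P_f - P_q` for `q = h + ε g`, written through the dilatation. -/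
noncomputable def sig (w : ℂ → ℂ) (ε : ℂ) (z : ℂ) : ℂ :=
  -(deriv w z * (((starRingEnd ℂ) (w z) + ε) / (((1 - ‖w z‖ ^ 2 : ℝ) : ℂ) * (1 + ε * w z))))

/-- The modified pre-Schwarzian `τ = P_q + σ` attached to `(q, w, ε)`; it equals `P_f`. -/
noncomputable def tau (q w : ℂ → ℂ) (ε : ℂ) (z : ℂ) : ℂ := preSch q z + sig w ε z

namespace Nice

variable {q w : ℂ → ℂ} {ε : ℂ} {μ δ : ℝ}

lemma norm_den (N : Nice q w ε μ δ) {z : ℂ} (hz : z ∈ ball (0 : ℂ) 1) :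
    μ ≤ ‖((1 - ‖w z‖ ^ 2 : ℝ) : ℂ) * (1 + ε * w z)‖ := by
  have := N.w1 z hz
  have h0 := norm_nonneg (w z)
  rw [norm_mul, Complex.norm_real, Real.norm_of_nonneg (by nlinarith)]
  exact N.low z hz

lemma norm_num_le (N : Nice q w ε μ δ) {z : ℂ} (hz : z ∈ ball (0 : ℂ) 1) :
    ‖(starRingEnd ℂ) (w z) + ε‖ ≤ 3 := by
  refine (norm_add_le _ _).trans ?_
  rw [RCLike.norm_conj]
  linarith [N.w1 z hz, N.he]

lemma norm_quot_le (N : Nice q w ε μ δ) {z : ℂ} (hz : z ∈ ball (0 : ℂ) 1) :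
    ‖((starRingEnd ℂ) (w z) + ε) / (((1 - ‖w z‖ ^ 2 : ℝ) : ℂ) * (1 + ε * w z))‖ ≤ 3 / μ := by
  rw [norm_div]
  exact div_le_div₀ (by norm_num) (N.norm_num_le hz) N.hμ (N.norm_den hz)

lemma sig_le (N : Nice q w ε μ δ) {z : ℂ} (hz : z ∈ ball (0 : ℂ) 1) :
    (1 - ‖z‖ ^ 2) * ‖sig w ε z‖ ≤ δ := by
  rw [sig, norm_neg, norm_mul, ← mul_assoc]
  have hμ := N.hμ
  have hδ := N.hδ
  have hμ1 := N.hμ1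
  calc _ ≤ (δ * μ ^ 2 / 98) * (3 / μ) :=
        mul_le_mul (N.dw z hz) (N.norm_quot_le hz) (norm_nonneg _) (by positivity)
    _ = δ * μ * (3 / 98) := by field_simp
    _ ≤ δ * 1 * 1 := by gcongr; norm_num
    _ = δ := by ring

lemma sig_lip (N : Nice q w ε μ δ) {b : ℂ} (hb : ‖b‖ ≤ 1 / 4) :
    ‖sig w ε b - sig w ε 0‖ ≤ δ * ‖b‖ := by
  have hμ := N.hμ
  have hδ := N.hδ
  have hδ1 := N.hδ1
  have hμ1 := N.hμ1
  set η := δ * μ ^ 2 / 98 with hη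
  have hη0 : 0 < η := by positivity
  have hη1 : η ≤ 1 := by
    rw [hη, div_le_one (by norm_num)]
    have : μ ^ 2 ≤ 1 := pow_le_one₀ hμ.le hμ1
    nlinarith
  have h1 : ∀ x ∈ ball (0 : ℂ) (1 / 2), ‖deriv w x‖ ≤ 2 * η := by
    intro x hx
    have hx' : ‖x‖ < 1 / 2 := by simpa using hx
    have := N.dw x (ball_subset_ball (by norm_num) hx)
    have h3 : 1 / 2 ≤ 1 - ‖x‖ ^ 2 := by nlinarith [norm_nonneg x]
    nlinarith [norm_nonneg (deriv w x)]
  have h2 : ∀ x ∈ ball (0 : ℂ) (3 / 8), ‖deriv (deriv w) x‖ ≤ 16 * η := by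
    intro x hx
    have := cauchy_disk (by norm_num)
      ((deriv_diff N.wd).mono (ball_subset_ball (by norm_num))) h1 hx
    norm_num at this; linarith
  have hb3 : b ∈ ball (0 : ℂ) (3 / 8) := by simp; linarith
  have hb2 : b ∈ ball (0 : ℂ) (1 / 2) := by simp; linarith
  have hb1 : b ∈ ball (0 : ℂ) 1 := by simp; linarith
  have l1 : ‖deriv w b - deriv w 0‖ ≤ 16 * η * ‖b‖ := by
    simpa using taylor_one ((deriv_diff N.wd).mono (ball_subset_ball (by norm_num))) h2
      (z := 0) (by simp) hb3
  have l0 : ‖w b - w 0‖ ≤ 2 * η * ‖b‖ := by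
    simpa using taylor_one (N.wd.mono (ball_subset_ball (by norm_num))) h1
      (z := 0) (by simp) hb2
  have hw0 : ‖deriv w 0‖ ≤ η := by simpa using N.dw 0 (by simp)
  set n1 := (starRingEnd ℂ) (w b) + ε with hn1
  set n0 := (starRingEnd ℂ) (w 0) + ε with hn0
  set D1 := ((1 - ‖w b‖ ^ 2 : ℝ) : ℂ) * (1 + ε * w b) with hD1
  set D0 := ((1 - ‖w 0‖ ^ 2 : ℝ) : ℂ) * (1 + ε * w 0) with hD0
  have m1 : μ ≤ ‖D1‖ := N.norm_den hb1
  have m0 : μ ≤ ‖D0‖ := N.norm_den (by simp)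
  have D1ne : D1 ≠ 0 := norm_pos_iff.1 (hμ.trans_le m1)
  have D0ne : D0 ≠ 0 := norm_pos_iff.1 (hμ.trans_le m0)
  have nn0 : ‖n0‖ ≤ 3 := N.norm_num_le (by simp)
  have hdn : ‖n1 - n0‖ ≤ 2 * η * ‖b‖ := by
    have : n1 - n0 = (starRingEnd ℂ) (w b - w 0) := by rw [hn1, hn0, map_sub]; ring
    rw [this, RCLike.norm_conj]; exact l0
  have wb1 := N.w1 b hb1
  have w01 := N.w1 0 (by simp)
  have hdD : ‖D1 - D0‖ ≤ 8 * (2 * η * ‖b‖) := by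
    have : D1 - D0 = ((‖w 0‖ ^ 2 - ‖w b‖ ^ 2 : ℝ) : ℂ) * (1 + ε * w b)
        + ((1 - ‖w 0‖ ^ 2 : ℝ) : ℂ) * (ε * (w b - w 0)) := by
      rw [hD1, hD0]; push_cast; ring
    rw [this]
    have i1 : |‖w 0‖ ^ 2 - ‖w b‖ ^ 2| ≤ 2 * ‖w b - w 0‖ := by
      have e : ‖w 0‖ ^ 2 - ‖w b‖ ^ 2 = (‖w 0‖ - ‖w b‖) * (‖w 0‖ + ‖w b‖) := by ring
      rw [e, abs_mul, abs_of_nonneg (show 0 ≤ ‖w 0‖ + ‖w b‖ by positivity)]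
      have i0 : |‖w 0‖ - ‖w b‖| ≤ ‖w b - w 0‖ := by
        rw [norm_sub_rev]; exact abs_norm_sub_norm_le _ _
      nlinarith [abs_nonneg (‖w 0‖ - ‖w b‖), norm_nonneg (w 0), norm_nonneg (w b)]
    have i2 : ‖1 + ε * w b‖ ≤ 3 := by
      refine (norm_add_le _ _).trans ?_
      rw [norm_one, norm_mul]
      nlinarith [N.he, norm_nonneg (w b), norm_nonneg ε]
    have i3 : ‖((1 - ‖w 0‖ ^ 2 : ℝ) : ℂ)‖ ≤ 1 := by
      rw [Complex.norm_real, Real.norm_of_nonneg (by nlinarith [norm_nonneg (w 0)])]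
      nlinarith [norm_nonneg (w 0)]
    refine (norm_add_le _ _).trans ?_
    rw [norm_mul, norm_mul, norm_mul, Complex.norm_real, Real.norm_eq_abs]
    have j1 := mul_le_mul i1 i2 (norm_nonneg _) (by positivity)
    have j2 := mul_le_mul i3 (mul_le_mul N.he l0 (norm_nonneg _) (by norm_num)) (by positivity)
      (by norm_num)
    linarith
  have hdq : ‖n1 / D1 - n0 / D0‖ ≤ 25 * (2 * η * ‖b‖) / μ ^ 2 := by
    have e : n1 / D1 - n0 / D0 = (n1 - n0) / D1 - n0 / D0 * (D1 - D0) / D1 := by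
      field_simp; ring
    rw [e]
    refine (norm_sub_le _ _).trans ?_
    rw [norm_div (n1 - n0) D1, norm_div (n0 / D0 * (D1 - D0)) D1, norm_mul (n0 / D0), norm_div n0 D0]
    have j1 : ‖n1 - n0‖ / ‖D1‖ ≤ (2 * η * ‖b‖) / μ := by gcongr
    have j2 : ‖n0‖ / ‖D0‖ * ‖D1 - D0‖ / ‖D1‖ ≤ 3 / μ * (8 * (2 * η * ‖b‖)) / μ := by gcongr
    have j3 : (2 * η * ‖b‖) / μ ≤ (2 * η * ‖b‖) / μ ^ 2 := by
      gcongr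
      nlinarith
    have j4 : 3 / μ * (8 * (2 * η * ‖b‖)) / μ = 24 * (2 * η * ‖b‖) / μ ^ 2 := by
      field_simp; ring
    have j5 : 25 * (2 * η * ‖b‖) / μ ^ 2 = (2 * η * ‖b‖) / μ ^ 2 + 24 * (2 * η * ‖b‖) / μ ^ 2 := by
      ring
    linarith
  have hq1 : ‖n1 / D1‖ ≤ 3 / μ := N.norm_quot_le hb1
  have e : sig w ε b - sig w ε 0 = -((deriv w b - deriv w 0) * (n1 / D1)
      + deriv w 0 * (n1 / D1 - n0 / D0)) := by
    simp only [sig]; ring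
  rw [e, norm_neg]
  refine (norm_add_le _ _).trans ?_
  rw [norm_mul, norm_mul]
  have k1 := mul_le_mul l1 hq1 (norm_nonneg _) (by positivity)
  have k2 := mul_le_mul hw0 hdq (norm_nonneg _) (by positivity)
  have k3 : 16 * η * ‖b‖ * (3 / μ) ≤ 48 * η * ‖b‖ / μ ^ 2 := by
    have : 16 * η * ‖b‖ * (3 / μ) = 48 * η * ‖b‖ / μ := by ring
    rw [this]
    gcongr
    nlinarith
  have k4 : η * (25 * (2 * η * ‖b‖) / μ ^ 2) ≤ 50 * η * ‖b‖ / μ ^ 2 := by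
    rw [← mul_div_assoc]
    refine div_le_div_of_nonneg_right ?_ (by positivity)
    have : 0 ≤ η * ‖b‖ := by positivity
    nlinarith
  have k5 : 48 * η * ‖b‖ / μ ^ 2 + 50 * η * ‖b‖ / μ ^ 2 = δ * ‖b‖ := by
    rw [hη]; field_simp; ring
  linarith

end Nice

/-! ### The associated holomorphic maps -/

namespace Hyp

variable {h g : ℂ → ℂ} {d c : ℝ}

/-- The holomorphic map `q = h + ε g`: its pre-Schwarzian and Schwarzian in terms of `h` and `ω`. -/
lemma eps_data (H : Hyp h g d c) {ε : ℂ} (hε : ∀ z ∈ ball (0 : ℂ) 1, 1 + ε * dil h g z ≠ 0)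
    {z : ℂ} (hz : z ∈ ball (0 : ℂ) 1) :
    deriv (fun z => h z + ε * g z) z = deriv h z * (1 + ε * dil h g z) ∧
    preSch (fun z => h z + ε * g z) z =
      preSch h z + ε * deriv (dil h g) z / (1 + ε * dil h g z) ∧
    schw (fun z => h z + ε * g z) z =
      schw h z + ε * deriv (deriv (dil h g)) z / (1 + ε * dil h g z)
        - preSch h z * (ε * deriv (dil h g) z / (1 + ε * dil h g z))
        - 3 / 2 * (ε * deriv (dil h g) z / (1 + ε * dil h g z)) ^ 2 := by
  have e1 : ∀ x ∈ ball (0 : ℂ) 1,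
      deriv (fun z => h z + ε * g z) x = deriv h x * (1 + ε * dil h g x) := by
    intro x hx
    rw [show deriv (fun z => h z + ε * g z) x = _ from
      ((diff_hasDerivAt H.hd hx).add ((diff_hasDerivAt H.gd hx).const_mul ε)).deriv, dil]
    have := H.h0 x hx
    field_simp
  have e2 : ∀ x ∈ ball (0 : ℂ) 1, preSch (fun z => h z + ε * g z) x =
      preSch h x + ε * deriv (dil h g) x / (1 + ε * dil h g x) := by
    intro x hx
    have hev : deriv (fun z => h z + ε * g z) =ᶠ[nhds x]
        fun x => deriv h x * (1 + ε * dil h g x) := by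
      filter_upwards [isOpen_ball.mem_nhds hx] with y hy using e1 y hy
    have hd2 := (diff_hasDerivAt (deriv_diff H.hd) hx).mul
      (((diff_hasDerivAt H.wd hx).const_mul ε).const_add 1)
    rw [preSch, hev.deriv_eq, e1 x hx, preSch]
    have h1 := H.h0 x hx
    have h2 := hε x hx
    rw [show deriv (fun x => deriv h x * (1 + ε * dil h g x)) x = _ from hd2.deriv]
    field_simp
  refine ⟨e1 z hz, e2 z hz, ?_⟩
  have hev : preSch (fun z => h z + ε * g z) =ᶠ[nhds z]
      fun x => preSch h x + ε * deriv (dil h g) x / (1 + ε * dil h g x) := by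
    filter_upwards [isOpen_ball.mem_nhds hz] with y hy using e2 y hy
  have h2 := hε z hz
  have hd3 := (diff_hasDerivAt H.pd hz).add
    (((diff_hasDerivAt (deriv_diff H.wd) hz).const_mul ε).div
      (((diff_hasDerivAt H.wd hz).const_mul ε).const_add 1) h2)
  rw [schw, hev.deriv_eq, e2 z hz, schw]
  rw [show deriv (fun x => preSch h x + ε * deriv (dil h g) x / (1 + ε * dil h g x)) z = _
    from hd3.deriv]
  field_simp
  ring

lemma tau_eq (H : Hyp h g d c) (hd : d < 1) {ε : ℂ}
    (hε : ∀ z ∈ ball (0 : ℂ) 1, 1 + ε * dil h g z ≠ 0)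
    {z : ℂ} (hz : z ∈ ball (0 : ℂ) 1) :
    tau (fun z => h z + ε * g z) (dil h g) ε z = preSchH h g z := by
  rw [tau, (H.eps_data hε hz).2.1, sig, preSchH]
  have h1 := hε z hz
  have h2 : ((1 - ‖dil h g z‖ ^ 2 : ℝ) : ℂ) ≠ 0 := by
    have := H.dil_le z hz
    have : 0 < 1 - ‖dil h g z‖ ^ 2 := by nlinarith [norm_nonneg (dil h g z)]
    exact_mod_cast this.ne'
  rw [normSq_cast (dil h g z)] at h2 ⊢
  field_simp
  ring

lemma low_eps (H : Hyp h g d c) (hd : d < 1) {ε : ℂ} (hε : ‖ε‖ ≤ 2 / (1 + d))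
    {z : ℂ} (hz : z ∈ ball (0 : ℂ) 1) : (1 - d) / 2 ≤ ‖1 + ε * dil h g z‖ := by
  have hd0 := H.d_nonneg
  have h1 : ‖ε * dil h g z‖ ≤ 2 / (1 + d) * d := by
    rw [norm_mul]
    exact mul_le_mul hε (H.dil_le z hz) (norm_nonneg _) (by positivity)
  have h2 : 1 - ‖ε * dil h g z‖ ≤ ‖1 + ε * dil h g z‖ := by
    have := norm_sub_norm_le (1 : ℂ) (-(ε * dil h g z))
    simpa using this
  have h3 : 2 / (1 + d) * d ≤ (1 + d) / 2 := by
    rw [div_mul_eq_mul_div, div_le_div_iff₀ (by linarith) (by norm_num)]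
    nlinarith [sq_nonneg (1 - d)]
  linarith

set_option maxHeartbeats 800000 in
/-- For a small Schwarzian bound all the maps `h + ε g`, `|ε| ≤ 2/(1+d)`, are admissible data for
the injectivity argument, with one and the same `τ = P_f`. -/
lemma exists_nice (d : ℝ) (hd0 : 0 ≤ d) (hd : d < 1) {δ : ℝ} (hδ : 0 < δ) (hδ1 : δ ≤ 1) :
    ∃ c : ℝ, 0 < c ∧ c ≤ 1 ∧ ∀ h g : ℂ → ℂ, Hyp h g d c → ∀ ε : ℂ, ‖ε‖ ≤ 2 / (1 + d) →
      Nice (fun z => h z + ε * g z) (dil h g) ε (((1 - d) / 2) ^ 2) δ := by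
  obtain ⟨C, hC1, hC⟩ := exists_bound d hd
  set m := (1 - d) / 2 with hm
  have hm0 : 0 < m := by rw [hm]; linarith
  have hm1 : m ≤ 1 := by rw [hm]; linarith
  set η := min 1 (min (δ * m ^ 2 / (60 * C)) (δ * (m ^ 2) ^ 2 / 98)) with hη
  have hη0 : 0 < η := by
    rw [hη]; refine lt_min one_pos (lt_min ?_ ?_) <;> positivity
  have hη1 : η ≤ 1 := min_le_left _ _
  have hη2 : η ≤ δ * m ^ 2 / (60 * C) := (min_le_right _ _).trans (min_le_left _ _)
  have hη3 : η ≤ δ * (m ^ 2) ^ 2 / 98 := (min_le_right _ _).trans (min_le_right _ _)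
  obtain ⟨c₀, hc₀, hsmall⟩ := dil_small d hd hη0
  refine ⟨min c₀ η, lt_min hc₀ hη0, (min_le_right _ _).trans hη1, ?_⟩
  intro h g H ε hε
  have Hc : Hyp h g d c₀ := H.mono (min_le_left _ _)
  have hw := hsmall h g Hc
  have hP := hC h g _ ((min_le_right _ _).trans hη1) H
  have low := fun z hz => H.low_eps hd hε (z := z) hz
  have hne : ∀ z ∈ ball (0 : ℂ) 1, 1 + ε * dil h g z ≠ 0 := fun z hz h0 => by
    have := low z hz
    rw [h0, norm_zero] at this; linarith
  have hε2 : ‖ε‖ ≤ 2 := hε.trans (div_le_self (by norm_num) (by linarith))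
  have h1w : ∀ z ∈ ball (0 : ℂ) 1, m ≤ 1 - ‖dil h g z‖ ^ 2 := by
    intro z hz
    have := H.dil_le z hz
    have := norm_nonneg (dil h g z)
    nlinarith
  refine ⟨H.hd.add (H.gd.const_mul ε), H.wd, fun z hz => ?_, by positivity,
    pow_le_one₀ hm0.le hm1, hδ, hδ1, fun z hz => (H.dil_le z hz).trans_lt hd, hε2,
    fun z hz => ?_, fun z hz => (hw z hz).trans hη3, fun z hz => ?_⟩
  · rw [(H.eps_data hne hz).1]
    exact mul_ne_zero (H.h0 z hz) (hne z hz)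
  · rw [pow_two]
    exact mul_le_mul (h1w z hz) (low z hz) hm0.le (hm0.le.trans (h1w z hz))
  · rw [(H.eps_data hne hz).2.2]
    have hz1 : ‖z‖ < 1 := by simpa using hz
    set s := 1 - ‖z‖ ^ 2 with hs
    have hs0 : 0 < s := by rw [hs]; nlinarith [norm_nonneg z]
    set W := dil h g z with hW
    set W1 := deriv (dil h g) z with hW1
    set W2 := deriv (deriv (dil h g)) z with hW2
    set P := preSch h z with hPd
    set A := 1 - ‖W‖ ^ 2 with hA
    have hAm : m ≤ A := h1w z hz
    have hA1 : A ≤ 1 := by rw [hA]; nlinarith [norm_nonneg W]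
    have b1 : s * ‖W1‖ ≤ η := hw z hz
    have b2 : s ^ 2 * ‖W2‖ ≤ 16 * η := deriv_weighted (deriv_diff H.wd) hw hz
    have bP : s * ‖P‖ ≤ C := (hP z hz).2
    have bW : ‖W‖ ≤ 1 := (H.dil_le z hz).trans hd.le
    have bS : s ^ 2 * ‖schwH h g z‖ ≤ η := (H.schw_le z hz).trans (min_le_right _ _)
    have lo : m ≤ ‖1 + ε * W‖ := low z hz
    have hSeq := schwH_eq H.hd H.gd H.h0 hz ((H.dil_le z hz).trans_lt hd)
    -- the Schwarzian of `h`
    have t1 : s ^ 2 * ‖schw h z‖ ≤ (19 + C) * η / m ^ 2 := by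
      have e : ((A : ℝ) : ℂ) ^ 2 * schw h z = (A : ℂ) ^ 2 * schwH h g z
          - (starRingEnd ℂ) W * (A : ℂ) * (W1 * P - W2) + 3 / 2 * (starRingEnd ℂ) W ^ 2 * W1 ^ 2 := by
        rw [hSeq]; ring
      have e' : A ^ 2 * ‖schw h z‖ ≤ ‖schwH h g z‖ + (‖W1‖ * ‖P‖ + ‖W2‖) + 3 / 2 * ‖W1‖ ^ 2 := by
        have hn : A ^ 2 * ‖schw h z‖ = ‖((A : ℝ) : ℂ) ^ 2 * schw h z‖ := by
          rw [norm_mul, norm_pow, Complex.norm_real, Real.norm_of_nonneg (hm0.le.trans hAm)]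
        rw [hn, e]
        refine (norm_add_le _ _).trans (add_le_add ((norm_sub_le _ _).trans (add_le_add ?_ ?_)) ?_)
        · rw [norm_mul, norm_pow, Complex.norm_real, Real.norm_of_nonneg (hm0.le.trans hAm)]
          exact mul_le_of_le_one_left (norm_nonneg _) (pow_le_one₀ (hm0.le.trans hAm) hA1)
        · rw [norm_mul, norm_mul, RCLike.norm_conj, Complex.norm_real,
            Real.norm_of_nonneg (hm0.le.trans hAm)]
          refine (mul_le_of_le_one_left (norm_nonneg _)
            (mul_le_one₀ bW (hm0.le.trans hAm) hA1)).trans ?_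
          refine (norm_sub_le _ _).trans ?_
          rw [norm_mul]
        · rw [norm_mul, norm_mul, norm_pow, norm_pow, RCLike.norm_conj]
          have : ‖(3 / 2 : ℂ)‖ = 3 / 2 := by norm_num
          rw [this]
          have : ‖W‖ ^ 2 ≤ 1 := pow_le_one₀ (norm_nonneg _) bW
          nlinarith [sq_nonneg ‖W1‖]
      have e2 : A ^ 2 * (s ^ 2 * ‖schw h z‖) ≤ (19 + C) * η := by
        have k1 : s ^ 2 * (A ^ 2 * ‖schw h z‖) ≤ s ^ 2 *
            (‖schwH h g z‖ + (‖W1‖ * ‖P‖ + ‖W2‖) + 3 / 2 * ‖W1‖ ^ 2) := by gcongr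
        have k2 : s * ‖W1‖ * (s * ‖P‖) ≤ η * C := by gcongr
        have k3 : (s * ‖W1‖) ^ 2 ≤ η * 1 := by
          rw [pow_two]; gcongr; linarith
        linarith
      rw [le_div_iff₀ (by positivity)]
      have : m ^ 2 ≤ A ^ 2 := by gcongr
      have : 0 ≤ s ^ 2 * ‖schw h z‖ := by positivity
      nlinarith
    set v := ε * W1 / (1 + ε * W) with hv
    have bv : s * ‖v‖ ≤ 2 * η / m := by
      rw [hv, norm_div (ε * W1) (1 + ε * W), norm_mul ε W1, ← mul_div_assoc]
      refine div_le_div₀ (by positivity) ?_ hm0 lo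
      have : ‖ε‖ * (s * ‖W1‖) ≤ 2 * η := by gcongr
      linarith
    have t2 : s ^ 2 * ‖ε * W2 / (1 + ε * W)‖ ≤ 32 * η / m := by
      rw [norm_div (ε * W2) (1 + ε * W), norm_mul ε W2, ← mul_div_assoc]
      refine div_le_div₀ (by positivity) ?_ hm0 lo
      have : s ^ 2 * ‖W2‖ * ‖ε‖ ≤ 16 * η * 2 := by gcongr
      linarith
    have t3 : s ^ 2 * ‖P * v‖ ≤ C * (2 * η / m) := by
      rw [norm_mul]
      have : (s * ‖P‖) * (s * ‖v‖) ≤ C * (2 * η / m) := by gcongr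
      linarith
    have t4 : s ^ 2 * ‖3 / 2 * v ^ 2‖ ≤ 6 * η / m ^ 2 := by
      rw [norm_mul, norm_pow]
      have h32 : ‖(3 / 2 : ℂ)‖ = 3 / 2 := by norm_num
      rw [h32]
      have k : (s * ‖v‖) ^ 2 ≤ (2 * η / m) ^ 2 := by gcongr
      have k2 : 3 / 2 * (2 * η / m) ^ 2 = 6 * (η * η) / m ^ 2 := by field_simp; ring
      have k3 : 6 * (η * η) / m ^ 2 ≤ 6 * (η * 1) / m ^ 2 := by gcongr
      calc _ = 3 / 2 * (s * ‖v‖) ^ 2 := by ring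
        _ ≤ 3 / 2 * (2 * η / m) ^ 2 := by gcongr
        _ ≤ _ := by rw [k2]; simpa using k3
    have mm : 1 / m ≤ 1 / m ^ 2 := by
      apply one_div_le_one_div_of_le (by positivity); nlinarith
    calc s ^ 2 * ‖schw h z + ε * W2 / (1 + ε * W) - P * v - 3 / 2 * v ^ 2‖
        ≤ s ^ 2 * (‖schw h z‖ + ‖ε * W2 / (1 + ε * W)‖ + ‖P * v‖ + ‖3 / 2 * v ^ 2‖) := by
          gcongr
          refine (norm_sub_le _ _).trans (add_le_add ((norm_sub_le _ _).trans
            (add_le_add (norm_add_le _ _) le_rfl)) le_rfl)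
      _ ≤ (19 + C) * η / m ^ 2 + 32 * η / m + C * (2 * η / m) + 6 * η / m ^ 2 := by
          linarith
      _ = ((25 + C) * η) * (1 / m ^ 2) + ((32 + 2 * C) * η) * (1 / m) := by ring
      _ ≤ ((25 + C) * η) * (1 / m ^ 2) + ((32 + 2 * C) * η) * (1 / m ^ 2) := by gcongr
      _ = ((57 + 3 * C) * η) / m ^ 2 := by ring
      _ ≤ (60 * C * η) / m ^ 2 := by gcongr; nlinarith
      _ ≤ δ := by
          rw [div_le_iff₀ (by positivity)]
          rw [le_div_iff₀ (by positivity)] at hη2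
          linarith

end Hyp

/-! ### The normalised map at the centre -/

/-- Growth estimate along a radius: a strict differential inequality at the first contact of
`‖f‖` with the barrier `B` keeps `‖f‖` below `B`. -/
lemma ray_fence {f f' : ℂ → ℂ} {B B' : ℝ → ℝ} {θ : ℂ} (hθ : ‖θ‖ = 1) {T : ℝ}
    (hf : ∀ t ∈ Set.Icc 0 T, HasDerivAt f (f' (t * θ)) (t * θ)) (h0 : ‖f 0‖ ≤ B 0)
    (hB : ∀ t ∈ Set.Icc 0 T, HasDerivAt B (B' t) t)
    (hb : ∀ t ∈ Set.Ico 0 T, ‖f (t * θ)‖ = B t → ‖f' (t * θ)‖ < B' t) :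
    ∀ t ∈ Set.Icc 0 T, ‖f (t * θ)‖ ≤ B t := by
  have hd : ∀ t ∈ Set.Icc 0 T, HasDerivAt (fun t : ℝ => f (t * θ)) (f' (t * θ) * θ) t := by
    intro t ht
    have h1 : HasDerivAt (fun x : ℂ => x * θ) θ (t : ℂ) := by
      simpa using (hasDerivAt_id (t : ℂ)).mul_const θ
    exact (HasDerivAt.comp (t : ℂ) (hf t ht) h1).comp_ofReal
  intro t ht
  refine image_norm_le_of_norm_deriv_right_lt_deriv_boundary' (f := fun t : ℝ => f (t * θ))
    (fun t ht => (hd t ht).continuousAt.continuousWithinAt)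
    (fun t ht => (hd t (Set.Ico_subset_Icc_self ht)).hasDerivWithinAt) (by simpa using h0)
    (fun t ht => (hB t ht).continuousAt.continuousWithinAt)
    (fun t ht => (hB t (Set.Ico_subset_Icc_self ht)).hasDerivWithinAt) ?_ ht
  intro x hx hxe
  rw [norm_mul, hθ, mul_one]
  exact hb x hx hxe

/-- `q` normalised by `q̂(0) = 0`, `q̂'(0) = 1`. -/
noncomputable def qhat (q : ℂ → ℂ) (z : ℂ) : ℂ := (q z - q 0) / deriv q 0

/-- `κ = τ(0)/2`, the coefficient of the Möbius map `x ↦ x / (1 + κ x)` that turns `q̂` into the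
normalised map `N`. -/
noncomputable def kap (q w : ℂ → ℂ) (ε : ℂ) : ℂ := tau q w ε 0 / 2

/-- The denominator `Y = 1 + κ q̂` of the normalising Möbius transformation. -/
noncomputable def Yf (q w : ℂ → ℂ) (ε : ℂ) (z : ℂ) : ℂ := 1 + kap q w ε * qhat q z

/-- The normalised map `N = q̂ / (1 + κ q̂)`, a Möbius image of `q`. -/
noncomputable def Nf (q w : ℂ → ℂ) (ε : ℂ) (z : ℂ) : ℂ := qhat q z / Yf q w ε z

/-- `p = Y'/Y - P_q/2 = -N''/(2N')`, a solution of the Riccati equation `p' = -S_q/2 - p²`. -/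
noncomputable def pf (q w : ℂ → ℂ) (ε : ℂ) (z : ℂ) : ℂ :=
  kap q w ε * (deriv q z / deriv q 0) / Yf q w ε z - preSch q z / 2

/-- The Ahlfors–Weill denominator `conj z - (1-|z|²) τ(z)/2`. -/
noncomputable def DD (q w : ℂ → ℂ) (ε : ℂ) (z : ℂ) : ℂ :=
  (starRingEnd ℂ) z - (1 / 2) * ((1 - ‖z‖ ^ 2 : ℝ) : ℂ) * tau q w ε z

/-- The Ahlfors–Weill denominator of the normalised map `N`. -/
noncomputable def DN (q w : ℂ → ℂ) (ε : ℂ) (z : ℂ) : ℂ :=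
  (starRingEnd ℂ) z + ((1 - ‖z‖ ^ 2 : ℝ) : ℂ) * (pf q w ε z - sig w ε z / 2)

namespace Nice

variable {q w : ℂ → ℂ} {ε : ℂ} {μ δ : ℝ}

lemma q00 (N : Nice q w ε μ δ) : deriv q 0 ≠ 0 := N.q0 0 (by simp)

lemma qhat_hasDerivAt (N : Nice q w ε μ δ) {z : ℂ} (hz : z ∈ ball (0 : ℂ) 1) :
    HasDerivAt (qhat q) (deriv q z / deriv q 0) z :=
  ((diff_hasDerivAt N.qd hz).sub_const _).div_const _

lemma Yf_hasDerivAt (N : Nice q w ε μ δ) {z : ℂ} (hz : z ∈ ball (0 : ℂ) 1) :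
    HasDerivAt (Yf q w ε) (kap q w ε * (deriv q z / deriv q 0)) z :=
  ((N.qhat_hasDerivAt hz).const_mul _).const_add 1

lemma Yf_zero : Yf q w ε 0 = 1 := by simp [Yf, qhat]

lemma pd (N : Nice q w ε μ δ) : DifferentiableOn ℂ (preSch q) (ball 0 1) := preSch_diff N.qd N.q0

lemma pf_hasDerivAt (N : Nice q w ε μ δ) {z : ℂ} (hz : z ∈ ball (0 : ℂ) 1)
    (hY : Yf q w ε z ≠ 0) :
    HasDerivAt (pf q w ε) (-(1 / 2) * schw q z - pf q w ε z ^ 2) z := by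
  have h1 := (((diff_hasDerivAt (deriv_diff N.qd) hz).div_const (deriv q 0)).const_mul
    (kap q w ε)).div (N.Yf_hasDerivAt hz) hY
  have h2 := h1.sub ((diff_hasDerivAt N.pd hz).div_const 2)
  refine h2.congr_deriv ?_
  have e : deriv (deriv q) z = preSch q z * deriv q z := by
    rw [preSch, div_mul_cancel₀ _ (N.q0 z hz)]
  rw [e, schw, pf]
  have := N.q00
  field_simp
  ring

lemma pf_zero (N : Nice q w ε μ δ) : pf q w ε 0 = sig w ε 0 / 2 := by
  rw [pf, Yf_zero, div_self N.q00, kap, tau]; ring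

lemma pf_deriv_le (N : Nice q w ε μ δ) {z : ℂ} (hz : ‖z‖ < 1)
    {A : ℝ} (hp : ‖pf q w ε z‖ ≤ A / (1 - ‖z‖)) :
    ‖-(1 / 2) * schw q z - pf q w ε z ^ 2‖ ≤ (δ / 2 + A ^ 2) / (1 - ‖z‖) ^ 2 := by
  have h1 : 0 < 1 - ‖z‖ := by linarith
  have h0 := norm_nonneg z
  have hS := N.sq z (by simpa using hz)
  refine (norm_sub_le _ _).trans ?_
  rw [norm_mul, norm_pow, norm_neg, add_div]
  have e : ‖(1 / 2 : ℂ)‖ = 1 / 2 := by norm_num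
  rw [e]
  refine add_le_add ?_ ?_
  · rw [le_div_iff₀ (by positivity)]
    have : (1 - ‖z‖) ^ 2 ≤ (1 - ‖z‖ ^ 2) ^ 2 := by
      have : 1 - ‖z‖ ≤ 1 - ‖z‖ ^ 2 := by nlinarith
      gcongr
    nlinarith [norm_nonneg (schw q z)]
  · rw [← div_pow]; gcongr

lemma B_hasDerivAt {A t : ℝ} (ht : t < 1) :
    HasDerivAt (fun t : ℝ => A / (1 - t)) (A / (1 - t) ^ 2) t := by
  have h1 : (1 - t) ≠ 0 := by linarith
  have := ((hasDerivAt_const t A).div ((hasDerivAt_id t).const_sub 1) h1)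
  refine this.congr_deriv ?_
  simp

/-- The Riccati barrier, as long as `Y` has no zero on the radius. -/
lemma pf_ray (N : Nice q w ε μ δ) (hδ : δ ≤ 1 / 1000) {θ : ℂ} (hθ : ‖θ‖ = 1) {T : ℝ}
    (hT1 : T < 1) (hY : ∀ t ∈ Set.Icc 0 T, Yf q w ε (t * θ) ≠ 0) :
    ∀ t ∈ Set.Icc 0 T, ‖pf q w ε (t * θ)‖ ≤ 2 * δ / (1 - t) := by
  have hn : ∀ t ∈ Set.Icc 0 T, ‖(t : ℂ) * θ‖ = t := fun t ht => by
    rw [norm_mul, hθ, mul_one, Complex.norm_real, Real.norm_of_nonneg ht.1]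
  have hδ0 := N.hδ
  refine ray_fence (f' := fun z => -(1 / 2) * schw q z - pf q w ε z ^ 2)
    (B' := fun t => 2 * δ / (1 - t) ^ 2) hθ ?_ ?_ ?_ ?_
  · intro t ht
    exact N.pf_hasDerivAt (by simpa [hθ, abs_of_nonneg ht.1] using ht.2.trans_lt hT1) (hY t ht)
  · have := N.sig_le (z := 0) (by simp)
    simp only [norm_zero] at this
    rw [N.pf_zero, norm_div]
    norm_num
    linarith
  · exact fun t ht => B_hasDerivAt (ht.2.trans_lt hT1)
  · intro t ht he
    have hn' := hn t (Set.Ico_subset_Icc_self ht)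
    have ht1 : t < 1 := ht.2.trans hT1
    have := N.pf_deriv_le (z := t * θ) (by rw [hn']; exact ht1) (A := 2 * δ) (by rw [hn', he])
    rw [hn'] at this
    refine this.trans_lt ?_
    have : 0 < (1 - t) := by linarith
    apply div_lt_div_of_pos_right _ (by positivity)
    nlinarith

/-- `Y` has no zeros in the disk. At a first zero along a radius the barrier would force `Y'` to
vanish as well, which is impossible as `Y' = κ q'/q'(0)`. -/
lemma Yf_ne (N : Nice q w ε μ δ) (hδ : δ ≤ 1 / 1000) {z : ℂ} (hz : z ∈ ball (0 : ℂ) 1) :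
    Yf q w ε z ≠ 0 := by
  intro hz0
  have hz1 : ‖z‖ < 1 := by simpa using hz
  by_cases hzz : z = 0
  · rw [hzz, Yf_zero] at hz0; exact one_ne_zero hz0
  have hzp : 0 < ‖z‖ := norm_pos_iff.2 hzz
  obtain ⟨θ, hθ, hzθ⟩ : ∃ θ : ℂ, ‖θ‖ = 1 ∧ (‖z‖ : ℂ) * θ = z := by
    refine ⟨z / ‖z‖, by simp [hzp.ne'], ?_⟩
    have : (‖z‖ : ℂ) ≠ 0 := by exact_mod_cast hzp.ne'
    field_simp
  have hmem : ∀ t ∈ Set.Icc 0 ‖z‖, (t : ℂ) * θ ∈ ball (0 : ℂ) 1 := fun t ht => by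
    simpa [hθ, abs_of_nonneg ht.1] using ht.2.trans_lt hz1
  have hcm : Continuous (fun t : ℝ => (t : ℂ) * θ) := by fun_prop
  have hcY : ContinuousOn (fun t : ℝ => Yf q w ε (t * θ)) (Set.Icc 0 ‖z‖) := fun t ht =>
    (ContinuousAt.comp (f := fun t : ℝ => (t : ℂ) * θ) (N.Yf_hasDerivAt (hmem t ht)).continuousAt
      hcm.continuousAt).continuousWithinAt
  set Z := {t : ℝ | t ∈ Set.Icc 0 ‖z‖ ∧ Yf q w ε (t * θ) = 0} with hZ
  have hZc : IsClosed Z := by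
    have := hcY.preimage_isClosed_of_isClosed isClosed_Icc (isClosed_singleton (x := (0 : ℂ)))
    exact this
  have hZn : Z.Nonempty := ⟨‖z‖, ⟨hzp.le, le_rfl⟩, by rw [hzθ]; exact hz0⟩
  have hZb : BddBelow Z := ⟨0, fun t ht => ht.1.1⟩
  have ht0 := hZc.csInf_mem hZn hZb
  set t₀ := sInf Z with ht₀
  have hlt : ∀ t, 0 ≤ t → t < t₀ → Yf q w ε (t * θ) ≠ 0 := by
    intro t h0 h1 h2
    exact absurd (csInf_le hZb (show t ∈ Z from ⟨⟨h0, h1.le.trans ht0.1.2⟩, h2⟩)) (not_le.2 h1)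
  have ht0p : 0 < t₀ := by
    rcases ht0.1.1.lt_or_eq with h | h
    · exact h
    · exfalso
      have := ht0.2
      rw [← h] at this
      simp [Yf_zero] at this
  have ht1 : t₀ < 1 := ht0.1.2.trans_lt hz1
  -- the barrier, multiplied by `Y`, survives up to the first zero
  have hU : ∀ t ∈ Set.Ico 0 t₀,
      ‖kap q w ε * (deriv q (t * θ) / deriv q 0) - preSch q (t * θ) / 2 * Yf q w ε (t * θ)‖
        ≤ 2 * δ / (1 - t) * ‖Yf q w ε (t * θ)‖ := by
    intro t ht
    have := N.pf_ray hδ hθ (ht.2.trans ht1) (fun x hx => hlt x hx.1 (hx.2.trans_lt ht.2)) t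
      ⟨ht.1, le_rfl⟩
    have hy := hlt t ht.1 ht.2
    have e : kap q w ε * (deriv q (t * θ) / deriv q 0) - preSch q (t * θ) / 2 * Yf q w ε (t * θ)
        = pf q w ε (t * θ) * Yf q w ε (t * θ) := by
      rw [pf, sub_mul, div_mul_cancel₀ _ hy]
    rw [e, norm_mul]
    gcongr
  have hm0 := hmem t₀ ht0.1
  have hcl : t₀ ∈ closure (Set.Ico 0 t₀) := by
    rw [closure_Ico ht0p.ne]; exact ⟨ht0p.le, le_rfl⟩
  have hcq : ContinuousAt (fun t : ℝ => deriv q (t * θ)) t₀ :=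
    ContinuousAt.comp (f := fun t : ℝ => (t : ℂ) * θ)
      (diff_hasDerivAt (deriv_diff N.qd) hm0).continuousAt hcm.continuousAt
  have hcp : ContinuousAt (fun t : ℝ => preSch q (t * θ)) t₀ :=
    ContinuousAt.comp (f := fun t : ℝ => (t : ℂ) * θ)
      (diff_hasDerivAt N.pd hm0).continuousAt hcm.continuousAt
  have hcY0 : ContinuousAt (fun t : ℝ => Yf q w ε (t * θ)) t₀ :=
    ContinuousAt.comp (f := fun t : ℝ => (t : ℂ) * θ)
      (N.Yf_hasDerivAt hm0).continuousAt hcm.continuousAt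
  have hlim : ‖kap q w ε * (deriv q (t₀ * θ) / deriv q 0)
      - preSch q (t₀ * θ) / 2 * Yf q w ε (t₀ * θ)‖ ≤ 2 * δ / (1 - t₀) * ‖Yf q w ε (t₀ * θ)‖ := by
    refine ContinuousWithinAt.closure_le hcl ?_ ?_ hU
    · exact (((hcq.div_const _).const_mul _).sub ((hcp.div_const _).mul hcY0)).norm.continuousWithinAt
    · refine ContinuousAt.continuousWithinAt (ContinuousAt.mul ?_ hcY0.norm)
      exact (B_hasDerivAt ht1).continuousAt
  rw [ht0.2] at hlim
  have hk : kap q w ε * (deriv q (t₀ * θ) / deriv q 0) = 0 := by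
    rw [mul_zero, sub_zero, norm_zero, mul_zero] at hlim
    exact norm_le_zero_iff.1 hlim
  have hk0 : kap q w ε = 0 := by
    rcases mul_eq_zero.1 hk with h | h
    · exact h
    · exact absurd h (div_ne_zero (N.q0 _ hm0) N.q00)
  have := ht0.2
  rw [Yf, hk0] at this
  simp at this

lemma exists_ray {z : ℂ} (hz : z ≠ 0) : ∃ θ : ℂ, ‖θ‖ = 1 ∧ (‖z‖ : ℂ) * θ = z := by
  have hzp : 0 < ‖z‖ := norm_pos_iff.2 hz
  refine ⟨z / ‖z‖, by simp [hzp.ne'], ?_⟩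
  have : (‖z‖ : ℂ) ≠ 0 := by exact_mod_cast hzp.ne'
  field_simp

lemma mem_ray {θ : ℂ} (hθ : ‖θ‖ = 1) {t : ℝ} (h0 : 0 ≤ t) (h1 : t < 1) :
    (t : ℂ) * θ ∈ ball (0 : ℂ) 1 := by
  simpa [hθ, abs_of_nonneg h0] using h1

lemma norm_ray {θ : ℂ} (hθ : ‖θ‖ = 1) {t : ℝ} (h0 : 0 ≤ t) : ‖(t : ℂ) * θ‖ = t := by
  simp [hθ, abs_of_nonneg h0]

lemma pf_le (N : Nice q w ε μ δ) (hδ : δ ≤ 1 / 1000) {z : ℂ} (hz : ‖z‖ < 1) :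
    ‖pf q w ε z‖ ≤ 2 * δ / (1 - ‖z‖) := by
  by_cases hzz : z = 0
  · have := N.sig_le (z := 0) (by simp)
    have hδ0 := N.hδ
    simp only [norm_zero] at this
    rw [hzz, N.pf_zero, norm_div]
    norm_num
    linarith
  obtain ⟨θ, hθ, hzθ⟩ := exists_ray hzz
  have := N.pf_ray hδ hθ hz (fun t ht => N.Yf_ne hδ (mem_ray hθ ht.1 (ht.2.trans_lt hz)))
    ‖z‖ ⟨norm_nonneg _, le_rfl⟩
  rwa [hzθ] at this

/-- The normalised Ahlfors–Weill denominator is a small perturbation of `conj z`. -/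
lemma DN_sub_le (N : Nice q w ε μ δ) (hδ : δ ≤ 1 / 1000) {z : ℂ} (hz : ‖z‖ < 1) :
    ‖DN q w ε z - (starRingEnd ℂ) z‖ ≤ 20 * δ * ‖z‖ := by
  have hδ0 := N.hδ
  have h0 := norm_nonneg z
  have hs : 0 < 1 - ‖z‖ ^ 2 := by nlinarith
  rw [DN, add_sub_cancel_left, norm_mul, Complex.norm_real, Real.norm_of_nonneg hs.le]
  rcases le_or_gt ‖z‖ (1 / 4) with h4 | h4
  · have hp : ‖pf q w ε z - pf q w ε 0‖ ≤ δ * ‖z‖ := by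
      have := (convex_closedBall (0 : ℂ) (1 / 4)).norm_image_sub_le_of_norm_hasDerivWithin_le
        (f := pf q w ε) (f' := fun z => -(1 / 2) * schw q z - pf q w ε z ^ 2) (C := δ)
        (x := 0) (y := z)
        (fun x hx => by
          have hx1 : ‖x‖ ≤ 1 / 4 := by simpa using hx
          have hxb : x ∈ ball (0 : ℂ) 1 := by simp; linarith
          exact (N.pf_hasDerivAt hxb (N.Yf_ne hδ hxb)).hasDerivWithinAt)
        (fun x hx => by
          have hx1 : ‖x‖ ≤ 1 / 4 := by simpa using hx
          refine (N.pf_deriv_le (by linarith) (N.pf_le hδ (by linarith))).trans ?_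
          have h16 : (9 / 16 : ℝ) ≤ (1 - ‖x‖) ^ 2 := by nlinarith [norm_nonneg x]
          rw [div_le_iff₀ (by linarith)]
          nlinarith) (by simp) (by simpa using h4)
      simpa using this
    have e : pf q w ε z - sig w ε z / 2 = (pf q w ε z - pf q w ε 0)
        - (sig w ε z - sig w ε 0) / 2 := by rw [N.pf_zero]; ring
    have h2 : ‖pf q w ε z - sig w ε z / 2‖ ≤ δ * ‖z‖ + δ * ‖z‖ / 2 := by
      rw [e]
      refine (norm_sub_le _ _).trans (add_le_add hp ?_)
      rw [norm_div]
      have := N.sig_lip h4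
      norm_num; linarith
    have : 0 ≤ δ * ‖z‖ := by positivity
    have h3 : 1 - ‖z‖ ^ 2 ≤ 1 := by nlinarith
    have := mul_le_mul h3 h2 (norm_nonneg _) zero_le_one
    linarith
  · have h1 : (1 - ‖z‖ ^ 2) * ‖pf q w ε z‖ ≤ 4 * δ := by
      have := N.pf_le hδ hz
      rw [le_div_iff₀ (by linarith)] at this
      have e : (1 - ‖z‖ ^ 2) * ‖pf q w ε z‖ = (1 + ‖z‖) * (‖pf q w ε z‖ * (1 - ‖z‖)) := by ring
      rw [e]
      have := mul_le_mul (show 1 + ‖z‖ ≤ 2 by linarith) this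
        (mul_nonneg (norm_nonneg _) (by linarith)) (by norm_num)
      linarith
    have h2 := N.sig_le (z := z) (by simpa using hz)
    have h3 : ‖pf q w ε z - sig w ε z / 2‖ ≤ ‖pf q w ε z‖ + ‖sig w ε z‖ / 2 := by
      refine (norm_sub_le _ _).trans ?_
      rw [norm_div]; norm_num
    have := mul_le_mul_of_nonneg_left h3 hs.le
    nlinarith

lemma DN_ge (N : Nice q w ε μ δ) (hδ : δ ≤ 1 / 1000) {z : ℂ} (hz : ‖z‖ < 1) :
    ‖z‖ / 2 ≤ ‖DN q w ε z‖ := by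
  have h1 := N.DN_sub_le hδ hz
  have h2 : ‖z‖ - ‖DN q w ε z - (starRingEnd ℂ) z‖ ≤ ‖DN q w ε z‖ := by
    have := norm_sub_norm_le ((starRingEnd ℂ) z) ((starRingEnd ℂ) z - DN q w ε z)
    rw [RCLike.norm_conj, sub_sub_cancel, norm_sub_rev] at this
    exact this
  have := norm_nonneg z
  nlinarith

lemma DN_eq (z : ℂ) : DN q w ε z = DD q w ε z +
    ((1 - ‖z‖ ^ 2 : ℝ) : ℂ) * (kap q w ε * (deriv q z / deriv q 0) / Yf q w ε z) := by
  rw [DN, DD, pf, tau]; ring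

/-- Derivative of the normalised map. -/
noncomputable def _root_.N1 (q w : ℂ → ℂ) (ε : ℂ) (z : ℂ) : ℂ :=
  deriv q z / deriv q 0 / Yf q w ε z ^ 2

lemma Nf_hasDerivAt (N : Nice q w ε μ δ) (hδ : δ ≤ 1 / 1000) {z : ℂ} (hz : z ∈ ball (0 : ℂ) 1) :
    HasDerivAt (Nf q w ε) (N1 q w ε z) z := by
  have hY := N.Yf_ne hδ hz
  refine ((N.qhat_hasDerivAt hz).div (N.Yf_hasDerivAt hz) hY).congr_deriv ?_
  rw [N1]
  congr 1
  rw [Yf]; ring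

lemma N1_hasDerivAt (N : Nice q w ε μ δ) (hδ : δ ≤ 1 / 1000) {z : ℂ} (hz : z ∈ ball (0 : ℂ) 1) :
    HasDerivAt (N1 q w ε) (-2 * pf q w ε z * N1 q w ε z) z := by
  have hY := N.Yf_ne hδ hz
  refine (((diff_hasDerivAt (deriv_diff N.qd) hz).div_const (deriv q 0)).div
    ((N.Yf_hasDerivAt hz).pow 2) (pow_ne_zero 2 hY)).congr_deriv ?_
  have e : deriv (deriv q) z = preSch q z * deriv q z := by
    rw [preSch, div_mul_cancel₀ _ (N.q0 z hz)]
  rw [e, N1, pf]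
  have := N.q00
  simp only [Pi.pow_apply]
  field_simp
  push_cast
  ring

lemma N1_ne (N : Nice q w ε μ δ) (hδ : δ ≤ 1 / 1000) {z : ℂ} (hz : z ∈ ball (0 : ℂ) 1) :
    N1 q w ε z ≠ 0 :=
  div_ne_zero (div_ne_zero (N.q0 z hz) N.q00) (pow_ne_zero 2 (N.Yf_ne hδ hz))

lemma Nf_zero : Nf q w ε 0 = 0 := by simp [Nf, qhat]

lemma sqrt_fence {a t : ℝ} (ht : t < 1) :
    HasDerivAt (fun t : ℝ => a * (1 / √(1 - t) - 1)) (a / 2 * (1 / (√(1 - t) * (1 - t)))) t := by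
  have h1 : 0 < 1 - t := by linarith
  have hs := Real.sqrt_pos.2 h1
  have := (((hasDerivAt_const t (1 : ℝ)).div (((hasDerivAt_id t).const_sub 1).sqrt h1.ne')
    hs.ne').sub_const 1).const_mul a
  refine this.congr_deriv ?_
  have e : √(1 - t) ^ 2 = 1 - t := Real.sq_sqrt h1.le
  simp only [id]
  rw [e]
  field_simp
  ring

lemma sqrt_fence2 {a t : ℝ} (ht : t < 1) :
    HasDerivAt (fun t : ℝ => a * (2 - 2 * √(1 - t) - t)) (a * (1 / √(1 - t) - 1)) t := by
  have h1 : 0 < 1 - t := by linarith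
  have hs := Real.sqrt_pos.2 h1
  have := (((((hasDerivAt_id t).const_sub 1).sqrt h1.ne').const_mul 2).const_sub 2).sub
    (hasDerivAt_id t) |>.const_mul a
  refine this.congr_deriv ?_
  simp only [id]
  field_simp

lemma N1_sub_le (N : Nice q w ε μ δ) (hδ : δ ≤ 1 / 1000) {z : ℂ} (hz : ‖z‖ < 1) :
    ‖N1 q w ε z - 1‖ ≤ 16 * δ * (1 / √(1 - ‖z‖) - 1) := by
  have hδ0 := N.hδ
  have h00 : N1 q w ε 0 = 1 := by simp [N1, Yf_zero, N.q00]
  by_cases hzz : z = 0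
  · rw [hzz, h00]; simp
  obtain ⟨θ, hθ, hzθ⟩ := exists_ray hzz
  have := ray_fence (f := fun z => N1 q w ε z - 1) (f' := fun z => -2 * pf q w ε z * N1 q w ε z)
    (B := fun t : ℝ => (16 * δ) * (1 / √(1 - t) - 1))
    (B' := fun t : ℝ => (16 * δ) / 2 * (1 / (√(1 - t) * (1 - t)))) hθ (T := ‖z‖)
    (fun t ht => (N.N1_hasDerivAt hδ (mem_ray hθ ht.1 (ht.2.trans_lt hz))).sub_const 1)
    (by simp [h00]) (fun t ht => sqrt_fence (ht.2.trans_lt hz))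
    (fun t ht he => by
      have ht1 : 0 < 1 - t := by linarith [ht.2]
      have hs := Real.sqrt_pos.2 ht1
      have hs1 : √(1 - t) ≤ 1 := Real.sqrt_le_one.2 (by linarith [ht.1])
      have hp := N.pf_le hδ (z := t * θ) (by rw [norm_ray hθ ht.1]; linarith)
      rw [norm_ray hθ ht.1] at hp
      have hN : ‖N1 q w ε (t * θ)‖ ≤ 1 / √(1 - t) := by
        have h1 : ‖N1 q w ε (t * θ)‖ ≤ 1 + ‖N1 q w ε (t * θ) - 1‖ := by
          have := norm_add_le (1 : ℂ) (N1 q w ε (t * θ) - 1)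
          simpa using this
        rw [he] at h1
        have : 1 ≤ 1 / √(1 - t) := by rw [le_div_iff₀ hs]; linarith
        nlinarith
      rw [norm_mul, norm_mul]
      have h2 : ‖(-2 : ℂ)‖ = 2 := by simp
      rw [h2]
      calc 2 * ‖pf q w ε (t * θ)‖ * ‖N1 q w ε (t * θ)‖
          ≤ 2 * (2 * δ / (1 - t)) * (1 / √(1 - t)) := by gcongr
        _ = 4 * δ * (1 / (√(1 - t) * (1 - t))) := by field_simp; ring
        _ < (16 * δ) / 2 * (1 / (√(1 - t) * (1 - t))) := by
          apply mul_lt_mul_of_pos_right _ (by positivity); linarith)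
    ‖z‖ ⟨norm_nonneg _, le_rfl⟩
  simp only [hzθ] at this
  exact this

lemma N1_le (N : Nice q w ε μ δ) (hδ : δ ≤ 1 / 1000) {z : ℂ} (hz : ‖z‖ < 1) :
    ‖N1 q w ε z‖ ≤ 1 / √(1 - ‖z‖) := by
  have h1 : ‖N1 q w ε z‖ ≤ 1 + ‖N1 q w ε z - 1‖ := by
    have := norm_add_le (1 : ℂ) (N1 q w ε z - 1)
    simpa using this
  have h2 := N.N1_sub_le hδ hz
  have hs := Real.sqrt_pos.2 (show 0 < 1 - ‖z‖ by linarith)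
  have hs1 : √(1 - ‖z‖) ≤ 1 := Real.sqrt_le_one.2 (by linarith [norm_nonneg z])
  have : 1 ≤ 1 / √(1 - ‖z‖) := by rw [le_div_iff₀ hs]; linarith
  nlinarith [N.hδ]

lemma Nf_sub_le (N : Nice q w ε μ δ) (hδ : δ ≤ 1 / 1000) {z : ℂ} (hz : ‖z‖ < 1) :
    ‖Nf q w ε z - z‖ ≤ 32 * δ * ‖z‖ ^ 2 := by
  have hδ0 := N.hδ
  by_cases hzz : z = 0
  · rw [hzz, Nf_zero]; simp
  obtain ⟨θ, hθ, hzθ⟩ := exists_ray hzz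
  have key : ∀ η > (0 : ℝ), ‖Nf q w ε z - z‖
      ≤ (16 * δ) * (2 - 2 * √(1 - ‖z‖) - ‖z‖) + η * ‖z‖ := by
    intro η hη
    have := ray_fence (f := fun z => Nf q w ε z - z) (f' := fun z => N1 q w ε z - 1)
      (B := fun t : ℝ => (16 * δ) * (2 - 2 * √(1 - t) - t) + η * t)
      (B' := fun t : ℝ => (16 * δ) * (1 / √(1 - t) - 1) + η) hθ (T := ‖z‖)
      (fun t ht => (N.Nf_hasDerivAt hδ (mem_ray hθ ht.1 (ht.2.trans_lt hz))).sub (hasDerivAt_id _))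
      (by simp [Nf_zero]) (fun t ht => by
        have h2 : HasDerivAt (fun t : ℝ => η * t) η t := by
          simpa using (hasDerivAt_id t).const_mul η
        exact (sqrt_fence2 (ht.2.trans_lt hz)).add h2)
      (fun t ht he => by
        have := N.N1_sub_le hδ (z := t * θ) (by rw [norm_ray hθ ht.1]; linarith [ht.2])
        rw [norm_ray hθ ht.1] at this
        linarith)
      ‖z‖ ⟨norm_nonneg _, le_rfl⟩
    simp only [hzθ] at this
    exact this
  have h1 : ‖Nf q w ε z - z‖ ≤ (16 * δ) * (2 - 2 * √(1 - ‖z‖) - ‖z‖) := by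
    refine le_of_forall_pos_le_add fun η hη => (key η hη).trans ?_
    nlinarith [norm_nonneg z]
  refine h1.trans ?_
  have h3 : 0 ≤ 1 - ‖z‖ := by linarith
  have hsq := Real.sq_sqrt h3
  have hs0 := Real.sqrt_nonneg (1 - ‖z‖)
  set x := √(1 - ‖z‖)
  have hx1 : x ≤ 1 := by nlinarith [norm_nonneg z]
  have e : 2 - 2 * x - ‖z‖ = (1 - x) ^ 2 := by nlinarith
  have e2 : ‖z‖ = (1 - x) * (1 + x) := by nlinarith
  rw [e]
  have : (1 - x) ^ 2 ≤ ‖z‖ ^ 2 := by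
    have : 1 - x ≤ ‖z‖ := by rw [e2]; nlinarith
    gcongr
  nlinarith [sq_nonneg ‖z‖]

end Nice

/-! ### Injectivity at the centre -/

/-- The holomorphic Ahlfors–Weill extension value `q + (1-|z|²) q'/DD`. -/
noncomputable def EE (q w : ℂ → ℂ) (ε : ℂ) (z : ℂ) : ℂ :=
  q z + ((1 - ‖z‖ ^ 2 : ℝ) : ℂ) * deriv q z / DD q w ε z

namespace Nice

variable {q w : ℂ → ℂ} {ε : ℂ} {μ δ : ℝ}

lemma Nf_ne (N : Nice q w ε μ δ) (hδ : δ ≤ 1 / 1000) {z : ℂ} (hz : ‖z‖ < 1) (h0 : z ≠ 0) :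
    Nf q w ε z ≠ 0 := by
  intro h
  have h1 := N.Nf_sub_le hδ hz
  have hp := norm_pos_iff.2 h0
  rw [h, zero_sub, norm_neg] at h1
  have : 32 * δ * ‖z‖ ^ 2 ≤ (32 * (1 / 1000)) * (‖z‖ * 1) := by
    rw [pow_two]
    gcongr
  linarith

lemma inj_in_zero (N : Nice q w ε μ δ) (hδ : δ ≤ 1 / 1000) {z : ℂ} (hz : ‖z‖ < 1) (h0 : z ≠ 0) :
    q z ≠ q 0 := fun h => N.Nf_ne hδ hz h0 (by rw [Nf, qhat, h, sub_self, zero_div, zero_div])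

lemma DD_zero : DD q w ε 0 = -kap q w ε := by
  rw [DD, kap]; simp; ring

lemma EE_zero : EE q w ε 0 = q 0 - deriv q 0 / kap q w ε := by
  rw [EE, DD_zero]; simp; ring

lemma inj_mixed_zero (N : Nice q w ε μ δ) (hδ : δ ≤ 1 / 1000) {z : ℂ} (hz : ‖z‖ < 1)
    (hD : DD q w ε 0 ≠ 0) : q z ≠ EE q w ε 0 := by
  intro h
  rw [DD_zero, neg_ne_zero] at hD
  rw [EE_zero] at h
  refine N.Yf_ne hδ (z := z) (by simpa using hz) ?_
  have := N.q00
  rw [Yf, qhat, h]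
  field_simp
  ring

lemma inj_out_zero (N : Nice q w ε μ δ) (hδ : δ ≤ 1 / 1000) {z : ℂ} (hz : ‖z‖ < 1) (h0 : z ≠ 0)
    (hD : DD q w ε 0 ≠ 0) (hDz : DD q w ε z ≠ 0) : EE q w ε z ≠ EE q w ε 0 := by
  intro h
  have hDN : DN q w ε z ≠ 0 := by
    have := N.DN_ge hδ hz
    have hp := norm_pos_iff.2 h0
    exact norm_pos_iff.1 (by linarith)
  apply hDN
  have hY := N.Yf_ne hδ (z := z) (by simpa using hz)
  rw [DD_zero, neg_ne_zero] at hD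
  rw [EE_zero, EE] at h
  rw [DN_eq]
  have hq := N.q00
  have e : kap q w ε * qhat q z = -1 - kap q w ε *
      (((1 - ‖z‖ ^ 2 : ℝ) : ℂ) * deriv q z / DD q w ε z) / deriv q 0 := by
    have : q z - q 0 = -(deriv q 0 / kap q w ε)
      - ((1 - ‖z‖ ^ 2 : ℝ) : ℂ) * deriv q z / DD q w ε z := by linear_combination h
    rw [qhat, this]
    field_simp
  have hYe : Yf q w ε z = - kap q w ε *
      (((1 - ‖z‖ ^ 2 : ℝ) : ℂ) * deriv q z / DD q w ε z) / deriv q 0 := by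
    rw [Yf, e]; ring
  have hYe' : Yf q w ε z * DD q w ε z * deriv q 0 = - kap q w ε *
      (((1 - ‖z‖ ^ 2 : ℝ) : ℂ) * deriv q z) := by
    rw [hYe]; field_simp
  generalize ((1 - ‖z‖ ^ 2 : ℝ) : ℂ) = s at *
  field_simp
  linear_combination hYe'

end Nice

/-! ### Möbius invariance -/

/-- The disk automorphism `z ↦ (z + a)/(1 + conj a z)`. -/
noncomputable def mob (a z : ℂ) : ℂ := (z + a) / (1 + (starRingEnd ℂ) a * z)

lemma mob_den {a z : ℂ} (ha : ‖a‖ < 1) (hz : ‖z‖ ≤ 1) : 1 + (starRingEnd ℂ) a * z ≠ 0 := by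
  intro h
  have h1 : (starRingEnd ℂ) a * z = -1 := by linear_combination h
  have h2 : ‖(starRingEnd ℂ) a * z‖ = 1 := by rw [h1]; simp
  rw [norm_mul, RCLike.norm_conj] at h2
  nlinarith [norm_nonneg a, norm_nonneg z]

lemma mob_zero (a : ℂ) : mob a 0 = a := by simp [mob]

lemma conj_den_ne {a z : ℂ} (ha : ‖a‖ < 1) (hz : ‖z‖ ≤ 1) : 1 + a * (starRingEnd ℂ) z ≠ 0 := by
  have := (map_ne_zero (starRingEnd ℂ)).2 (mob_den ha hz)
  simpa using this

lemma one_sub_mob {a z : ℂ} (ha : ‖a‖ < 1) (hz : ‖z‖ ≤ 1) :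
    ((1 - ‖mob a z‖ ^ 2 : ℝ) : ℂ) = ((1 - ‖a‖ ^ 2 : ℝ) : ℂ) * ((1 - ‖z‖ ^ 2 : ℝ) : ℂ) /
      ((1 + (starRingEnd ℂ) a * z) * (1 + a * (starRingEnd ℂ) z)) := by
  have h1 := mob_den ha hz
  have h2 := conj_den_ne ha hz
  rw [normSq_cast, normSq_cast, normSq_cast, mob]
  simp only [map_div₀, map_add, map_mul, map_one, Complex.conj_conj]
  generalize (starRingEnd ℂ) a = a' at *
  generalize (starRingEnd ℂ) z = z' at *
  have h1' : 1 + z * a' ≠ 0 := by rwa [mul_comm]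
  field_simp
  ring

lemma one_sub_mob_real {a z : ℂ} (ha : ‖a‖ < 1) (hz : ‖z‖ ≤ 1) :
    1 - ‖mob a z‖ ^ 2 = (1 - ‖a‖ ^ 2) * (1 - ‖z‖ ^ 2) / ‖1 + (starRingEnd ℂ) a * z‖ ^ 2 := by
  have := one_sub_mob ha hz
  have e : (1 + (starRingEnd ℂ) a * z) * (1 + a * (starRingEnd ℂ) z)
      = ((‖1 + (starRingEnd ℂ) a * z‖ ^ 2 : ℝ) : ℂ) := by
    rw [← Complex.normSq_eq_norm_sq, ← Complex.mul_conj]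
    simp
  rw [e] at this
  exact_mod_cast this

lemma mob_mem {a z : ℂ} (ha : ‖a‖ < 1) (hz : ‖z‖ < 1) : ‖mob a z‖ < 1 := by
  have h := one_sub_mob_real ha hz.le
  have h1 := norm_pos_iff.2 (mob_den ha hz.le)
  have h2 : 0 < (1 - ‖a‖ ^ 2) * (1 - ‖z‖ ^ 2) / ‖1 + (starRingEnd ℂ) a * z‖ ^ 2 := by
    have : 0 < 1 - ‖a‖ ^ 2 := by nlinarith [norm_nonneg a]
    have : 0 < 1 - ‖z‖ ^ 2 := by nlinarith [norm_nonneg z]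
    positivity
  nlinarith [norm_nonneg (mob a z)]

lemma mob_mem_le {a z : ℂ} (ha : ‖a‖ < 1) (hz : ‖z‖ ≤ 1) : ‖mob a z‖ ≤ 1 := by
  have h := one_sub_mob_real ha hz
  have h1 := norm_pos_iff.2 (mob_den ha hz)
  have h2 : 0 ≤ (1 - ‖a‖ ^ 2) * (1 - ‖z‖ ^ 2) / ‖1 + (starRingEnd ℂ) a * z‖ ^ 2 := by
    have : 0 ≤ 1 - ‖a‖ ^ 2 := by nlinarith [norm_nonneg a]
    have : 0 ≤ 1 - ‖z‖ ^ 2 := by nlinarith [norm_nonneg z]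
    positivity
  nlinarith [norm_nonneg (mob a z)]

lemma mob_inv {a z : ℂ} (ha : ‖a‖ < 1) (hz : ‖z‖ ≤ 1) : mob a (mob (-a) z) = z := by
  have h1 := mob_den (a := -a) (by simpa using ha) hz
  have h2 := mob_den ha (mob_mem_le (a := -a) (by simpa using ha) hz)
  have h3 : 1 - (starRingEnd ℂ) a * a ≠ 0 := by
    have : (1 - ‖a‖ ^ 2 : ℝ) ≠ 0 := by nlinarith [norm_nonneg a]
    have h : ((1 - ‖a‖ ^ 2 : ℝ) : ℂ) ≠ 0 := by exact_mod_cast this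
    rw [normSq_cast] at h
    rwa [mul_comm]
  rw [mob, div_eq_iff h2]
  rw [mob]
  simp only [map_neg] at h1 ⊢
  have h1' : 1 - z * (starRingEnd ℂ) a ≠ 0 := by
    intro h
    exact h1 (by linear_combination h)
  have e : 1 + -(starRingEnd ℂ) a * z = 1 - z * (starRingEnd ℂ) a := by ring
  rw [e]
  generalize (starRingEnd ℂ) a = a' at *
  field_simp
  ring

lemma mob_hasDerivAt {a z : ℂ} (ha : ‖a‖ < 1) (hz : ‖z‖ ≤ 1) :
    HasDerivAt (mob a) (((1 - ‖a‖ ^ 2 : ℝ) : ℂ) / (1 + (starRingEnd ℂ) a * z) ^ 2) z := by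
  have h1 := mob_den ha hz
  have := ((hasDerivAt_id z).add_const a).div
    (((hasDerivAt_id z).const_mul ((starRingEnd ℂ) a)).const_add 1) h1
  refine this.congr_deriv ?_
  rw [normSq_cast]
  simp only [id]
  congr 1
  ring

section transfer

variable {q w : ℂ → ℂ} {ε : ℂ} {μ δ : ℝ} {a : ℂ}

/-- Derivative of `mob a`. -/
noncomputable def mob' (a z : ℂ) : ℂ := ((1 - ‖a‖ ^ 2 : ℝ) : ℂ) / (1 + (starRingEnd ℂ) a * z) ^ 2

lemma mob'_ne {z : ℂ} (ha : ‖a‖ < 1) (hz : ‖z‖ ≤ 1) : mob' a z ≠ 0 := by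
  have : (1 - ‖a‖ ^ 2 : ℝ) ≠ 0 := by nlinarith [norm_nonneg a]
  exact div_ne_zero (by exact_mod_cast this) (pow_ne_zero 2 (mob_den ha hz))

lemma mob'_hasDerivAt {z : ℂ} (ha : ‖a‖ < 1) (hz : ‖z‖ ≤ 1) :
    HasDerivAt (mob' a)
      (mob' a z * (-2 * (starRingEnd ℂ) a / (1 + (starRingEnd ℂ) a * z))) z := by
  have h1 := mob_den ha hz
  have := (hasDerivAt_const z ((1 - ‖a‖ ^ 2 : ℝ) : ℂ)).div
    ((((hasDerivAt_id z).const_mul ((starRingEnd ℂ) a)).const_add 1).pow 2) (pow_ne_zero 2 h1)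
  refine this.congr_deriv ?_
  rw [mob']
  generalize ((1 - ‖a‖ ^ 2 : ℝ) : ℂ) = A
  simp only [id, Pi.pow_apply]
  field_simp
  push_cast
  ring

lemma norm_mob' {z : ℂ} (ha : ‖a‖ < 1) (hz : ‖z‖ ≤ 1) :
    (1 - ‖z‖ ^ 2) * ‖mob' a z‖ = 1 - ‖mob a z‖ ^ 2 := by
  rw [one_sub_mob_real ha hz, mob', norm_div, norm_pow, Complex.norm_real,
    Real.norm_of_nonneg (by nlinarith [norm_nonneg a])]
  ring

lemma mob_ball {z : ℂ} (ha : ‖a‖ < 1) (hz : z ∈ ball (0 : ℂ) 1) : mob a z ∈ ball (0 : ℂ) 1 := by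
  simpa using mob_mem ha (by simpa using hz)

lemma comp_diff {f : ℂ → ℂ} (hf : DifferentiableOn ℂ f (ball 0 1)) (ha : ‖a‖ < 1) :
    DifferentiableOn ℂ (fun z => f (mob a z)) (ball 0 1) := fun z hz =>
  (((diff_hasDerivAt hf (mob_ball ha hz)).comp z
    (mob_hasDerivAt ha (by simpa using le_of_lt (mem_ball_zero_iff.1 hz)))).differentiableAt
    ).differentiableWithinAt

lemma comp_deriv {f : ℂ → ℂ} (hf : DifferentiableOn ℂ f (ball 0 1)) (ha : ‖a‖ < 1) {z : ℂ}
    (hz : z ∈ ball (0 : ℂ) 1) :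
    HasDerivAt (fun z => f (mob a z)) (deriv f (mob a z) * mob' a z) z :=
  (diff_hasDerivAt hf (mob_ball ha hz)).comp z
    (mob_hasDerivAt ha (le_of_lt (mem_ball_zero_iff.1 hz)))

lemma comp_preSch (hq : DifferentiableOn ℂ q (ball 0 1))
    (h0 : ∀ z ∈ ball (0 : ℂ) 1, deriv q z ≠ 0) (ha : ‖a‖ < 1) {z : ℂ}
    (hz : z ∈ ball (0 : ℂ) 1) :
    preSch (fun z => q (mob a z)) z = preSch q (mob a z) * mob' a z
      + -2 * (starRingEnd ℂ) a / (1 + (starRingEnd ℂ) a * z) := by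
  have hz' := le_of_lt (mem_ball_zero_iff.1 hz)
  have hev : deriv (fun z => q (mob a z)) =ᶠ[nhds z] fun z => deriv q (mob a z) * mob' a z := by
    filter_upwards [isOpen_ball.mem_nhds hz] with y hy using (comp_deriv hq ha hy).deriv
  have h2 := (comp_deriv (deriv_diff hq) ha hz).mul (mob'_hasDerivAt ha hz')
  rw [preSch, hev.deriv_eq, (comp_deriv hq ha hz).deriv,
    show deriv (fun z => deriv q (mob a z) * mob' a z) z = _ from h2.deriv, preSch]
  have := h0 _ (mob_ball ha hz)
  have := mob'_ne ha hz'
  have := mob_den ha hz'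
  field_simp

lemma comp_schw (hq : DifferentiableOn ℂ q (ball 0 1))
    (h0 : ∀ z ∈ ball (0 : ℂ) 1, deriv q z ≠ 0) (ha : ‖a‖ < 1) {z : ℂ}
    (hz : z ∈ ball (0 : ℂ) 1) :
    schw (fun z => q (mob a z)) z = schw q (mob a z) * mob' a z ^ 2 := by
  have hz' := le_of_lt (mem_ball_zero_iff.1 hz)
  have hev : preSch (fun z => q (mob a z)) =ᶠ[nhds z] fun z => preSch q (mob a z) * mob' a z
      + -2 * (starRingEnd ℂ) a / (1 + (starRingEnd ℂ) a * z) := by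
    filter_upwards [isOpen_ball.mem_nhds hz] with y hy using comp_preSch hq h0 ha hy
  have hd := mob_den ha hz'
  have h3 := (hasDerivAt_const z (-2 * (starRingEnd ℂ) a)).div
    (((hasDerivAt_id z).const_mul ((starRingEnd ℂ) a)).const_add 1) hd
  have h2 := ((comp_deriv (preSch_diff hq h0) ha hz).mul (mob'_hasDerivAt ha hz')).add h3
  rw [schw, hev.deriv_eq, comp_preSch hq h0 ha hz,
    show deriv (fun z => preSch q (mob a z) * mob' a z
      + -2 * (starRingEnd ℂ) a / (1 + (starRingEnd ℂ) a * z)) z = _ from h2.deriv, schw]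
  simp only [id]
  field_simp
  ring

lemma comp_sig (hw : DifferentiableOn ℂ w (ball 0 1)) (ha : ‖a‖ < 1) {z : ℂ}
    (hz : z ∈ ball (0 : ℂ) 1) :
    sig (fun z => w (mob a z)) ε z = sig w ε (mob a z) * mob' a z := by
  rw [sig, (comp_deriv hw ha hz).deriv, sig]
  ring

/-- Admissible data stay admissible under precomposition with disk automorphisms. -/
lemma Nice.comp (N : Nice q w ε μ δ) (ha : ‖a‖ < 1) :
    Nice (fun z => q (mob a z)) (fun z => w (mob a z)) ε μ δ where
  qd := comp_diff N.qd ha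
  wd := comp_diff N.wd ha
  q0 z hz := by
    rw [(comp_deriv N.qd ha hz).deriv]
    exact mul_ne_zero (N.q0 _ (mob_ball ha hz)) (mob'_ne ha (le_of_lt (mem_ball_zero_iff.1 hz)))
  hμ := N.hμ
  hμ1 := N.hμ1
  hδ := N.hδ
  hδ1 := N.hδ1
  w1 z hz := N.w1 _ (mob_ball ha hz)
  he := N.he
  low z hz := N.low _ (mob_ball ha hz)
  dw z hz := by
    rw [(comp_deriv N.wd ha hz).deriv, norm_mul, mul_left_comm,
      norm_mob' ha (le_of_lt (mem_ball_zero_iff.1 hz)), mul_comm]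
    exact N.dw _ (mob_ball ha hz)
  sq z hz := by
    rw [comp_schw N.qd N.q0 ha hz, norm_mul, norm_pow, mul_left_comm, ← mul_pow,
      norm_mob' ha (le_of_lt (mem_ball_zero_iff.1 hz)), mul_comm]
    exact N.sq _ (mob_ball ha hz)

/-- The Ahlfors–Weill denominator changes by a unimodular factor. -/
lemma Nice.comp_DD (N : Nice q w ε μ δ) (ha : ‖a‖ < 1) {z : ℂ} (hz : z ∈ ball (0 : ℂ) 1) :
    DD (fun z => q (mob a z)) (fun z => w (mob a z)) ε z * (1 + (starRingEnd ℂ) a * z) =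
      DD q w ε (mob a z) * (1 + a * (starRingEnd ℂ) z) := by
  have hz' := le_of_lt (mem_ball_zero_iff.1 hz)
  have h1 := mob_den ha hz'
  have h2 := conj_den_ne ha hz'
  rw [DD, DD, tau, tau, comp_preSch N.qd N.q0 ha hz, comp_sig N.wd ha hz, one_sub_mob ha hz', mob']
  have e : (starRingEnd ℂ) (mob a z) = ((starRingEnd ℂ) z + (starRingEnd ℂ) a) /
      (1 + a * (starRingEnd ℂ) z) := by
    simp [mob]
  rw [e, normSq_cast, normSq_cast]
  generalize preSch q (mob a z) = p
  generalize sig w ε (mob a z) = p'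
  generalize (starRingEnd ℂ) a = a' at *
  generalize (starRingEnd ℂ) z = z' at *
  have h1' : 1 + z * a' ≠ 0 := by rwa [mul_comm]
  have h2' : 1 + z' * a ≠ 0 := by rwa [mul_comm]
  field_simp
  ring

lemma Nice.comp_DD_ne (N : Nice q w ε μ δ) (ha : ‖a‖ < 1) {z : ℂ} (hz : z ∈ ball (0 : ℂ) 1) :
    DD (fun z => q (mob a z)) (fun z => w (mob a z)) ε z ≠ 0 ↔ DD q w ε (mob a z) ≠ 0 := by
  have hz' := le_of_lt (mem_ball_zero_iff.1 hz)
  have h1 := mob_den ha hz'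
  have h2 := conj_den_ne ha hz'
  have h := N.comp_DD ha hz
  constructor
  · intro h3 h4
    rw [h4, zero_mul] at h
    exact mul_ne_zero h3 h1 h
  · intro h3 h4
    rw [h4, zero_mul] at h
    exact mul_ne_zero h3 h2 h.symm

lemma Nice.comp_EE (N : Nice q w ε μ δ) (ha : ‖a‖ < 1) {z : ℂ} (hz : z ∈ ball (0 : ℂ) 1)
    (hD : DD q w ε (mob a z) ≠ 0) :
    EE (fun z => q (mob a z)) (fun z => w (mob a z)) ε z = EE q w ε (mob a z) := by
  have hz' := le_of_lt (mem_ball_zero_iff.1 hz)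
  have h1 := mob_den ha hz'
  have h2 := conj_den_ne ha hz'
  have h := N.comp_DD ha hz
  have hD' := (N.comp_DD_ne ha hz).2 hD
  rw [EE, EE, (comp_deriv N.qd ha hz).deriv, one_sub_mob ha hz', mob']
  generalize ((1 - ‖a‖ ^ 2 : ℝ) : ℂ) = A at *
  generalize ((1 - ‖z‖ ^ 2 : ℝ) : ℂ) = B at *
  have e : DD (fun z => q (mob a z)) (fun z => w (mob a z)) ε z =
      DD q w ε (mob a z) * (1 + a * (starRingEnd ℂ) z) / (1 + (starRingEnd ℂ) a * z) := by
    rw [eq_div_iff h1, h]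
  rw [e]
  field_simp

lemma Nice.inj_in (N : Nice q w ε μ δ) (hδ : δ ≤ 1 / 1000) {a b : ℂ} (ha : ‖a‖ < 1)
    (hb : ‖b‖ < 1) (hab : b ≠ a) : q b ≠ q a := by
  have ha' : ‖-a‖ < 1 := by simpa using ha
  have := (N.comp ha).inj_in_zero hδ (z := mob (-a) b) (mob_mem ha' hb) (fun h => hab (by
    rw [← mob_inv ha hb.le, h, mob_zero]))
  simpa [mob_inv ha hb.le, mob_zero] using this

lemma Nice.inj_mixed (N : Nice q w ε μ δ) (hδ : δ ≤ 1 / 1000) {a b : ℂ} (ha : ‖a‖ < 1)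
    (hb : ‖b‖ < 1) (hD : DD q w ε a ≠ 0) : q b ≠ EE q w ε a := by
  have ha' : ‖-a‖ < 1 := by simpa using ha
  have h0 : DD q w ε (mob a 0) ≠ 0 := by rwa [mob_zero]
  have := (N.comp ha).inj_mixed_zero hδ (z := mob (-a) b) (mob_mem ha' hb)
    ((N.comp_DD_ne ha (by simp)).2 h0)
  rw [N.comp_EE ha (by simp) h0] at this
  simpa [mob_inv ha hb.le, mob_zero] using this

lemma Nice.inj_out (N : Nice q w ε μ δ) (hδ : δ ≤ 1 / 1000) {a b : ℂ} (ha : ‖a‖ < 1)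
    (hb : ‖b‖ < 1) (hab : b ≠ a) (hD : DD q w ε a ≠ 0) (hDb : DD q w ε b ≠ 0) :
    EE q w ε b ≠ EE q w ε a := by
  have ha' : ‖-a‖ < 1 := by simpa using ha
  have h0 : DD q w ε (mob a 0) ≠ 0 := by rwa [mob_zero]
  have hm := mob_mem ha' hb
  have hmb : mob (-a) b ∈ ball (0 : ℂ) 1 := by simpa using hm
  have hb0 : DD q w ε (mob a (mob (-a) b)) ≠ 0 := by rwa [mob_inv ha hb.le]
  have := (N.comp ha).inj_out_zero hδ (z := mob (-a) b) hm (fun h => hab (by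
    rw [← mob_inv ha hb.le, h, mob_zero])) ((N.comp_DD_ne ha (by simp)).2 h0)
    ((N.comp_DD_ne ha hmb).2 hb0)
  rw [N.comp_EE ha (by simp) h0, N.comp_EE ha hmb hb0] at this
  simpa [mob_inv ha hb.le, mob_zero] using this

/-- The Ahlfors–Weill denominator has at most one zero. -/
lemma Nice.DD_unique (N : Nice q w ε μ δ) (hδ : δ ≤ 1 / 1000) {a b : ℂ} (ha : ‖a‖ < 1)
    (hb : ‖b‖ < 1) (hab : b ≠ a) (hD : DD q w ε a = 0) : DD q w ε b ≠ 0 := by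
  have ha' : ‖-a‖ < 1 := by simpa using ha
  have hm := mob_mem ha' hb
  have hmb : mob (-a) b ∈ ball (0 : ℂ) 1 := by simpa using hm
  have hne : mob (-a) b ≠ 0 := fun h => hab (by rw [← mob_inv ha hb.le, h, mob_zero])
  have h0 : DD (fun z => q (mob a z)) (fun z => w (mob a z)) ε 0 = 0 := by
    by_contra h
    have := (N.comp_DD_ne ha (by simp)).1 h
    rw [mob_zero] at this
    exact this hD
  have h1 := (N.comp ha).DN_ge hδ hm
  have hp := norm_pos_iff.2 hne
  have h2 : DN (fun z => q (mob a z)) (fun z => w (mob a z)) ε (mob (-a) b) ≠ 0 :=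
    norm_pos_iff.1 (by linarith)
  rw [Nice.DD_zero, neg_eq_zero] at h0
  rw [Nice.DN_eq, h0] at h2
  have := (N.comp_DD_ne ha hmb).1 (by simpa using h2)
  rwa [mob_inv ha hb.le] at this

end transfer

/-! ### Comparing the holomorphic and antiholomorphic parts -/

/-- The pairs `(H, K)` with `H + conj K` the value of the extended map off the unit circle:
`(h, g)` inside the disk, and `(h + Φ, g + ω Φ)` outside. -/
def pairs (h g : ℂ → ℂ) : Set (ℂ × ℂ) :=
  {p | ∃ a ∈ ball (0 : ℂ) 1, p = (h a, g a) ∨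
    (denB h g a ≠ 0 ∧ p = (h a + phiB h g a, g a + dil h g a * phiB h g a))}

section
variable {h g : ℂ → ℂ} {d c : ℝ}

lemma Hyp.DD_eq (H : Hyp h g d c) (hd : d < 1) {ε : ℂ}
    (hε : ∀ z ∈ ball (0 : ℂ) 1, 1 + ε * dil h g z ≠ 0) {z : ℂ} (hz : z ∈ ball (0 : ℂ) 1) :
    DD (fun z => h z + ε * g z) (dil h g) ε z = denB h g z := by
  rw [DD, H.tau_eq hd hε hz, denB]

lemma Hyp.EE_eq (H : Hyp h g d c) (hd : d < 1) {ε : ℂ}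
    (hε : ∀ z ∈ ball (0 : ℂ) 1, 1 + ε * dil h g z ≠ 0) {z : ℂ} (hz : z ∈ ball (0 : ℂ) 1) :
    EE (fun z => h z + ε * g z) (dil h g) ε z =
      (h z + phiB h g z) + ε * (g z + dil h g z * phiB h g z) := by
  rw [EE, H.DD_eq hd hε hz, (H.eps_data hε hz).1, phiB]
  ring

/-- The antiholomorphic part is a contraction of the holomorphic part: otherwise some
`h + ε g` with `|ε| ≤ 2/(1+d)`, extended by the Ahlfors–Weill formula, would fail to be
injective. -/
lemma Hyp.pairs_lip (H : Hyp h g d c) (hd : d < 1) {δ : ℝ} (hδ : δ ≤ 1 / 1000)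
    (N : ∀ ε : ℂ, ‖ε‖ ≤ 2 / (1 + d) →
      Nice (fun z => h z + ε * g z) (dil h g) ε (((1 - d) / 2) ^ 2) δ)
    {p p' : ℂ × ℂ} (hp : p ∈ pairs h g) (hp' : p' ∈ pairs h g) :
    ‖p.2 - p'.2‖ ≤ (1 + d) / 2 * ‖p.1 - p'.1‖ := by
  by_contra! hlt
  have hd0 := H.d_nonneg
  have hpos : 0 < ‖p.2 - p'.2‖ := lt_of_le_of_lt (by positivity) hlt
  have hK : p.2 - p'.2 ≠ 0 := norm_pos_iff.1 hpos
  set ε : ℂ := -(p.1 - p'.1) / (p.2 - p'.2) with hεd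
  have hε : ‖ε‖ ≤ 2 / (1 + d) := by
    rw [hεd, norm_div, norm_neg, div_le_div_iff₀ hpos (by linarith)]
    linarith
  have hne : ∀ z ∈ ball (0 : ℂ) 1, 1 + ε * dil h g z ≠ 0 := fun z hz h0 => by
    have := H.low_eps hd hε hz
    rw [h0, norm_zero] at this; linarith
  have key : p.1 + ε * p.2 = p'.1 + ε * p'.2 := by
    have : ε * (p.2 - p'.2) = -(p.1 - p'.1) := by rw [hεd]; field_simp
    linear_combination this
  have Nε := N ε hε
  obtain ⟨a, ha, hpa⟩ := hp
  obtain ⟨b, hb, hpb⟩ := hp'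
  have ha' : ‖a‖ < 1 := by simpa using ha
  have hb' : ‖b‖ < 1 := by simpa using hb
  rcases hpa with rfl | ⟨hDa, rfl⟩ <;> rcases hpb with rfl | ⟨hDb, rfl⟩ <;> simp only at key hK
  · by_cases hab : a = b
    · subst hab; simp at hK
    · exact Nε.inj_in hδ hb' ha' hab key
  · refine Nε.inj_mixed hδ hb' ha' (by rwa [H.DD_eq hd hne hb]) ?_
    rw [H.EE_eq hd hne hb]; exact key
  · refine Nε.inj_mixed hδ ha' hb' (by rwa [H.DD_eq hd hne ha]) ?_
    rw [H.EE_eq hd hne ha]; exact key.symm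
  · by_cases hab : a = b
    · subst hab; simp at hK
    · refine Nε.inj_out hδ hb' ha' hab (by rwa [H.DD_eq hd hne hb])
        (by rwa [H.DD_eq hd hne ha]) ?_
      rw [H.EE_eq hd hne hb, H.EE_eq hd hne ha]; exact key

end

/-! ### The dilatation of the extension -/

section
variable {h g : ℂ → ℂ} {d c : ℝ}

/-- The Wirtinger derivatives of `Φ`. The `z`-derivative of `h + Φ` is small because it only
involves `P_h - P_f` and `S_f`; the `z̄`-derivative is `-(h'/D²)(1 + ½ s² λ²)`,
`λ = |ω'|/(1 - |ω|²)`. -/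
lemma Hyp.phiB_hasW (H : Hyp h g d c) (hd : d < 1) {z : ℂ} (hz : z ∈ ball (0 : ℂ) 1)
    (hD : denB h g z ≠ 0) :
    HasW (phiB h g)
      (deriv h z / denB h g z ^ 2 * (((1 - ‖z‖ ^ 2 : ℝ) : ℂ) * (preSch h z - preSchH h g z) *
        denB h g z + 1 / 2 * ((1 - ‖z‖ ^ 2 : ℝ) : ℂ) ^ 2 * schwH h g z) - deriv h z)
      (-(deriv h z / denB h g z ^ 2 * ((1 + 1 / 2 * (1 - ‖z‖ ^ 2) ^ 2 *
        (‖deriv (dil h g) z‖ ^ 2 / (1 - ‖dil h g z‖ ^ 2) ^ 2) : ℝ) : ℂ))) z := by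
  have hP := preSchH_hasW H.hd H.gd H.h0 hz ((H.dil_le z hz).trans_lt hd)
  have hs := (HasW.id (z := z)).one_sub_normSq
  have hDW : HasW (denB h g) _ _ z :=
    (HasW.conj_id (z := z)).sub (((HasW.const (1 / 2 : ℂ)).mul hs).mul hP)
  have hh' := HasW.of_hasDerivAt (diff_hasDerivAt (deriv_diff H.hd) hz)
  have hΦ : HasW (phiB h g) _ _ z := (hs.mul hh').div hDW hD
  have h0 := H.h0 z hz
  have ePh : deriv (deriv h) z = preSch h z * deriv h z := by rw [preSch]; field_simp
  have eD : (starRingEnd ℂ) z = denB h g z + (1 / 2) * ((1 - ‖z‖ ^ 2 : ℝ) : ℂ) * preSchH h g z := by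
    rw [denB]; ring
  have eN : z * (starRingEnd ℂ) z = 1 - ((1 - ‖z‖ ^ 2 : ℝ) : ℂ) := by
    rw [normSq_cast]; ring
  push_cast at hΦ eD eN ⊢
  refine hΦ.cast ?_ ?_
  · rw [ePh]
    generalize (1 - (‖z‖ : ℂ) ^ 2) = s at *
    rw [eD]
    generalize denB h g z = D at *
    simp only [map_zero, map_one]
    field_simp
    ring
  · generalize (‖deriv (dil h g) z‖ : ℂ) ^ 2 / (1 - (‖dil h g z‖ : ℂ) ^ 2) ^ 2 = L at *
    generalize (1 - (‖z‖ : ℂ) ^ 2) = s at *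
    have e2 : z * denB h g z = 1 - s - 1 / 2 * s * z * preSchH h g z := by
      linear_combination eN - z * eD
    simp only [map_zero, map_one]
    generalize denB h g z = D at *
    field_simp
    linear_combination (-2) * deriv h z * e2

/-- The dilatation estimate: the map `ζ ↦ E_f(ζ)` of the disk is orientation-reversing and
quasiconformal. -/
lemma exists_dilatation (d : ℝ) (hd0 : 0 ≤ d) (hd : d < 1) :
    ∃ c : ℝ, 0 < c ∧ ∀ h g : ℂ → ℂ, Hyp h g d c → ∀ z ∈ ball (0 : ℂ) 1, denB h g z ≠ 0 →
      ∃ A B : ℂ, HasW (extB h g) A B z ∧ ‖A‖ ≤ (1 + d) / 2 * ‖B‖ := by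
  obtain ⟨C, hC1, hC⟩ := Hyp.exists_bound d hd
  have h1d : 0 < 1 - d ^ 2 := by nlinarith
  set K := 2 * C / (1 - d ^ 2) + 1 with hK
  have hK0 : 0 < K := by positivity
  set η := (1 - d) / 6 / K with hη
  have hη0 : 0 < η := div_pos (by linarith) hK0
  have hηK : η * K = (1 - d) / 6 := by rw [hη]; field_simp
  obtain ⟨c, hc, hsm⟩ := Hyp.dil_small d hd hη0
  refine ⟨min c (min 1 η), by positivity, fun h g H z hz hD => ?_⟩
  have hz1 : ‖z‖ < 1 := by simpa using hz
  have hs0 : 0 < 1 - ‖z‖ ^ 2 := by nlinarith [norm_nonneg z]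
  have hs1 : 1 - ‖z‖ ^ 2 ≤ 1 := by nlinarith [norm_nonneg z]
  have b1 := hsm h g (H.mono (min_le_left _ _)) z hz
  have bP := (hC h g _ ((min_le_right _ _).trans (min_le_left _ _)) H z hz).1
  have bS : (1 - ‖z‖ ^ 2) ^ 2 * ‖schwH h g z‖ ≤ η :=
    (H.schw_le z hz).trans ((min_le_right _ _).trans (min_le_right _ _))
  have hΦ := H.phiB_hasW hd hz hD
  have hw := HasW.of_hasDerivAt (diff_hasDerivAt H.wd hz)
  have hE : HasW (extB h g) _ _ z :=
    (((HasW.of_hasDerivAt (diff_hasDerivAt H.hd hz)).add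
      (HasW.of_hasDerivAt (diff_hasDerivAt H.gd hz)).conj).add hΦ).add (hw.conj.mul hΦ.conj)
  refine ⟨_, _, hE, ?_⟩
  have eg : deriv g z = dil h g z * deriv h z := by
    have := H.h0 z hz
    rw [dil]; field_simp
  have eΦ : phiB h g z = deriv h z / denB h g z ^ 2 * (((1 - ‖z‖ ^ 2 : ℝ) : ℂ) * denB h g z) := by
    rw [phiB]; field_simp
  have hdil := H.dil_le z hz
  have bD : ‖denB h g z‖ ≤ 2 * C := by
    rw [denB]
    refine (norm_sub_le _ _).trans ?_
    rw [RCLike.norm_conj, norm_mul, norm_mul, Complex.norm_real, Real.norm_of_nonneg hs0.le]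
    have : ‖(1 / 2 : ℂ)‖ = 1 / 2 := by norm_num
    rw [this]
    linarith
  have bPP : (1 - ‖z‖ ^ 2) * ‖preSch h z - preSchH h g z‖ ≤ η / (1 - d ^ 2) := by
    have hA : 1 - d ^ 2 ≤ 1 - ‖dil h g z‖ ^ 2 := by nlinarith [norm_nonneg (dil h g z)]
    rw [preSchH, sub_sub_cancel, norm_div, norm_mul, Complex.norm_real, RCLike.norm_conj,
      Real.norm_of_nonneg (h1d.le.trans hA), ← mul_div_assoc]
    refine div_le_div₀ hη0.le ?_ h1d hA
    calc _ = ‖dil h g z‖ * ((1 - ‖z‖ ^ 2) * ‖deriv (dil h g) z‖) := by ring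
      _ ≤ 1 * η := by gcongr; linarith
      _ = η := one_mul _
  have hm1 : 1 ≤ 1 + 1 / 2 * (1 - ‖z‖ ^ 2) ^ 2 *
      (‖deriv (dil h g) z‖ ^ 2 / (1 - ‖dil h g z‖ ^ 2) ^ 2) := by
    have : 0 ≤ 1 / 2 * (1 - ‖z‖ ^ 2) ^ 2 *
      (‖deriv (dil h g) z‖ ^ 2 / (1 - ‖dil h g z‖ ^ 2) ^ 2) := by positivity
    linarith
  generalize 1 + 1 / 2 * (1 - ‖z‖ ^ 2) ^ 2 *
      (‖deriv (dil h g) z‖ ^ 2 / (1 - ‖dil h g z‖ ^ 2) ^ 2) = m at *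
  have be : ‖((1 - ‖z‖ ^ 2 : ℝ) : ℂ) * (preSch h z - preSchH h g z) *
        denB h g z + 1 / 2 * ((1 - ‖z‖ ^ 2 : ℝ) : ℂ) ^ 2 * schwH h g z‖ ≤ η * K := by
    refine (norm_add_le _ _).trans ?_
    rw [norm_mul, norm_mul, norm_mul, norm_mul, norm_pow, Complex.norm_real,
      Real.norm_of_nonneg hs0.le]
    have : ‖(1 / 2 : ℂ)‖ = 1 / 2 := by norm_num
    rw [this]
    have : (1 - ‖z‖ ^ 2) * ‖preSch h z - preSchH h g z‖ * ‖denB h g z‖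
        ≤ η / (1 - d ^ 2) * (2 * C) := by gcongr
    have e : η * K = η / (1 - d ^ 2) * (2 * C) + η := by rw [hK]; ring
    rw [e]
    linarith
  have bd : ‖deriv (dil h g) z‖ * ‖((1 - ‖z‖ ^ 2 : ℝ) : ℂ) * denB h g z‖ ≤ η * K := by
    rw [norm_mul, Complex.norm_real, Real.norm_of_nonneg hs0.le]
    have k1 : (1 - ‖z‖ ^ 2) * ‖deriv (dil h g) z‖ * ‖denB h g z‖ ≤ η * (2 * C) := by gcongr
    have k2 : 2 * C ≤ K := by
      have : 2 * C ≤ 2 * C / (1 - d ^ 2) := le_div_self (by linarith) h1d (by nlinarith)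
      linarith
    have k3 : η * (2 * C) ≤ η * K := by gcongr
    linarith
  rw [eΦ, eg, map_mul]
  set X := deriv h z / denB h g z ^ 2
  generalize ((1 - ‖z‖ ^ 2 : ℝ) : ℂ) * (preSch h z - preSchH h g z) *
        denB h g z + 1 / 2 * ((1 - ‖z‖ ^ 2 : ℝ) : ℂ) ^ 2 * schwH h g z = e at *
  generalize ((1 - ‖z‖ ^ 2 : ℝ) : ℂ) * denB h g z = D at *
  generalize deriv (dil h g) z = w' at *
  generalize dil h g z = w at *
  have hX := norm_nonneg X
  have hee := norm_nonneg e
  have lhs : ‖X * e - (starRingEnd ℂ) w * ((starRingEnd ℂ) X * (m : ℂ))‖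
      ≤ ‖X‖ * (η * K + d * m) := by
    refine (norm_sub_le _ _).trans ?_
    rw [norm_mul, norm_mul, norm_mul, RCLike.norm_conj, RCLike.norm_conj, Complex.norm_real,
      Real.norm_of_nonneg (by linarith)]
    calc _ ≤ ‖X‖ * (η * K) + d * (‖X‖ * m) := by gcongr
      _ = _ := by ring
  have rhs : ‖X‖ * (m - 2 * (η * K)) ≤
      ‖-(X * (m : ℂ)) + ((starRingEnd ℂ) w * (starRingEnd ℂ) (X * e)
        + (starRingEnd ℂ) w' * (starRingEnd ℂ) (X * D))‖ := by
    have k1 : ‖(starRingEnd ℂ) w * (starRingEnd ℂ) (X * e)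
        + (starRingEnd ℂ) w' * (starRingEnd ℂ) (X * D)‖ ≤ ‖X‖ * (2 * (η * K)) := by
      refine (norm_add_le _ _).trans ?_
      rw [norm_mul, norm_mul ((starRingEnd ℂ) w'), RCLike.norm_conj, RCLike.norm_conj,
        RCLike.norm_conj, RCLike.norm_conj, norm_mul X e, norm_mul X D]
      calc ‖w‖ * (‖X‖ * ‖e‖) + ‖w'‖ * (‖X‖ * ‖D‖)
          ≤ 1 * (‖X‖ * (η * K)) + ‖X‖ * (‖w'‖ * ‖D‖) := by
            have : ‖w'‖ * (‖X‖ * ‖D‖) = ‖X‖ * (‖w'‖ * ‖D‖) := by ring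
            rw [this]
            gcongr
            linarith
        _ ≤ 1 * (‖X‖ * (η * K)) + ‖X‖ * (η * K) := by gcongr
        _ = _ := by ring
    have k2 := norm_sub_norm_le (X * (m : ℂ)) ((starRingEnd ℂ) w * (starRingEnd ℂ) (X * e)
        + (starRingEnd ℂ) w' * (starRingEnd ℂ) (X * D))
    have k3 : ‖X * (m : ℂ)‖ = ‖X‖ * m := by
      rw [norm_mul, Complex.norm_real, Real.norm_of_nonneg (by linarith)]
    rw [neg_add_eq_sub, norm_sub_rev, mul_sub]
    linarith
  have key : ‖X‖ * (η * K + d * m) ≤ (1 + d) / 2 * (‖X‖ * (m - 2 * (η * K))) := by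
    rw [hηK]
    have : (1 - d) / 6 + d * m ≤ (1 + d) / 2 * (m - 2 * ((1 - d) / 6)) := by nlinarith
    calc _ ≤ ‖X‖ * ((1 + d) / 2 * (m - 2 * ((1 - d) / 6))) := by gcongr
      _ = _ := by ring
  calc _ = ‖X * e - (starRingEnd ℂ) w * ((starRingEnd ℂ) X * (m : ℂ))‖ := by
        congr 1
        simp only [map_zero, map_neg, map_mul, Complex.conj_ofReal]
        ring
    _ ≤ (1 + d) / 2 * (‖X‖ * (m - 2 * (η * K))) := lhs.trans key
    _ ≤ (1 + d) / 2 * _ := mul_le_mul_of_nonneg_left rhs (by linarith)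
    _ = _ := by
        congr 2
        simp only [map_zero, map_mul, map_sub]
        ring

/-- The same estimate in the exterior variable `w = 1 / conj z`. -/
lemma ext_dilatation {w : ℂ} {k : ℝ} (hw : 1 < ‖w‖) {A B : ℂ}
    (hE : HasW (extB h g) A B (1 / (starRingEnd ℂ) w)) (hAB : ‖A‖ ≤ k * ‖B‖) :
    ‖wZb (fun w => extB h g (1 / (starRingEnd ℂ) w)) w‖ ≤
      k * ‖wZ (fun w => extB h g (1 / (starRingEnd ℂ) w)) w‖ := by
  have hw0 : (starRingEnd ℂ) w ≠ 0 := by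
    rw [map_ne_zero]; rintro rfl; simp at hw; linarith
  have hr := (HasW.const (z := w) 1).div (HasW.conj_id (z := w)) hw0
  have hr' : HasW (fun w => 1 / (starRingEnd ℂ) w) 0 (-1 / (starRingEnd ℂ) w ^ 2) w :=
    hr.cast (by ring) (by ring)
  have := HasW.comp_anti (r := fun w => 1 / (starRingEnd ℂ) w) hE hr'
  rw [this.wZ_eq, this.wZb_eq, norm_mul, norm_mul, RCLike.norm_conj, ← mul_assoc]
  gcongr

end

section Topological

open Filter Topology

/-! ### Continuous extension of the normalised map to the plane -/

/-- The retraction of the plane onto the closed unit disk that folds the exterior by the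
reflection `z ↦ 1 / conj z`. -/
noncomputable def rho (z : ℂ) : ℂ := z / ((max 1 ‖z‖ : ℝ) : ℂ) ^ 2

lemma rho_cont : Continuous rho := by
  unfold rho
  refine continuous_id.div (by fun_prop) fun z => pow_ne_zero 2 ?_
  have : (0 : ℝ) < max 1 ‖z‖ := lt_of_lt_of_le one_pos (le_max_left _ _)
  exact_mod_cast this.ne'

lemma rho_in {z : ℂ} (hz : ‖z‖ ≤ 1) : rho z = z := by simp [rho, max_eq_left hz]

lemma rho_out {z : ℂ} (hz : 1 ≤ ‖z‖) : rho z = 1 / (starRingEnd ℂ) z := by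
  have h0 : z ≠ 0 := by rintro rfl; simp at hz; linarith
  have h1 : (starRingEnd ℂ) z ≠ 0 := (map_ne_zero _).2 h0
  rw [rho, max_eq_right hz]
  have : ((‖z‖ : ℝ) : ℂ) ^ 2 = z * (starRingEnd ℂ) z := by
    rw [Complex.mul_conj, Complex.normSq_eq_norm_sq]; push_cast; ring
  rw [this]
  field_simp

lemma norm_rho_out {z : ℂ} (hz : 1 ≤ ‖z‖) : ‖rho z‖ = 1 / ‖z‖ := by
  rw [rho_out hz, norm_div, norm_one, RCLike.norm_conj]

lemma norm_rho_le (z : ℂ) : ‖rho z‖ ≤ 1 := by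
  rcases le_total ‖z‖ 1 with h | h
  · rwa [rho_in h]
  · rw [norm_rho_out h]; exact div_le_one_of_le₀ h (by linarith)

lemma norm_rho_lt {z : ℂ} (hz : ‖z‖ ≠ 1) : ‖rho z‖ < 1 := by
  rcases lt_or_gt_of_ne hz with h | h
  · rwa [rho_in h.le]
  · rw [norm_rho_out (le_of_lt h), div_lt_one (by linarith)]; exact h

section
variable {q w : ℂ → ℂ} {ε : ℂ} {μ δ : ℝ}

lemma Nice.Nf_lip (N : Nice q w ε μ δ) (hδ : δ ≤ 1 / 1000) {r t : ℝ} (hr : r < 1)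
    (ht : 0 < t) (hrt : t ^ 2 ≤ 1 - r) {x y : ℂ} (hx : ‖x‖ ≤ r) (hy : ‖y‖ ≤ r) :
    ‖Nf q w ε x - Nf q w ε y‖ ≤ 1 / t * ‖x - y‖ := by
  have hs : Convex ℝ (closedBall (0 : ℂ) r) := convex_closedBall 0 r
  refine hs.norm_image_sub_le_of_norm_hasDerivWithin_le
    (f := Nf q w ε) (f' := N1 q w ε)
    (fun z hz => (N.Nf_hasDerivAt hδ ?_).hasDerivWithinAt) (fun z hz => ?_)
    (by simpa using hy) (by simpa using hx)
  · simp at hz ⊢; linarith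
  · have hz' : ‖z‖ ≤ r := by simpa using hz
    refine (N.N1_le hδ (by linarith)).trans ?_
    refine one_div_le_one_div_of_le ht ?_
    exact Real.le_sqrt_of_sq_le (by linarith)

/-- The normalised map has a continuous extension to the closed disk, because its derivative is
`O((1-|z|)^(-1/2))`. -/
lemma Nice.exists_Nb (N : Nice q w ε μ δ) (hδ : δ ≤ 1 / 1000) :
    ∃ Nb : ℂ → ℂ, Continuous Nb ∧ ∀ z, ‖z‖ ≠ 1 → Nb z = Nf q w ε (rho z) := by
  set G : ℕ → ℂ → ℂ := fun n z => Nf q w ε (((1 - (1 / 2) ^ (2 * n) : ℝ) : ℂ) * rho z) with hG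
  have hp : ∀ n : ℕ, (0 : ℝ) < (1 / 2) ^ n := fun n => by positivity
  have hp1 : ∀ n : ℕ, ((1 : ℝ) / 2) ^ n ≤ 1 := fun n => pow_le_one₀ (by norm_num) (by norm_num)
  have hnorm : ∀ n z, ‖((1 - (1 / 2) ^ (2 * n) : ℝ) : ℂ) * rho z‖ ≤ 1 - (1 / 2) ^ (2 * n) := by
    intro n z
    have := hp1 (2 * n)
    rw [norm_mul, Complex.norm_real, Real.norm_of_nonneg (by linarith)]
    exact mul_le_of_le_one_right (by linarith) (norm_rho_le z)
  have hball : ∀ n z, ((1 - (1 / 2) ^ (2 * n) : ℝ) : ℂ) * rho z ∈ ball (0 : ℂ) 1 := by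
    intro n z
    have := hnorm n z; have := hp (2 * n)
    rw [mem_ball_zero_iff]; linarith
  have hGc : ∀ n, Continuous (G n) := fun n => by
    refine continuous_iff_continuousAt.2 fun z => ?_
    exact ContinuousAt.comp (f := fun z => ((1 - (1 / 2) ^ (2 * n) : ℝ) : ℂ) * rho z)
      (N.Nf_hasDerivAt hδ (hball n z)).continuousAt
      ((continuous_const.mul rho_cont).continuousAt)
  have hstep : ∀ z n, dist (G n z) (G (n + 1) z) ≤ 2 * (1 / 2) ^ n := by
    intro z n
    have e : ((1 : ℝ) / 2) ^ (2 * (n + 1)) = ((1 / 2) ^ (n + 1)) ^ 2 := by ring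
    have e2 : ((1 : ℝ) / 2) ^ (2 * (n + 1)) = (1 / 2) ^ (2 * n) / 4 := by ring
    have h1 := hp (2 * n)
    rw [dist_eq_norm]
    refine (N.Nf_lip hδ (r := 1 - (1 / 2) ^ (2 * (n + 1))) (t := (1 / 2) ^ (n + 1))
      (by have := hp (2 * (n + 1)); linarith) (hp _) (by rw [e]; linarith)
      ((hnorm n z).trans (by rw [e2]; linarith)) (hnorm _ z)).trans ?_
    rw [← sub_mul, norm_mul, ← Complex.ofReal_sub, Complex.norm_real, Real.norm_eq_abs]
    have e3 : |1 - ((1 : ℝ) / 2) ^ (2 * n) - (1 - (1 / 2) ^ (2 * (n + 1)))|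
        = 3 / 4 * ((1 / 2) ^ n) ^ 2 := by
      rw [e2, abs_of_neg (by linarith)]; ring
    rw [e3]
    have h2 := hp n
    calc 1 / (1 / 2) ^ (n + 1) * (3 / 4 * ((1 / 2) ^ n) ^ 2 * ‖rho z‖)
        ≤ 1 / (1 / 2) ^ (n + 1) * (3 / 4 * ((1 / 2) ^ n) ^ 2 * 1) := by
          gcongr; exact norm_rho_le z
      _ = 3 / 2 * (1 / 2) ^ n := by rw [pow_succ]; field_simp; ring
      _ ≤ 2 * (1 / 2) ^ n := by gcongr; norm_num
  have hlim : ∀ z, ∃ l, Tendsto (fun n => G n z) atTop (𝓝 l) := fun z =>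
    cauchySeq_tendsto_of_complete (cauchySeq_of_le_geometric _ _ (by norm_num) (hstep z))
  choose Nb hNb using hlim
  refine ⟨Nb, ?_, fun z hz => ?_⟩
  · refine TendstoUniformly.continuous (F := G) (p := atTop) ?_ (Frequently.of_forall hGc)
    rw [Metric.tendstoUniformly_iff]
    intro e he
    have h0 : Tendsto (fun n : ℕ => 2 * (1 / 2 : ℝ) ^ n / (1 - 1 / 2)) atTop (𝓝 0) := by
      have := ((tendsto_pow_atTop_nhds_zero_of_lt_one (r := (1 / 2 : ℝ)) (by norm_num)
        (by norm_num)).const_mul 2).div_const (1 - 1 / 2)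
      simpa using this
    filter_upwards [h0.eventually (gt_mem_nhds he)] with n hn z
    rw [dist_comm]
    exact (dist_le_of_le_geometric_of_tendsto _ _ (by norm_num) (hstep z) (hNb z) n).trans_lt hn
  · refine tendsto_nhds_unique (hNb z) ?_
    have hc : ContinuousAt (Nf q w ε) (rho z) :=
      (N.Nf_hasDerivAt hδ (by simpa using norm_rho_lt hz)).continuousAt
    have : Tendsto (fun n : ℕ => ((1 - (1 / 2) ^ (2 * n) : ℝ) : ℂ) * rho z) atTop
        (𝓝 (rho z)) := by
      have h1 : Tendsto (fun n : ℕ => (1 - (1 / 2) ^ (2 * n) : ℝ)) atTop (𝓝 1) := by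
        have := (tendsto_pow_atTop_nhds_zero_of_lt_one (r := ((1 / 2) ^ 2 : ℝ)) (by norm_num)
          (by norm_num)).const_sub 1
        simpa [pow_mul] using this
      have h2 := ((Complex.continuous_ofReal.tendsto _).comp h1).mul_const (rho z)
      simpa using h2
    exact hc.tendsto.comp this

/-- The correction added to the normalised map outside the unit disk. -/
noncomputable def Rt (q w : ℂ → ℂ) (ε : ℂ) (b : ℂ) : ℂ :=
  ((1 - ‖b‖ ^ 2 : ℝ) : ℂ) * N1 q w ε b / DN q w ε b

lemma Nice.DN_cont (N : Nice q w ε μ δ) (hδ : δ ≤ 1 / 1000) {b : ℂ} (hb : b ∈ ball (0 : ℂ) 1) :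
    ContinuousAt (DN q w ε) b := by
  have h1 := (N.pf_hasDerivAt hb (N.Yf_ne hδ hb)).continuousAt
  have hw := (diff_hasDerivAt N.wd hb).continuousAt
  have hw' := (diff_hasDerivAt (deriv_diff N.wd) hb).continuousAt
  have h2 : ContinuousAt (sig w ε) b := by
    unfold sig
    refine (hw'.mul (((Complex.continuous_conj.continuousAt.comp hw).add continuousAt_const).div
      ?_ ?_)).neg
    · refine ContinuousAt.mul ?_ (by fun_prop)
      exact Complex.continuous_ofReal.continuousAt.comp (by fun_prop)
    · have := N.low b hb
      have hμ := N.hμ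
      refine mul_ne_zero ?_ ?_
      · have : 0 < 1 - ‖w b‖ ^ 2 := by have := N.w1 b hb; nlinarith [norm_nonneg (w b)]
        exact_mod_cast this.ne'
      · intro h
        rw [h, norm_zero, mul_zero] at this
        linarith
  unfold DN
  exact Complex.continuous_conj.continuousAt.add
    ((Continuous.continuousAt (by fun_prop)).mul (h1.sub (h2.div_const 2)))

lemma Nice.Rt_le (N : Nice q w ε μ δ) (hδ : δ ≤ 1 / 1000) {b : ℂ} (hb : ‖b‖ < 1) (h0 : b ≠ 0) :
    ‖Rt q w ε b‖ ≤ 4 * √(1 - ‖b‖) / ‖b‖ := by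
  have hp := norm_pos_iff.2 h0
  have h1 := N.DN_ge hδ hb
  have h2 := N.N1_le hδ hb
  have ht : 0 < 1 - ‖b‖ := by linarith
  have hs := Real.sqrt_pos.2 ht
  have hss := Real.mul_self_sqrt ht.le
  have hs2 : (1 - ‖b‖ ^ 2) ≤ 2 * (√(1 - ‖b‖) * √(1 - ‖b‖)) := by rw [hss]; nlinarith
  have hs0 : 0 ≤ 1 - ‖b‖ ^ 2 := by nlinarith
  rw [Rt, norm_div, norm_mul, Complex.norm_real, Real.norm_of_nonneg hs0]
  calc (1 - ‖b‖ ^ 2) * ‖N1 q w ε b‖ / ‖DN q w ε b‖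
      ≤ 2 * (√(1 - ‖b‖) * √(1 - ‖b‖)) * (1 / √(1 - ‖b‖)) / (‖b‖ / 2) := by gcongr
    _ = _ := by field_simp; ring

/-- Outside the disk the extended normalised map is close to the identity. -/
lemma Nice.out_sub_le (N : Nice q w ε μ δ) (hδ : δ ≤ 1 / 1000) {b : ℂ} (hb : ‖b‖ < 1)
    (h0 : b ≠ 0) :
    ‖Nf q w ε b + Rt q w ε b - 1 / (starRingEnd ℂ) b‖ ≤ 140 * δ / ‖b‖ := by
  have hp := norm_pos_iff.2 h0
  have hδ0 := N.hδ
  have hc : (starRingEnd ℂ) b ≠ 0 := (map_ne_zero _).2 h0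
  have h1 := N.DN_ge hδ hb
  have hDN : DN q w ε b ≠ 0 := norm_pos_iff.1 (by linarith)
  have h2 := N.N1_sub_le hδ hb
  have h3 := N.Nf_sub_le hδ hb
  have h4 := N.DN_sub_le hδ hb
  have ht : 0 < 1 - ‖b‖ := by linarith
  have hs := Real.sqrt_pos.2 ht
  have hss := Real.mul_self_sqrt ht.le
  have hs1 : √(1 - ‖b‖) ≤ 1 := Real.sqrt_le_one.2 (by linarith)
  have hs0 : 0 ≤ 1 - ‖b‖ ^ 2 := by nlinarith
  have hs01 : 1 - ‖b‖ ^ 2 ≤ 1 := by nlinarith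
  have e : Nf q w ε b + Rt q w ε b - 1 / (starRingEnd ℂ) b = (Nf q w ε b - b)
      + ((1 - ‖b‖ ^ 2 : ℝ) : ℂ) * (N1 q w ε b - 1) / DN q w ε b
      - ((1 - ‖b‖ ^ 2 : ℝ) : ℂ) * (DN q w ε b - (starRingEnd ℂ) b)
        / (DN q w ε b * (starRingEnd ℂ) b) := by
    rw [Rt, normSq_cast]
    field_simp
    ring
  have k2 : ‖((1 - ‖b‖ ^ 2 : ℝ) : ℂ) * (N1 q w ε b - 1) / DN q w ε b‖ ≤ 64 * δ := by
    rw [norm_div, norm_mul, Complex.norm_real, Real.norm_of_nonneg hs0]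
    set t := √(1 - ‖b‖) with htd
    have hb' : ‖b‖ = 1 - t * t := by rw [hss]; ring
    have m1 : (1 - ‖b‖ ^ 2) ≤ 2 * (t * t) := by rw [hss]; nlinarith
    have m2 : 16 * δ * (1 / t - 1) = 16 * δ * (1 - t) / t := by field_simp
    calc (1 - ‖b‖ ^ 2) * ‖N1 q w ε b - 1‖ / ‖DN q w ε b‖
        ≤ 2 * (t * t) * (16 * δ * (1 - t) / t) / (‖b‖ / 2) := by
          have m3 : 0 ≤ 16 * δ * (1 - t) / t := by
            have := sub_nonneg.2 hs1
            positivity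
          rw [m2] at h2
          gcongr
      _ = 64 * δ * (t * (1 - t)) / ‖b‖ := by field_simp; ring
      _ ≤ 64 * δ * ‖b‖ / ‖b‖ := by
          gcongr
          rw [hb']; nlinarith
      _ = 64 * δ := by field_simp
  have k3 : ‖((1 - ‖b‖ ^ 2 : ℝ) : ℂ) * (DN q w ε b - (starRingEnd ℂ) b)
        / (DN q w ε b * (starRingEnd ℂ) b)‖ ≤ 40 * δ / ‖b‖ := by
    rw [norm_div, norm_mul, norm_mul, Complex.norm_real, Real.norm_of_nonneg hs0, RCLike.norm_conj]
    calc _ ≤ 1 * (20 * δ * ‖b‖) / (‖b‖ / 2 * ‖b‖) := by gcongr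
      _ = _ := by field_simp; ring
  rw [e]
  refine (norm_sub_le _ _).trans ((add_le_add ((norm_add_le _ _).trans (add_le_add h3 k2)) k3).trans ?_)
  have : 32 * δ * ‖b‖ ^ 2 + 64 * δ ≤ 96 * δ / ‖b‖ := by
    rw [le_div_iff₀ hp]
    have : ‖b‖ ^ 2 * ‖b‖ ≤ 1 := by
      have : ‖b‖ ^ 2 ≤ 1 := by linarith
      nlinarith
    nlinarith
  have e5 : 140 * δ / ‖b‖ = 96 * δ / ‖b‖ + 40 * δ / ‖b‖ + 4 * δ / ‖b‖ := by ring
  have : 0 ≤ 4 * δ / ‖b‖ := by positivity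
  linarith

/-- The normalised Ahlfors–Weill extension is a continuous self-map of the plane close to the
identity. -/
lemma Nice.exists_H (N : Nice q w ε μ δ) (hδ : δ ≤ 1 / 1000) :
    ∃ Hf : ℂ → ℂ, Continuous Hf ∧ (∀ z, ‖z‖ < 1 → Hf z = Nf q w ε z) ∧
      (∀ z, 1 < ‖z‖ → Hf z = Nf q w ε (1 / (starRingEnd ℂ) z) +
        Rt q w ε (1 / (starRingEnd ℂ) z)) ∧
      ∀ z, ‖Hf z - z‖ ≤ 140 * δ * max 1 ‖z‖ := by
  obtain ⟨Nb, hNc, hNb⟩ := N.exists_Nb hδ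
  have hδ0 := N.hδ
  set R : ℂ → ℂ := fun z => if ‖z‖ ≤ 1 then 0 else Rt q w ε (rho z) with hR
  have hRle : ∀ z, ‖R z‖ ≤ 4 * √(1 - ‖rho z‖) * ‖z‖ := by
    intro z
    by_cases h : ‖z‖ ≤ 1
    · simp only [hR, h, if_true, norm_zero]; positivity
    · have h1 : 1 < ‖z‖ := not_le.1 h
      simp only [hR, h, if_false]
      have hz0 : rho z ≠ 0 := norm_pos_iff.1 (by rw [norm_rho_out h1.le]; positivity)
      refine (N.Rt_le hδ (norm_rho_lt h1.ne') hz0).trans_eq ?_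
      rw [norm_rho_out h1.le]
      field_simp
  have hRc : Continuous R := by
    refine continuous_iff_continuousAt.2 fun z => ?_
    rcases lt_trichotomy ‖z‖ 1 with h | h | h
    · have : R =ᶠ[𝓝 z] fun _ => 0 := by
        filter_upwards [continuous_norm.continuousAt.eventually (gt_mem_nhds h)] with y hy
        simp only [hR, le_of_lt hy, if_true]
      exact continuousAt_const.congr this.symm
    · have h0 : R z = 0 := by simp [hR, h]
      rw [ContinuousAt, h0]
      refine squeeze_zero_norm hRle ?_
      have hc : Continuous fun z => 4 * √(1 - ‖rho z‖) * ‖z‖ := by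
        have := rho_cont
        fun_prop
      have := hc.tendsto z
      simpa [rho_in h.le, h] using this
    · have : R =ᶠ[𝓝 z] fun z => Rt q w ε (rho z) := by
        filter_upwards [continuous_norm.continuousAt.eventually (lt_mem_nhds h)] with y hy
        simp only [hR, not_le.2 hy, if_false]
      have hb : rho z ∈ ball (0 : ℂ) 1 := by simpa using norm_rho_lt h.ne'
      have hz0 : 0 < ‖rho z‖ := by rw [norm_rho_out h.le]; positivity
      have hD : DN q w ε (rho z) ≠ 0 := by
        have := N.DN_ge hδ (norm_rho_lt h.ne')
        exact norm_pos_iff.1 (by linarith)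
      have hc : ContinuousAt (Rt q w ε) (rho z) := by
        unfold Rt
        exact (ContinuousAt.mul (Continuous.continuousAt (by fun_prop))
          (N.N1_hasDerivAt hδ hb).continuousAt).div (N.DN_cont hδ hb) hD
      exact (hc.comp rho_cont.continuousAt).congr this.symm
  have hin : ∀ z, ‖z‖ < 1 → Nb z + R z = Nf q w ε z := by
    intro z hz
    rw [hNb z hz.ne, rho_in hz.le]; simp [hR, hz.le]
  have hout : ∀ z, 1 < ‖z‖ → Nb z + R z = Nf q w ε (1 / (starRingEnd ℂ) z) +
        Rt q w ε (1 / (starRingEnd ℂ) z) := by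
    intro z hz
    rw [hNb z hz.ne']; simp only [hR, not_le.2 hz, if_false, rho_out hz.le]
  refine ⟨fun z => Nb z + R z, hNc.add hRc, hin, hout, fun z => ?_⟩
  rcases le_or_gt ‖z‖ 1 with h | h
  · have hcl : z ∈ closure (ball (0 : ℂ) 1) := by
      rw [closure_ball _ one_ne_zero]; simpa using h
    have hb : ∀ y ∈ ball (0 : ℂ) 1, ‖Nb y + R y - y‖ ≤ 140 * δ := by
      intro y hy
      have hy' : ‖y‖ < 1 := by simpa using hy
      rw [hin y hy']
      refine (N.Nf_sub_le hδ hy').trans ?_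
      have : ‖y‖ ^ 2 ≤ 1 := pow_le_one₀ (norm_nonneg _) hy'.le
      nlinarith
    rw [max_eq_left h, mul_one]
    exact closure_minimal (t := {y | ‖Nb y + R y - y‖ ≤ 140 * δ}) hb
      (isClosed_le (by fun_prop) continuous_const) hcl
  · have hz0 : z ≠ 0 := norm_pos_iff.1 (by linarith)
    have hc : (starRingEnd ℂ) z ≠ 0 := (map_ne_zero _).2 hz0
    show ‖Nb z + R z - z‖ ≤ _
    rw [hout z h, max_eq_right h.le]
    have hb : ‖1 / (starRingEnd ℂ) z‖ < 1 := by rw [← rho_out h.le]; exact norm_rho_lt h.ne'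
    have := N.out_sub_le hδ hb (one_div_ne_zero hc)
    have e : 1 / (starRingEnd ℂ) (1 / (starRingEnd ℂ) z) = z := by simp
    have e2 : 140 * δ / ‖1 / (starRingEnd ℂ) z‖ = 140 * δ * ‖z‖ := by
      rw [norm_div, norm_one, RCLike.norm_conj]; field_simp
    rwa [e, e2] at this

end

/-! ### Injectivity of the normalised extension -/

/-- `Hf` is the continuous normalised Ahlfors–Weill extension of `q`: it equals the normalised map
inside the unit disk, the Ahlfors–Weill value outside, and stays close to the identity. -/
structure IsExt (q w : ℂ → ℂ) (ε : ℂ) (δ : ℝ) (Hf : ℂ → ℂ) : Prop where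
  cont : Continuous Hf
  inn : ∀ z, ‖z‖ < 1 → Hf z = Nf q w ε z
  out : ∀ z, 1 < ‖z‖ → Hf z = Nf q w ε (1 / (starRingEnd ℂ) z) + Rt q w ε (1 / (starRingEnd ℂ) z)
  near : ∀ z, ‖Hf z - z‖ ≤ 140 * δ * max 1 ‖z‖

/-- The Möbius transformation undoing the normalisation. -/
noncomputable def Mq (q w : ℂ → ℂ) (ε : ℂ) (x : ℂ) : ℂ :=
  q 0 + deriv q 0 * x / (1 - kap q w ε * x)

section
variable {q w : ℂ → ℂ} {ε : ℂ} {μ δ : ℝ}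

lemma Nice.one_sub_Nf (N : Nice q w ε μ δ) (hδ : δ ≤ 1 / 1000) {b : ℂ} (hb : ‖b‖ < 1) :
    (1 - kap q w ε * Nf q w ε b) = 1 / Yf q w ε b := by
  have hY := N.Yf_ne hδ (z := b) (by simpa using hb)
  rw [Nf]
  field_simp
  rw [Yf]; ring

lemma Nice.Mq_in (N : Nice q w ε μ δ) (hδ : δ ≤ 1 / 1000) {b : ℂ} (hb : ‖b‖ < 1) :
    Mq q w ε (Nf q w ε b) = q b := by
  have hY := N.Yf_ne hδ (z := b) (by simpa using hb)
  rw [Mq, N.one_sub_Nf hδ hb, Nf, qhat]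
  have := N.q00
  field_simp
  ring

/-- Homogeneous coordinates of the normalised exterior value. -/
lemma Nice.out_hom (N : Nice q w ε μ δ) (hδ : δ ≤ 1 / 1000) {b : ℂ} (hb : ‖b‖ < 1) (h0 : b ≠ 0) :
    (Nf q w ε b + Rt q w ε b) * (Yf q w ε b * DN q w ε b) =
        qhat q b * DD q w ε b + ((1 - ‖b‖ ^ 2 : ℝ) : ℂ) * (deriv q b / deriv q 0) ∧
      (1 - kap q w ε * (Nf q w ε b + Rt q w ε b)) * (Yf q w ε b * DN q w ε b) = DD q w ε b := by
  have hY := N.Yf_ne hδ (z := b) (by simpa using hb)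
  have hp := norm_pos_iff.2 h0
  have hDN : DN q w ε b ≠ 0 := by
    have := N.DN_ge hδ hb
    exact norm_pos_iff.1 (by linarith)
  have e := Nice.DN_eq (q := q) (w := w) (ε := ε) b
  have e1 : (Nf q w ε b + Rt q w ε b) * (Yf q w ε b * DN q w ε b) =
        qhat q b * DD q w ε b + ((1 - ‖b‖ ^ 2 : ℝ) : ℂ) * (deriv q b / deriv q 0) := by
    have e2 : (Nf q w ε b + Rt q w ε b) * (Yf q w ε b * DN q w ε b) =
        qhat q b * DN q w ε b + ((1 - ‖b‖ ^ 2 : ℝ) : ℂ) * (deriv q b / deriv q 0) / Yf q w ε b := by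
      rw [Rt, N1, Nf]
      field_simp
    rw [e2, e]
    have hk : kap q w ε * qhat q b = Yf q w ε b - 1 := by rw [Yf]; ring
    generalize deriv q b / deriv q 0 = p
    have : qhat q b * (DD q w ε b + ((1 - ‖b‖ ^ 2 : ℝ) : ℂ) * (kap q w ε * p / Yf q w ε b)) =
      qhat q b * DD q w ε b + ((1 - ‖b‖ ^ 2 : ℝ) : ℂ) * p * (kap q w ε * qhat q b) / Yf q w ε b := by
      ring
    rw [this, hk]
    field_simp
    ring
  refine ⟨e1, ?_⟩
  rw [sub_mul, mul_assoc, e1, e, mul_add]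
  have : Yf q w ε b * (((1 - ‖b‖ ^ 2 : ℝ) : ℂ) * (kap q w ε * (deriv q b / deriv q 0) / Yf q w ε b))
      = ((1 - ‖b‖ ^ 2 : ℝ) : ℂ) * (kap q w ε * (deriv q b / deriv q 0)) := by
    field_simp
  rw [one_mul, this, Yf]
  ring

lemma Nice.YDN_ne (N : Nice q w ε μ δ) (hδ : δ ≤ 1 / 1000) {b : ℂ} (hb : ‖b‖ < 1) (h0 : b ≠ 0) :
    Yf q w ε b * DN q w ε b ≠ 0 := by
  refine mul_ne_zero (N.Yf_ne hδ (z := b) (by simpa using hb)) ?_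
  have hp := norm_pos_iff.2 h0
  have := N.DN_ge hδ hb
  exact norm_pos_iff.1 (by linarith)

lemma Nice.out_zero (N : Nice q w ε μ δ) (hδ : δ ≤ 1 / 1000) {b : ℂ} (hb : ‖b‖ < 1) (h0 : b ≠ 0) :
    1 - kap q w ε * (Nf q w ε b + Rt q w ε b) = 0 ↔ DD q w ε b = 0 := by
  have h := (N.out_hom hδ hb h0).2
  have := N.YDN_ne hδ hb h0
  rw [← h]
  simp [this]

lemma Nice.Mq_out (N : Nice q w ε μ δ) (hδ : δ ≤ 1 / 1000) {b : ℂ} (hb : ‖b‖ < 1) (h0 : b ≠ 0)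
    (hD : DD q w ε b ≠ 0) : Mq q w ε (Nf q w ε b + Rt q w ε b) = EE q w ε b := by
  obtain ⟨h1, h2⟩ := N.out_hom hδ hb h0
  have h3 := N.YDN_ne hδ hb h0
  have := N.q00
  rw [Mq, EE]
  have e : deriv q 0 * (Nf q w ε b + Rt q w ε b) / (1 - kap q w ε * (Nf q w ε b + Rt q w ε b))
      = deriv q 0 * (qhat q b * DD q w ε b + ((1 - ‖b‖ ^ 2 : ℝ) : ℂ) * (deriv q b / deriv q 0))
        / DD q w ε b := by
    have hd0 : 1 - kap q w ε * (Nf q w ε b + Rt q w ε b) ≠ 0 := by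
      rw [Ne, N.out_zero hδ hb h0]; exact hD
    rw [div_eq_div_iff hd0 hD]
    linear_combination -(deriv q 0 * (Nf q w ε b + Rt q w ε b)) * h2 +
      deriv q 0 * (1 - kap q w ε * (Nf q w ε b + Rt q w ε b)) * h1
  rw [e, qhat]
  field_simp
  ring

variable {Hf : ℂ → ℂ}

lemma inv_conj {z : ℂ} (hz : 1 < ‖z‖) : ‖1 / (starRingEnd ℂ) z‖ < 1 ∧ 1 / (starRingEnd ℂ) z ≠ 0 := by
  rw [norm_div, norm_one, RCLike.norm_conj, div_lt_one (by linarith)]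
  have : z ≠ 0 := norm_pos_iff.1 (by linarith)
  exact ⟨hz, one_div_ne_zero ((map_ne_zero _).2 this)⟩

lemma inv_conj_inj {x y : ℂ} (h : 1 / (starRingEnd ℂ) x = 1 / (starRingEnd ℂ) y) : x = y := by
  have := congrArg (starRingEnd ℂ) h
  simpa using this

/-- Injectivity away from the unit circle. -/
lemma IsExt.inj_off (E : IsExt q w ε δ Hf) (N : Nice q w ε μ δ) (hδ : δ ≤ 1 / 1000) {x y : ℂ}
    (hx : ‖x‖ ≠ 1) (hy : ‖y‖ ≠ 1) (h : Hf x = Hf y) : x = y := by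
  have mixed : ∀ x y : ℂ, ‖x‖ < 1 → 1 < ‖y‖ → Hf x ≠ Hf y := by
    intro x y hx hy h
    rw [E.inn x hx, E.out y hy] at h
    obtain ⟨hb, hb0⟩ := inv_conj hy
    have hD : DD q w ε (1 / (starRingEnd ℂ) y) ≠ 0 := by
      intro hD
      rw [← N.out_zero hδ hb hb0, ← h, N.one_sub_Nf hδ hx] at hD
      exact one_div_ne_zero (N.Yf_ne hδ (z := x) (by simpa using hx)) hD
    have := N.Mq_out hδ hb hb0 hD
    rw [← h, N.Mq_in hδ hx] at this
    exact N.inj_mixed hδ hb hx hD this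
  rcases lt_or_gt_of_ne hx with hx | hx <;> rcases lt_or_gt_of_ne hy with hy | hy
  · rw [E.inn x hx, E.inn y hy] at h
    by_contra hne
    refine N.inj_in hδ hy hx hne ?_
    rw [← N.Mq_in hδ hx, ← N.Mq_in hδ hy, h]
  · exact absurd h (mixed _ _ hx hy)
  · exact absurd h.symm (mixed _ _ hy hx)
  · rw [E.out x hx, E.out y hy] at h
    obtain ⟨hb, hb0⟩ := inv_conj hx
    obtain ⟨hb', hb0'⟩ := inv_conj hy
    by_contra hne
    have hne' : 1 / (starRingEnd ℂ) x ≠ 1 / (starRingEnd ℂ) y := fun h => hne (inv_conj_inj h)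
    by_cases hD : DD q w ε (1 / (starRingEnd ℂ) y) = 0
    · refine N.DD_unique hδ hb' hb hne' hD ?_
      rw [← N.out_zero hδ hb hb0, h, N.out_zero hδ hb' hb0', hD]
    · have hD' : DD q w ε (1 / (starRingEnd ℂ) x) ≠ 0 := by
        rw [Ne, ← N.out_zero hδ hb hb0, h, N.out_zero hδ hb' hb0']; exact hD
      refine N.inj_out hδ hb' hb hne' hD hD' ?_
      rw [← N.Mq_out hδ hb' hb0' hD, ← N.Mq_out hδ hb hb0 hD', h]

/-- The bilinear form whose vanishing says `q0 + p0 H/(1-kH) = qa + p1 T/(1-k'T)`, with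
`e = qa - q0`. -/
def rel (e p0 p1 k k' H T : ℂ) : ℂ :=
  e * (1 - k * H) * (1 - k' * T) + p1 * T * (1 - k * H) - p0 * H * (1 - k' * T)

lemma rel_inj {e p0 p1 k k' H T T' : ℂ} (h0 : p0 ≠ 0) (h1 : p1 ≠ 0)
    (h : rel e p0 p1 k k' H T = 0) (h' : rel e p0 p1 k k' H T' = 0) : T = T' := by
  by_contra hne
  have hB : p1 * (1 - k * H) - k' * (e * (1 - k * H) - p0 * H) = 0 := by
    have : (T - T') * (p1 * (1 - k * H) - k' * (e * (1 - k * H) - p0 * H)) = 0 := by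
      unfold rel at h h'; linear_combination h - h'
    exact (mul_eq_zero.1 this).resolve_left (sub_ne_zero.2 hne)
  have hC : e * (1 - k * H) - p0 * H = 0 := by
    unfold rel at h; linear_combination h - T * hB
  have hD : 1 - k * H = 0 := by
    have : p1 * (1 - k * H) = 0 := by linear_combination hB + k' * hC
    exact (mul_eq_zero.1 this).resolve_left h1
  have hH : H = 0 := by
    have : p0 * H = 0 := by linear_combination e * hD - hC
    exact (mul_eq_zero.1 this).resolve_left h0
  rw [hH] at hD
  simp at hD

lemma mob_out {a z : ℂ} (hz : z ≠ 0) (h : 1 + (starRingEnd ℂ) a * z ≠ 0)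
    (hz1 : 1 + (starRingEnd ℂ) a * (1 / (starRingEnd ℂ) z) ≠ 0) :
    mob a z = 1 / (starRingEnd ℂ) (mob a (1 / (starRingEnd ℂ) z)) := by
  have hc : (starRingEnd ℂ) z ≠ 0 := (map_ne_zero _).2 hz
  have h2 : (starRingEnd ℂ) (mob a (1 / (starRingEnd ℂ) z)) = (1 + (starRingEnd ℂ) a * z) / (z + a) := by
    have : z + a ≠ 0 := by
      intro h3
      apply hz1
      have : (starRingEnd ℂ) a = - (starRingEnd ℂ) z := by
        rw [← map_neg]; congr 1; linear_combination h3
      rw [this]; field_simp; ring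
    simp only [mob, map_div₀, map_add, map_mul, map_one, Complex.conj_conj]
    have h4 : 1 + a * (1 / z) = (z + a) / z := by field_simp
    rw [h4]
    field_simp
  rw [h2, one_div_div, mob]

/-- The normalised extensions of `q` and of `q ∘ mob a` represent the same map of the sphere. -/
lemma IsExt.rel_eq (E : IsExt q w ε δ Hf) (N : Nice q w ε μ δ) (hδ : δ ≤ 1 / 1000) {a : ℂ}
    (ha : ‖a‖ < 1) {HT : ℂ → ℂ}
    (ET : IsExt (fun z => q (mob a z)) (fun z => w (mob a z)) ε δ HT) {z : ℂ}
    (hz : 1 + (starRingEnd ℂ) a * z ≠ 0) :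
    rel (q a - q 0) (deriv q 0) (deriv (fun z => q (mob a z)) 0) (kap q w ε)
      (kap (fun z => q (mob a z)) (fun z => w (mob a z)) ε) (Hf (mob a z)) (HT z) = 0 := by
  have NT := N.comp ha
  have hin : ∀ z ∈ ball (0 : ℂ) 1,
      rel (q a - q 0) (deriv q 0) (deriv (fun z => q (mob a z)) 0) (kap q w ε)
      (kap (fun z => q (mob a z)) (fun z => w (mob a z)) ε) (Hf (mob a z)) (HT z) = 0 := by
    intro z hz
    have hz' : ‖z‖ < 1 := by simpa using hz
    have hm := mob_mem ha hz'
    rw [E.inn _ hm, ET.inn _ hz', rel, N.one_sub_Nf hδ hm, NT.one_sub_Nf hδ hz']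
    have hY := N.Yf_ne hδ (z := mob a z) (mob_ball ha hz)
    have hYT := NT.Yf_ne hδ hz
    have h0 := N.q00
    have h1 := NT.q00
    rw [Nf, Nf, qhat, qhat, mob_zero]
    generalize deriv (fun z => q (mob a z)) 0 = p1 at *
    field_simp
    ring
  rcases lt_trichotomy ‖z‖ 1 with h | h | h
  · exact hin z (by simpa using h)
  · have hcl : z ∈ closure (ball (0 : ℂ) 1) := by
      rw [closure_ball _ one_ne_zero]; simp [h]
    have hmc : ContinuousOn (mob a) (closedBall (0 : ℂ) 1) := fun y hy =>
      (mob_hasDerivAt ha (by simpa using hy)).continuousAt.continuousWithinAt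
    refine Set.EqOn.of_subset_closure (s := ball (0 : ℂ) 1) (t := closedBall (0 : ℂ) 1)
      (f := fun z => rel (q a - q 0) (deriv q 0) (deriv (fun z => q (mob a z)) 0) (kap q w ε)
      (kap (fun z => q (mob a z)) (fun z => w (mob a z)) ε) (Hf (mob a z)) (HT z)) (g := fun _ => 0)
      hin ?_ continuousOn_const ball_subset_closedBall ?_ (by simp [h])
    · have h1 : ContinuousOn (fun z => Hf (mob a z)) (closedBall (0 : ℂ) 1) :=
        E.cont.comp_continuousOn hmc
      have h2 : ContinuousOn HT (closedBall (0 : ℂ) 1) := ET.cont.continuousOn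
      have h3 : ContinuousOn (fun z => 1 - kap q w ε * Hf (mob a z)) (closedBall (0 : ℂ) 1) :=
        continuousOn_const.sub (continuousOn_const.mul h1)
      have h4 : ContinuousOn (fun z => 1 - kap (fun z => q (mob a z)) (fun z => w (mob a z)) ε * HT z)
          (closedBall (0 : ℂ) 1) := continuousOn_const.sub (continuousOn_const.mul h2)
      unfold rel
      exact (((continuousOn_const.mul h3).mul h4).add ((continuousOn_const.mul h2).mul h3)).sub
        ((continuousOn_const.mul h1).mul h4)
    · rw [closure_ball _ one_ne_zero]
  · obtain ⟨hb, hb0⟩ := inv_conj h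
    have hz0 : z ≠ 0 := norm_pos_iff.1 (by linarith)
    have hbb : 1 / (starRingEnd ℂ) z ∈ ball (0 : ℂ) 1 := by simpa using hb
    have hmo := mob_out hz0 hz (mob_den ha hb.le)
    have hcz : (starRingEnd ℂ) (1 / (starRingEnd ℂ) z) = 1 / z := by simp
    set b := 1 / (starRingEnd ℂ) z with hbd
    set β := mob a b with hβ
    have hm : ‖β‖ < 1 := mob_mem ha hb
    have hβ0 : β ≠ 0 := by
      intro h0
      have h1 := mob_den ha hb.le
      have h2 : b + a = 0 := by
        rw [hβ, mob] at h0
        exact (div_eq_zero_iff.1 h0).resolve_right h1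
      apply hz
      have : a = -b := by linear_combination h2
      rw [this, map_neg, hcz]
      field_simp
      ring
    have hmz : 1 < ‖mob a z‖ := by
      rw [hmo, norm_div, norm_one, RCLike.norm_conj, one_lt_div (norm_pos_iff.2 hβ0)]
      exact hm
    have e1 : 1 / (starRingEnd ℂ) (mob a z) = β := by rw [hmo]; simp
    rw [E.out _ hmz, ET.out _ h, e1, ← hbd]
    obtain ⟨u1, u2⟩ := N.out_hom hδ hm hβ0
    obtain ⟨t1, t2⟩ := NT.out_hom hδ hb hb0
    have hU := N.YDN_ne hδ hm hβ0
    have hT := NT.YDN_ne hδ hb hb0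
    have hD := N.comp_DD ha hbb
    have hs := one_sub_mob ha hb.le
    have hd := (comp_deriv N.qd ha hbb).deriv
    have n1 := mob_den ha hb.le
    have n2 := conj_den_ne ha hb.le
    have h0 := N.q00
    have h1 := NT.q00
    rw [hd, mob'] at t1
    rw [← hβ] at hD hs t1
    rw [hs] at u1
    rw [qhat] at u1 t1
    simp only [mob_zero, ← hβ] at t1
    generalize Nf q w ε β + Rt q w ε β = X at *
    generalize Nf (fun z => q (mob a z)) (fun z => w (mob a z)) ε b +
      Rt (fun z => q (mob a z)) (fun z => w (mob a z)) ε b = XT at *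
    generalize Yf q w ε β * DN q w ε β = U at *
    generalize Yf (fun z => q (mob a z)) (fun z => w (mob a z)) ε b *
      DN (fun z => q (mob a z)) (fun z => w (mob a z)) ε b = V at *
    generalize deriv (fun z => q (mob a z)) 0 = p1 at *
    generalize DD q w ε β = D at *
    have hD' : DD (fun z => q (mob a z)) (fun z => w (mob a z)) ε b =
        D * (1 + a * (starRingEnd ℂ) b) / (1 + (starRingEnd ℂ) a * b) := by
      rw [eq_div_iff n1, hD]
    rw [hD'] at t1 t2
    generalize 1 + a * (starRingEnd ℂ) b = m at *
    generalize 1 + (starRingEnd ℂ) a * b = n at *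
    generalize ((1 - ‖a‖ ^ 2 : ℝ) : ℂ) = A at *
    generalize ((1 - ‖b‖ ^ 2 : ℝ) : ℂ) = B at *
    refine (mul_eq_zero.1 (?_ : rel (q a - q 0) (deriv q 0) p1 (kap q w ε)
      (kap (fun z => q (mob a z)) (fun z => w (mob a z)) ε) X XT * (U * V) = 0)).resolve_right
      (mul_ne_zero hU hT)
    have e2 : rel (q a - q 0) (deriv q 0) p1 (kap q w ε)
      (kap (fun z => q (mob a z)) (fun z => w (mob a z)) ε) X XT * (U * V) =
      (q a - q 0) * ((1 - kap q w ε * X) * U) *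
        ((1 - kap (fun z => q (mob a z)) (fun z => w (mob a z)) ε * XT) * V)
      + p1 * (XT * V) * ((1 - kap q w ε * X) * U)
      - deriv q 0 * (X * U) *
        ((1 - kap (fun z => q (mob a z)) (fun z => w (mob a z)) ε * XT) * V) := by
      rw [rel]; ring
    rw [e2, u1, u2, t1, t2]
    field_simp
    ring

/-- Injectivity: two points with a common image, one of them on the circle, are moved almost to
antipodal positions by a disk automorphism with fixed point `x`, while the transformed map is
still close to the identity. -/
lemma IsExt.inj (E : IsExt q w ε δ Hf) (N : Nice q w ε μ δ) (hδ : δ ≤ 1 / 10000) :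
    Function.Injective Hf := by
  have hδ' : δ ≤ 1 / 1000 := by linarith
  have hδ0 := N.hδ
  have key : ∀ x y : ℂ, ‖x‖ = 1 → y ≠ x → Hf x ≠ Hf y := by
    intro x y hx hne h
    have hxx : (starRingEnd ℂ) x * x = 1 := by
      rw [mul_comm, Complex.mul_conj, Complex.normSq_eq_norm_sq, hx]; simp
    have hne1 : 1 - (starRingEnd ℂ) x * y ≠ 0 := by
      intro h1
      apply hne
      have : x * (1 - (starRingEnd ℂ) x * y) = x - y := by linear_combination -y * hxx
      rw [h1, mul_zero] at this
      linear_combination this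
    have c1 : Continuous fun s : ℝ => 1 - s * (starRingEnd ℂ) x * y := by fun_prop
    have c2 : ContinuousAt (fun s : ℝ => ‖(y - s * x) / (1 - s * (starRingEnd ℂ) x * y) + x‖) 1 := by
      refine ContinuousAt.norm (ContinuousAt.add (ContinuousAt.div ?_ c1.continuousAt ?_)
        continuousAt_const)
      · exact Continuous.continuousAt (by fun_prop)
      · simpa using hne1
    have e0 : (y - x) / (1 - (starRingEnd ℂ) x * y) + x = 0 := by
      rw [div_add' _ _ _ hne1, div_eq_zero_iff]
      left
      linear_combination -y * hxx
    have ev1 : ∀ᶠ s : ℝ in 𝓝 (1 : ℝ), 1 - s * (starRingEnd ℂ) x * y ≠ 0 :=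
      c1.continuousAt.eventually_ne (by simpa using hne1)
    have ev2 : ∀ᶠ s : ℝ in 𝓝 (1 : ℝ), ‖(y - s * x) / (1 - s * (starRingEnd ℂ) x * y) + x‖ < 1 / 2 := by
      refine c2.eventually_lt_const ?_
      simp [e0]
    have ev3 : ∀ᶠ s : ℝ in 𝓝[<] (1 : ℝ), 0 < s ∧ s < 1 := by
      filter_upwards [Ioo_mem_nhdsLT (show (0 : ℝ) < 1 by norm_num)] with s hs using hs
    obtain ⟨s, ⟨⟨hs1, hs2⟩, hs3, hs4⟩⟩ := ((((ev1.and ev2).filter_mono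
      nhdsWithin_le_nhds).and ev3).exists)
    set y' := (y - s * x) / (1 - s * (starRingEnd ℂ) x * y) with hy'
    set a : ℂ := s * x with had
    have hca : (starRingEnd ℂ) a = s * (starRingEnd ℂ) x := by simp [had]
    have ha : ‖a‖ < 1 := by
      rw [had, norm_mul, hx, mul_one, Complex.norm_real, Real.norm_of_nonneg hs3.le]; exact hs4
    obtain ⟨HT, h1, h2, h3, h4⟩ := (N.comp ha).exists_H hδ'
    have ET : IsExt (fun z => q (mob a z)) (fun z => w (mob a z)) ε δ HT := ⟨h1, h2, h3, h4⟩
    have hss : (1 + (s : ℂ)) ≠ 0 := by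
      have : (0 : ℝ) < 1 + s := by linarith
      exact_mod_cast this.ne'
    have hss' : (1 - (s : ℂ)) ≠ 0 := by
      have : (0 : ℝ) < 1 - s := by linarith
      exact_mod_cast this.ne'
    have dx : 1 + (starRingEnd ℂ) a * x ≠ 0 := by
      rw [hca, mul_assoc, hxx, mul_one]; exact hss
    have dy' : 1 + (starRingEnd ℂ) a * y' = (1 - s) * (1 + s) / (1 - s * (starRingEnd ℂ) x * y) := by
      rw [hca, hy']
      field_simp
      linear_combination -(s : ℂ) ^ 2 * hxx
    have dy : 1 + (starRingEnd ℂ) a * y' ≠ 0 := by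
      rw [dy']; exact div_ne_zero (mul_ne_zero hss' hss) hs1
    have mx : mob a x = x := by
      rw [mob, div_eq_iff dx, hca, had]
      linear_combination -(s : ℂ) * x * hxx
    have my : mob a y' = y := by
      rw [mob, div_eq_iff dy, dy', hy', had, div_add' _ _ _ hs1, ← mul_div_assoc]
      congr 1
      linear_combination -(s : ℂ) ^ 2 * y * hxx
    have r1 := E.rel_eq N hδ' ha ET dx
    have r2 := E.rel_eq N hδ' ha ET dy
    rw [mx] at r1
    rw [my, ← h] at r2
    have hT := rel_inj N.q00 (N.comp ha).q00 r1 r2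
    have b1 := ET.near x
    have b2 := ET.near y'
    rw [hx, max_self, mul_one] at b1
    have ny : ‖y'‖ ≤ 3 / 2 := by
      have := norm_sub_le (y' + x) x
      rw [add_sub_cancel_right, hx] at this
      linarith
    have b3 : 140 * δ * max 1 ‖y'‖ ≤ 140 * δ * (3 / 2) := by
      gcongr
      exact max_le (by norm_num) ny
    have b4 : ‖2 * x‖ = 2 := by rw [norm_mul, hx]; simp
    have e4 : 2 * x = (y' + x) - (HT x - x) + (HT y' - y') := by rw [hT]; ring
    have b5 := norm_add_le ((y' + x) - (HT x - x)) (HT y' - y')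
    have b6 := norm_sub_le (y' + x) (HT x - x)
    rw [← e4, b4] at b5
    nlinarith
  intro x y h
  by_contra hne
  by_cases hx : ‖x‖ = 1
  · exact key x y hx (Ne.symm hne) h
  by_cases hy : ‖y‖ = 1
  · exact key y x hy hne h.symm
  exact hne (E.inj_off N hδ' hx hy h)

end

/-! ### Surjectivity by a winding number argument -/

/-- A continuous self-map of the plane that is relatively close to the identity is onto: if `w`
were omitted, `Hf - w` would have a continuous logarithm, whereas it has winding number one along
large circles. -/
lemma surj_of_near {Hf : ℂ → ℂ} (hc : Continuous Hf)
    (hn : ∀ z, ‖Hf z - z‖ ≤ 1 / 2 * max 1 ‖z‖) : Function.Surjective Hf := by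
  intro w
  by_contra hw
  push Not at hw
  have hsc : IsSimplyConnected (Set.univ : Set ℂ) := by
    have : ContractibleSpace (Set.univ : Set ℂ) :=
      (Homeomorph.Set.univ ℂ).contractibleSpace
    unfold IsSimplyConnected
    infer_instance
  obtain ⟨L, hL, hLe⟩ := Complex.exists_continuousOn_eqOn_exp_comp (U := Set.univ) hsc isOpen_univ
    (g := fun z => Hf z - w) (by fun_prop) (by
      rintro ⟨z, -, hz⟩
      exact hw z (sub_eq_zero.1 hz))
  have hL' : Continuous L := by rwa [← continuousOn_univ]
  have hexp : ∀ z, Complex.exp (L z) = Hf z - w := fun z => hLe (Set.mem_univ z)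
  set R : ℝ := 4 * (1 + ‖w‖) with hR
  have hRp : 1 ≤ R := by have := norm_nonneg w; linarith
  have hR0 : (R : ℂ) ≠ 0 := by exact_mod_cast (show R ≠ 0 by linarith)
  set p : ℝ → ℂ := fun t => R * Complex.exp (t * Complex.I) with hp
  have hpc : Continuous p := by fun_prop
  have hpn : ∀ t, ‖p t‖ = R := fun t => by
    simp only [hp, norm_mul, Complex.norm_exp_ofReal_mul_I, mul_one, Complex.norm_real]
    exact Real.norm_of_nonneg (by linarith)
  have hp0 : ∀ t, p t ≠ 0 := fun t => norm_pos_iff.1 (by rw [hpn]; linarith)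
  set e : ℝ → ℂ := fun t => (Hf (p t) - w) / p t with he
  have hec : Continuous e := by
    have h1 : Continuous fun t => Hf (p t) := hc.comp hpc
    exact (h1.sub continuous_const).div hpc hp0
  have hes : ∀ t, e t ∈ Complex.slitPlane := by
    intro t
    have h1 : ‖e t - 1‖ < 1 := by
      have : e t - 1 = ((Hf (p t) - p t) - w) / p t := by
        simp only [he]; field_simp [hp0 t]; ring
      rw [this, norm_div, hpn, div_lt_one (by linarith)]
      have h2 := hn (p t)
      rw [hpn, max_eq_right hRp] at h2
      have h3 := norm_sub_le (Hf (p t) - p t) w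
      have := norm_nonneg w
      linarith
    left
    have h2 := Complex.abs_re_le_norm (e t - 1)
    have h3 := abs_lt.1 (h2.trans_lt h1)
    simp at h3
    linarith [h3.1]
  set φ : ℝ → ℂ := fun t => L (p t) - Complex.log (e t) - t * Complex.I - Complex.log R with hφ
  have hφc : Continuous φ := by
    have h1 : Continuous fun t => L (p t) := hL'.comp hpc
    have h2 : Continuous fun t => Complex.log (e t) := hec.clog hes
    fun_prop
  have hφ1 : ∀ t, Complex.exp (φ t) = 1 := by
    intro t
    have he0 : e t ≠ 0 := Complex.slitPlane_ne_zero (hes t)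
    simp only [hφ]
    rw [Complex.exp_sub, Complex.exp_sub, Complex.exp_sub, hexp, Complex.exp_log he0,
      Complex.exp_log hR0]
    have h1 : Hf (p t) - w = e t * p t := by simp only [he]; field_simp [hp0 t]
    rw [h1]
    have := Complex.exp_ne_zero (t * Complex.I)
    simp only [hp]
    field_simp
  have h_int : ∀ t, ∃ n : ℤ, (φ t).im = 2 * Real.pi * n := by
    intro t
    obtain ⟨n, hn⟩ := Complex.exp_eq_one_iff.1 (hφ1 t)
    refine ⟨n, ?_⟩
    rw [hn]
    simp
    ring
  have hpp : p (2 * Real.pi) = p 0 := by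
    simp only [hp]
    push_cast
    rw [Complex.exp_two_pi_mul_I]; simp
  have hdiff : (φ (2 * Real.pi)).im = (φ 0).im - 2 * Real.pi := by
    have : e (2 * Real.pi) = e 0 := by simp only [he, hpp]
    simp only [hφ, hpp, this]
    simp
    ring
  obtain ⟨n, hn0⟩ := h_int 0
  have hpi := Real.pi_pos
  obtain ⟨t, -, ht⟩ := intermediate_value_Icc' (f := fun t => (φ t).im)
    (show (0 : ℝ) ≤ 2 * Real.pi by positivity)
    ((Complex.continuous_im.comp hφc).continuousOn)
    (show 2 * Real.pi * (n - 1 / 2) ∈ Set.Icc _ _ by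
      simp only [hdiff, hn0]
      constructor <;> nlinarith)
  obtain ⟨m, hm⟩ := h_int t
  simp only at ht
  rw [hm] at ht
  have h1 : (m : ℝ) = n - 1 / 2 := mul_left_cancel₀ (by positivity) ht
  have h2 : (2 * m : ℝ) = 2 * n - 1 := by linarith
  have h3 : 2 * m = 2 * n - 1 := by exact_mod_cast h2
  omega

/-- A continuous injection of the plane relatively close to the identity is a homeomorphism. -/
lemma exists_homeo_of_near {Hf : ℂ → ℂ} (hc : Continuous Hf) (hi : Function.Injective Hf)
    (hn : ∀ z, ‖Hf z - z‖ ≤ 1 / 2 * max 1 ‖z‖) : ∃ e : ℂ ≃ₜ ℂ, ∀ z, e z = Hf z := by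
  have hprop : IsProperMap Hf := by
    rw [isProperMap_iff_tendsto_cocompact]
    refine ⟨hc, ?_⟩
    rw [← Metric.cobounded_eq_cocompact, ← tendsto_norm_atTop_iff_cobounded]
    refine tendsto_atTop_mono (f := fun z : ℂ => ‖z‖ / 2 - 1 / 2) (fun z => ?_) ?_
    · have h1 := hn z
      have h2 : max 1 ‖z‖ ≤ 1 + ‖z‖ := max_le (by have := norm_nonneg z; linarith) (by linarith)
      have h3 := norm_sub_norm_le z (z - Hf z)
      rw [sub_sub_cancel, norm_sub_rev z] at h3
      linarith
    · have h := tendsto_norm_cobounded_atTop (E := ℂ)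
      exact tendsto_atTop_add_const_right _ _ (h.atTop_div_const (by norm_num))
  exact ⟨(Equiv.ofBijective Hf ⟨hi, surj_of_near hc hn⟩).toHomeomorphOfContinuousClosed hc
    hprop.isClosedMap, fun z => rfl⟩

/-- The normalised extension is a homeomorphism of the plane. -/
lemma Nice.exists_homeo {q w : ℂ → ℂ} {ε : ℂ} {μ δ : ℝ} (N : Nice q w ε μ δ) (hδ : δ ≤ 1 / 10000) :
    ∃ e : ℂ ≃ₜ ℂ, (∀ z, ‖z‖ < 1 → e z = Nf q w ε z) ∧
      ∀ z, 1 < ‖z‖ → e z = Nf q w ε (1 / (starRingEnd ℂ) z) + Rt q w ε (1 / (starRingEnd ℂ) z) := by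
  obtain ⟨Hf, h1, h2, h3, h4⟩ := N.exists_H (by linarith)
  have E : IsExt q w ε δ Hf := ⟨h1, h2, h3, h4⟩
  obtain ⟨e, he⟩ := exists_homeo_of_near h1 (E.inj N hδ) fun z => (h4 z).trans (by
    have : (0 : ℝ) < max 1 ‖z‖ := lt_of_lt_of_le one_pos (le_max_left _ _)
    gcongr
    linarith)
  exact ⟨e, fun z hz => by rw [he, h2 z hz], fun z hz => by rw [he, h3 z hz]⟩

/-! ### Möbius transformations of the Riemann sphere -/

/-- An affine bijection of the plane. -/
lemma exists_affine {p : ℂ} (hp : p ≠ 0) (r : ℂ) : ∃ e : ℂ ≃ₜ ℂ, ∀ x, e x = r + p * x :=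
  ⟨(Homeomorph.mulLeft₀ p hp).trans (Homeomorph.addLeft r), fun x => by simp⟩

/-- The inversion `x ↦ 1 / x` of the Riemann sphere. -/
noncomputable def sinv (x : OnePoint ℂ) : OnePoint ℂ :=
  x.elim ((0 : ℂ) : OnePoint ℂ) fun z => if z = 0 then OnePoint.infty else ((z⁻¹ : ℂ) : OnePoint ℂ)

lemma sinv_infty : sinv OnePoint.infty = ((0 : ℂ) : OnePoint ℂ) := rfl

lemma sinv_coe (z : ℂ) :
    sinv (z : OnePoint ℂ) = if z = 0 then OnePoint.infty else ((z⁻¹ : ℂ) : OnePoint ℂ) := rfl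

lemma sinv_sinv (x : OnePoint ℂ) : sinv (sinv x) = x := by
  induction x using OnePoint.rec with
  | infty => simp [sinv_infty, sinv_coe]
  | coe z =>
    by_cases hz : z = 0
    · simp [sinv_coe, hz, sinv_infty]
    · simp [sinv_coe, hz]

lemma continuous_sinv : Continuous sinv := by
  rw [continuous_iff_continuousAt]
  intro x
  have hcb : coclosedCompact ℂ = Bornology.cobounded ℂ := by
    rw [coclosedCompact_eq_cocompact, Metric.cobounded_eq_cocompact]
  induction x using OnePoint.rec with
  | infty =>
    rw [OnePoint.continuousAt_infty', hcb, sinv_infty]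
    have h1 : Tendsto (fun z : ℂ => ((z⁻¹ : ℂ) : OnePoint ℂ)) (Bornology.cobounded ℂ)
        (𝓝 ((0 : ℂ) : OnePoint ℂ)) :=
      (OnePoint.continuous_coe.tendsto (0 : ℂ)).comp tendsto_inv₀_cobounded
    refine h1.congr' ?_
    have h2 : ∀ᶠ z : ℂ in Bornology.cobounded ℂ, 0 < ‖z‖ :=
      tendsto_norm_cobounded_atTop.eventually_gt_atTop 0
    filter_upwards [h2] with z hz
    simp [sinv_coe, norm_pos_iff.1 hz]
  | coe z =>
    rw [OnePoint.continuousAt_coe]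
    by_cases hz : z = 0
    · subst hz
      rw [continuousAt_iff_punctured_nhds]
      have h1 : Tendsto (fun z : ℂ => ((z⁻¹ : ℂ) : OnePoint ℂ)) (𝓝[≠] 0)
          (𝓝 (OnePoint.infty : OnePoint ℂ)) := by
        refine OnePoint.tendsto_coe_infty.comp ?_
        rw [hcb]
        exact tendsto_inv₀_nhdsNE_zero
      have h0 : (sinv ∘ ((↑) : ℂ → OnePoint ℂ)) 0 = OnePoint.infty := by simp [sinv_coe]
      rw [h0]
      refine h1.congr' ?_
      filter_upwards [self_mem_nhdsWithin] with z hz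
      have hz' : z ≠ 0 := hz
      simp [sinv_coe, hz']
    · have h1 : ContinuousAt (fun z : ℂ => ((z⁻¹ : ℂ) : OnePoint ℂ)) z :=
        OnePoint.continuous_coe.continuousAt.comp (continuousAt_inv₀ hz)
      refine h1.congr ?_
      filter_upwards [isOpen_ne.mem_nhds hz] with y hy
      have hy' : y ≠ 0 := hy
      simp [sinv_coe, hy']

/-- The inversion as a homeomorphism. -/
noncomputable def sinvHomeo : OnePoint ℂ ≃ₜ OnePoint ℂ where
  toFun := sinv
  invFun := sinv
  left_inv := sinv_sinv
  right_inv := sinv_sinv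
  continuous_toFun := continuous_sinv
  continuous_invFun := continuous_sinv

lemma congr_coe (e : ℂ ≃ₜ ℂ) (x : ℂ) : e.onePointCongr (x : OnePoint ℂ) = ((e x : ℂ) : OnePoint ℂ) :=
  rfl

lemma congr_infty (e : ℂ ≃ₜ ℂ) : e.onePointCongr OnePoint.infty = OnePoint.infty := rfl

/-- The Möbius transformation `x ↦ r + p x / (1 - k x)` as a homeomorphism of the sphere. -/
lemma exists_moebius (r k : ℂ) {p : ℂ} (hp : p ≠ 0) : ∃ M : OnePoint ℂ ≃ₜ OnePoint ℂ,
    (∀ x : ℂ, 1 - k * x ≠ 0 → M x = ((r + p * x / (1 - k * x) : ℂ) : OnePoint ℂ)) ∧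
    (∀ x : ℂ, 1 - k * x = 0 → M x = OnePoint.infty) ∧
    (k = 0 → M OnePoint.infty = OnePoint.infty) ∧
    (k ≠ 0 → M OnePoint.infty = ((r - p / k : ℂ) : OnePoint ℂ)) := by
  by_cases hk : k = 0
  · obtain ⟨e, he⟩ := exists_affine hp r
    refine ⟨e.onePointCongr, fun x _ => ?_, fun x hx => ?_, fun _ => rfl, fun h => absurd hk h⟩
    · rw [congr_coe, he, hk]; simp
    · simp [hk] at hx
  · obtain ⟨e₁, h₁⟩ := exists_affine (neg_ne_zero.2 hk) 1
    obtain ⟨e₂, h₂⟩ := exists_affine (div_ne_zero hp hk) (r - p / k)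
    have e1 : ∀ x, e₁ x = 1 - k * x := fun x => by rw [h₁]; ring
    refine ⟨(e₁.onePointCongr.trans sinvHomeo).trans e₂.onePointCongr, fun x hx => ?_,
      fun x hx => ?_, fun h => absurd h hk, fun _ => ?_⟩
    · simp only [Homeomorph.trans_apply, congr_coe, e1]
      have : sinvHomeo ((1 - k * x : ℂ) : OnePoint ℂ) = (((1 - k * x)⁻¹ : ℂ) : OnePoint ℂ) :=
        (sinv_coe _).trans (if_neg hx)
      rw [this, congr_coe, h₂]
      congr 1
      field_simp
      ring
    · simp only [Homeomorph.trans_apply, congr_coe, e1, hx]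
      have : sinvHomeo ((0 : ℂ) : OnePoint ℂ) = OnePoint.infty :=
        (sinv_coe _).trans (if_pos rfl)
      rw [this, congr_infty]
    · simp only [Homeomorph.trans_apply, congr_infty]
      have : sinvHomeo OnePoint.infty = ((0 : ℂ) : OnePoint ℂ) := rfl
      rw [this, congr_coe, h₂]
      simp

section
variable {h g : ℂ → ℂ} {d c : ℝ}

/-- The sphere homeomorphism carrying the analytic part: it equals `h` in the unit disk and
`h + Φ` at the reflected point outside. -/
lemma Hyp.exists_sphere (H : Hyp h g d c) (hd : d < 1) {μ δ : ℝ} (hδ : δ ≤ 1 / 10000)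
    (N : Nice (fun z => h z + 0 * g z) (dil h g) 0 μ δ) :
    ∃ P : OnePoint ℂ ≃ₜ OnePoint ℂ,
      (∀ z : ℂ, ‖z‖ < 1 → P z = ((h z : ℂ) : OnePoint ℂ)) ∧
      (∀ z : ℂ, 1 < ‖z‖ →
        (denB h g (1 / (starRingEnd ℂ) z) ≠ 0 → P z =
          ((h (1 / (starRingEnd ℂ) z) + phiB h g (1 / (starRingEnd ℂ) z) : ℂ) : OnePoint ℂ)) ∧
        (denB h g (1 / (starRingEnd ℂ) z) = 0 → P z = OnePoint.infty)) ∧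
      (denB h g 0 ≠ 0 → P OnePoint.infty = ((h 0 + phiB h g 0 : ℂ) : OnePoint ℂ)) ∧
      (denB h g 0 = 0 → P OnePoint.infty = OnePoint.infty) := by
  have hne : ∀ z ∈ ball (0 : ℂ) 1, 1 + 0 * dil h g z ≠ 0 := fun z _ => by simp
  obtain ⟨e, he1, he2⟩ := N.exists_homeo hδ
  obtain ⟨M, hM1, hM2, hM3, hM4⟩ := exists_moebius ((fun z => h z + 0 * g z) 0)
    (kap (fun z => h z + 0 * g z) (dil h g) 0) N.q00
  have hδ' : δ ≤ 1 / 1000 := by linarith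
  have h00 : (0 : ℂ) ∈ ball (0 : ℂ) 1 := by simp
  have hD0 := Nice.DD_zero (q := fun z => h z + 0 * g z) (w := dil h g) (ε := 0)
  rw [H.DD_eq hd hne h00] at hD0
  refine ⟨e.onePointCongr.trans M, fun z hz => ?_, fun z hz => ?_, fun h0 => ?_, fun h0 => ?_⟩
  · rw [Homeomorph.trans_apply, congr_coe, he1 z hz, hM1]
    · have := N.Mq_in hδ' hz
      rw [Mq] at this
      rw [this, zero_mul, add_zero]
    · rw [N.one_sub_Nf hδ' hz]
      exact one_div_ne_zero (N.Yf_ne hδ' (z := z) (by simpa using hz))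
  · obtain ⟨hb, hb0⟩ := inv_conj hz
    have hb' : 1 / (starRingEnd ℂ) z ∈ ball (0 : ℂ) 1 := by simpa using hb
    have hz0 := N.out_zero hδ' hb hb0
    rw [Homeomorph.trans_apply, congr_coe, he2 z hz]
    constructor
    · intro hD
      rw [← H.DD_eq hd hne hb'] at hD
      rw [hM1 _ (fun h => hD (hz0.1 h))]
      have := N.Mq_out hδ' hb hb0 hD
      rw [Mq] at this
      rw [this, H.EE_eq hd hne hb', zero_mul, add_zero]
    · intro hD
      rw [← H.DD_eq hd hne hb'] at hD
      exact hM2 _ (hz0.2 hD)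
  · rw [Homeomorph.trans_apply, congr_infty, hM4 (fun h => h0 (by rw [hD0, h, neg_zero]))]
    have hE := Nice.EE_zero (q := fun z => h z + 0 * g z) (w := dil h g) (ε := 0)
    rw [H.EE_eq hd hne h00] at hE
    rw [← hE, zero_mul, add_zero]
  · rw [Homeomorph.trans_apply, congr_infty, hM3 (by rw [← neg_eq_zero, ← hD0]; exact h0)]

end

/-! ### The nonanalytic factor -/

/-- A Lipschitz function defined on a dense set of the plane, with constant `k < 1`, perturbs the
identity to a homeomorphism `x ↦ x + conj (K x)`. -/
lemma exists_perturb {R : Set (ℂ × ℂ)} {k : ℝ} (hk0 : 0 ≤ k) (hk : k < 1)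
    (hR : ∀ p ∈ R, ∀ p' ∈ R, ‖p.2 - p'.2‖ ≤ k * ‖p.1 - p'.1‖)
    (hdense : Dense {x | ∃ y, (x, y) ∈ R}) :
    ∃ T : ℂ ≃ₜ ℂ, ∀ p ∈ R, T p.1 = p.1 + (starRingEnd ℂ) p.2 := by
  classical
  set S : Set ℂ := {x | ∃ y, (x, y) ∈ R} with hS
  choose! K hK using fun (x : ℂ) (hx : x ∈ S) => hx
  have hLip : LipschitzOnWith ⟨k, hk0⟩ K S := by
    refine LipschitzOnWith.of_dist_le_mul fun x hx y hy => ?_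
    rw [dist_eq_norm, dist_eq_norm]
    exact hR _ (hK x hx) _ (hK y hy)
  obtain ⟨L, hL, hLK⟩ := hLip.extend_finite_dimension
  have hLc := hL.continuous
  have hR' : ∀ p ∈ R, L p.1 = p.2 := by
    intro p hp
    have hS' : p.1 ∈ S := ⟨p.2, hp⟩
    rw [← hLK hS']
    have := hR _ (hK _ hS') _ hp
    simp only [sub_self, norm_zero, mul_zero] at this
    exact sub_eq_zero.1 (norm_le_zero_iff.1 this)
  -- the extension loses the constant, which is recovered by density
  have hk' : ∀ x y, ‖L x - L y‖ ≤ k * ‖x - y‖ := by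
    intro x y
    have hd2 : Dense (S ×ˢ S) := hdense.prod hdense
    have hcl : IsClosed {p : ℂ × ℂ | ‖L p.1 - L p.2‖ ≤ k * ‖p.1 - p.2‖} :=
      isClosed_le (by fun_prop) (by fun_prop)
    have hsub : S ×ˢ S ⊆ {p : ℂ × ℂ | ‖L p.1 - L p.2‖ ≤ k * ‖p.1 - p.2‖} := by
      rintro ⟨a, b⟩ ⟨ha, hb⟩
      change ‖L a - L b‖ ≤ k * ‖a - b‖
      rw [← hLK ha, ← hLK hb]
      exact hR _ (hK a ha) _ (hK b hb)
    have := hcl.closure_subset_iff.2 hsub (hd2 (x, y))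
    exact this
  have happ : ApproximatesLinearOn (fun x => x + (starRingEnd ℂ) (L x))
      ((ContinuousLinearEquiv.refl ℝ ℂ : ℂ ≃L[ℝ] ℂ) : ℂ →L[ℝ] ℂ) Set.univ ⟨k, hk0⟩ := by
    intro x _ y _
    have : x + (starRingEnd ℂ) (L x) - (y + (starRingEnd ℂ) (L y)) -
        ((ContinuousLinearEquiv.refl ℝ ℂ : ℂ ≃L[ℝ] ℂ) : ℂ →L[ℝ] ℂ) (x - y) =
        (starRingEnd ℂ) (L x - L y) := by
      simp only [ContinuousLinearEquiv.coe_refl, ContinuousLinearMap.coe_id', id_eq, map_sub]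
      ring
    rw [this, RCLike.norm_conj]
    exact hk' x y
  refine ⟨happ.toHomeomorph _ (Or.inr ?_), fun p hp => ?_⟩
  · have : ‖((ContinuousLinearEquiv.refl ℝ ℂ).symm : ℂ →L[ℝ] ℂ)‖₊ = 1 := by
      have h1 : ((ContinuousLinearEquiv.refl ℝ ℂ).symm : ℂ →L[ℝ] ℂ) = ContinuousLinearMap.id ℝ ℂ := rfl
      rw [h1]
      exact NNReal.eq ContinuousLinearMap.norm_id
    rw [this, inv_one]
    exact hk
  · change p.1 + (starRingEnd ℂ) (L p.1) = _
    rw [hR' p hp]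

/-- A homeomorphism of the sphere maps the complement of the unit circle to a dense set, whose
finite points are dense in the plane. -/
lemma dense_image (P : OnePoint ℂ ≃ₜ OnePoint ℂ) :
    Dense {x : ℂ | ∃ z : ℂ, ‖z‖ ≠ 1 ∧ P z = (x : OnePoint ℂ)} := by
  have h1 : Dense {z : ℂ | ‖z‖ ≠ 1} := by
    have : {z : ℂ | ‖z‖ ≠ 1} = (sphere (0 : ℂ) 1)ᶜ := by ext; simp
    rw [this, ← interior_eq_empty_iff_dense_compl, interior_sphere _ one_ne_zero]
  have h2 : Dense (((↑) : ℂ → OnePoint ℂ) '' {z : ℂ | ‖z‖ ≠ 1}) :=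
    OnePoint.denseRange_coe.dense_image OnePoint.continuous_coe h1
  have h3 := (P.surjective.denseRange.dense_image P.continuous h2).preimage
    (OnePoint.isOpenMap_coe (X := ℂ))
  refine h3.mono ?_
  rintro x ⟨_, ⟨z, hz, rfl⟩, hzx⟩
  exact ⟨z, hz, hzx⟩

section
variable {h g : ℂ → ℂ} {d c : ℝ}

/-- The extension of `f = h + conj g` is the sphere homeomorphism carrying the analytic part,
followed by a bi-Lipschitz perturbation of the identity. -/
lemma Hyp.exists_F (H : Hyp h g d c) (hd : d < 1)
    (N : ∀ ε : ℂ, ‖ε‖ ≤ 2 / (1 + d) →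
      Nice (fun z => h z + ε * g z) (dil h g) ε (((1 - d) / 2) ^ 2) (1 / 10000)) :
    ∃ F : OnePoint ℂ ≃ₜ OnePoint ℂ,
      (∀ z : ℂ, ‖z‖ < 1 → F z = ((h z + (starRingEnd ℂ) (g z) : ℂ) : OnePoint ℂ)) ∧
      (∀ z : ℂ, 1 < ‖z‖ →
        (denB h g (1 / (starRingEnd ℂ) z) ≠ 0 →
          F z = ((extB h g (1 / (starRingEnd ℂ) z) : ℂ) : OnePoint ℂ)) ∧
        (denB h g (1 / (starRingEnd ℂ) z) = 0 → F z = OnePoint.infty)) ∧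
      (denB h g 0 ≠ 0 → F OnePoint.infty = ((extB h g 0 : ℂ) : OnePoint ℂ)) ∧
      (denB h g 0 = 0 → F OnePoint.infty = OnePoint.infty) := by
  have hd0 := H.d_nonneg
  have N0 := N 0 (by rw [norm_zero]; positivity)
  obtain ⟨P, hP1, hP2, hP3, hP4⟩ := H.exists_sphere hd le_rfl N0
  have hdense : Dense {x | ∃ y, (x, y) ∈ pairs h g} := by
    refine (dense_image P).mono ?_
    rintro x ⟨z, hz, hzx⟩
    rcases lt_or_gt_of_ne hz with hz | hz
    · rw [hP1 z hz, OnePoint.coe_eq_coe] at hzx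
      exact ⟨g z, z, by simpa using hz, Or.inl (by rw [hzx])⟩
    · have hb := (inv_conj hz).1
      by_cases hD : denB h g (1 / (starRingEnd ℂ) z) = 0
      · rw [(hP2 z hz).2 hD] at hzx
        exact absurd hzx (OnePoint.infty_ne_coe _)
      · rw [(hP2 z hz).1 hD, OnePoint.coe_eq_coe] at hzx
        exact ⟨_, _, by simpa using hb, Or.inr ⟨hD, by rw [hzx]⟩⟩
  obtain ⟨T, hT⟩ := exists_perturb (k := (1 + d) / 2) (by linarith) (by linarith)
    (fun p hp p' hp' => H.pairs_lip hd (by norm_num) N hp hp') hdense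
  have hTin : ∀ b ∈ ball (0 : ℂ) 1, T (h b) = h b + (starRingEnd ℂ) (g b) := fun b hb =>
    hT (h b, g b) ⟨b, hb, Or.inl rfl⟩
  have hTout : ∀ b ∈ ball (0 : ℂ) 1, denB h g b ≠ 0 → T (h b + phiB h g b) = extB h g b := by
    intro b hb hD
    have := hT (h b + phiB h g b, g b + dil h g b * phiB h g b) ⟨b, hb, Or.inr ⟨hD, rfl⟩⟩
    simp only [map_add, map_mul] at this
    rw [this, extB]
    ring
  refine ⟨P.trans T.onePointCongr, fun z hz => ?_, fun z hz => ⟨fun hD => ?_, fun hD => ?_⟩,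
    fun hD => ?_, fun hD => ?_⟩
  · rw [Homeomorph.trans_apply, hP1 z hz, congr_coe, hTin z (by simpa using hz)]
  · rw [Homeomorph.trans_apply, (hP2 z hz).1 hD, congr_coe,
      hTout _ (by simpa using (inv_conj hz).1) hD]
  · rw [Homeomorph.trans_apply, (hP2 z hz).2 hD, congr_infty]
  · rw [Homeomorph.trans_apply, hP3 hD, congr_coe, hTout 0 (by simp) hD]
  · rw [Homeomorph.trans_apply, hP4 hD, congr_infty]

end

end Topological

open OnePoint in
/-- Main theorem, case B: small harmonic Schwarzian norm and dilatation bounded by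
`d < 1` yield a quasiconformal extension to the Riemann sphere via the case-(B)
Ahlfors–Weill formula. -/
theorem main_theorem_caseB (d : ℝ) (hd0 : 0 ≤ d) (hd1 : d < 1) :
    ∃ c : ℝ, 0 < c ∧
      ∀ h g : ℂ → ℂ,
        DifferentiableOn ℂ h (ball 0 1) → DifferentiableOn ℂ g (ball 0 1) →
        (∀ z ∈ ball (0 : ℂ) 1, deriv h z ≠ 0) →
        (∀ z ∈ ball (0 : ℂ) 1, ‖dil h g z‖ ≤ d) →
        (∀ z ∈ ball (0 : ℂ) 1, (1 - ‖z‖ ^ 2) ^ 2 * ‖schwH h g z‖ ≤ c) →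
        ∃ F : OnePoint ℂ ≃ₜ OnePoint ℂ,
          (∀ z : ℂ, ‖z‖ < 1 →
            F (z : OnePoint ℂ) = ((h z + (starRingEnd ℂ) (g z) : ℂ) : OnePoint ℂ)) ∧
          (∀ z : ℂ, 1 < ‖z‖ →
            (denB h g (1 / (starRingEnd ℂ) z) ≠ 0 →
              F (z : OnePoint ℂ) = ((extB h g (1 / (starRingEnd ℂ) z) : ℂ) : OnePoint ℂ)) ∧
            (denB h g (1 / (starRingEnd ℂ) z) = 0 → F (z : OnePoint ℂ) = ∞)) ∧
          ((denB h g 0 ≠ 0 → F ∞ = ((extB h g 0 : ℂ) : OnePoint ℂ)) ∧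
            (denB h g 0 = 0 → F ∞ = ∞)) ∧
          ∃ k : ℝ, k < 1 ∧
            ∀ z : ℂ, 1 < ‖z‖ → denB h g (1 / (starRingEnd ℂ) z) ≠ 0 →
              ‖wZb (fun w => extB h g (1 / (starRingEnd ℂ) w)) z‖ ≤
                k * ‖wZ (fun w => extB h g (1 / (starRingEnd ℂ) w)) z‖ := by
  obtain ⟨c₁, hc₁, -, h₁⟩ := Hyp.exists_nice d hd0 hd1 (δ := 1 / 10000) (by norm_num) (by norm_num)
  obtain ⟨c₂, hc₂, h₂⟩ := exists_dilatation d hd0 hd1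
  refine ⟨min c₁ c₂, lt_min hc₁ hc₂, fun h g hh hg hn hw hs => ?_⟩
  have H : Hyp h g d (min c₁ c₂) := ⟨hh, hg, hn, hw, hs⟩
  have H₁ := H.mono (min_le_left _ _)
  obtain ⟨F, hF1, hF2, hF3, hF4⟩ := H₁.exists_F hd1 (h₁ h g H₁)
  refine ⟨F, hF1, hF2, ⟨hF3, hF4⟩, (1 + d) / 2, by linarith, fun z hz hD => ?_⟩
  obtain ⟨A, B, hE, hAB⟩ := h₂ h g (H.mono (min_le_right _ _)) _
    (by simpa using (inv_conj hz).1) hD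
  exact ext_dilatation hz hE hAB
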